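/- arXiv:1411.3415 — 2 statements merged into one kernel-verified Lean document; each statement's English description precedes it below -/
import Mathlib

section
/- (Separation Lemma) Let Ω ⊂ ℂ be a Jordan domain, i.e. there is a homeomorphism φ from the closed unit disk onto the closure of Ω with φ(𝔻) = Ω, so ∂Ω = φ(𝕋). Let A ⊆ clos Ω be a closed connected set such that Γ := A ∩ ∂Ω is a simple arc with distinct endpoints P and Q (Γ is the image of a continuous injective map γ : [0,1] → ℂ with γ(0) = P, γ(1) = Q). Assume that every point x ∈ Γ ∖ {P, Q} has an open neighborhood V with V ∩ (clos Ω ∖ A) = ∅. Then the set (∂A) ∩ Ω (where ∂A denotes the topological boundary of A in ℂ) has a connected component whose closure contains both P and Q. -/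
theorem aux_log_homotopy {A : Type*} [TopologicalSpace A] (H : unitInterval × A → ℂ)
    (hH : Continuous H) (hne : ∀ x, H x ≠ 0) (L0 : A → ℂ) (hL0 : Continuous L0)
    (h0 : ∀ a, Complex.exp (L0 a) = H (0, a)) :
    ∃ L1 : A → ℂ, Continuous L1 ∧ ∀ a, Complex.exp (L1 a) = H (1, a) := by
  have cov := Complex.isCoveringMap_exp
  let H' : C(unitInterval × A, {z : ℂ // z ≠ 0}) := ⟨fun x => ⟨H x, hne x⟩, by fun_prop⟩
  let f : C(A, ℂ) := ⟨L0, hL0⟩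
  have H0 : ∀ a, H' (0, a) = (fun z : ℂ ↦ (⟨_, z.exp_ne_zero⟩ : {z : ℂ // z ≠ 0})) (f a) := by
    intro a
    exact Subtype.ext (h0 a).symm
  refine ⟨fun a => cov.liftHomotopy H' f H0 (1, a), by fun_prop, fun a => ?_⟩
  have := congrFun (cov.liftHomotopy_lifts H' f H0) (1, a)
  exact congrArg Subtype.val this

theorem aux_const {A : Type*} [TopologicalSpace A] [PreconnectedSpace A] (L : A → ℂ)
    (hL : Continuous L) (h : ∀ a b, Complex.exp (L a) = Complex.exp (L b)) (a b : A) :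
    L a = L b :=
  Complex.isCoveringMap_exp.const_of_comp hL (fun a b => Subtype.ext (h a b)) a b

theorem aux_log_disc (f : Metric.closedBall (0 : ℂ) 1 → ℂ) (hf : Continuous f)
    (hne : ∀ z, f z ≠ 0) :
    ∃ L : Metric.closedBall (0 : ℂ) 1 → ℂ, Continuous L ∧ ∀ z, Complex.exp (L z) = f z := by
  let o : Metric.closedBall (0 : ℂ) 1 := ⟨0, by simp⟩
  let S : unitInterval × Metric.closedBall (0 : ℂ) 1 → Metric.closedBall (0 : ℂ) 1 := fun x =>
    ⟨(x.1 : ℝ) * (x.2 : ℂ), by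
      have h1 := x.2.2
      have h2 := x.1.2
      simp only [Metric.mem_closedBall, dist_zero_right] at h1 ⊢
      rw [norm_mul, Complex.norm_real, Real.norm_eq_abs, abs_of_nonneg h2.1]
      exact mul_le_one₀ h2.2 (norm_nonneg _) h1⟩
  have hS : Continuous S := by
    refine Continuous.subtype_mk ?_ _
    fun_prop
  obtain ⟨L, hL, h⟩ := aux_log_homotopy (fun x => f (S x)) (hf.comp hS) (fun x => hne _)
    (fun _ => Complex.log (f o)) continuous_const (fun a => by
      rw [Complex.exp_log (hne o)]
      congr 1
      apply Subtype.ext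
      simp [o, S])
  refine ⟨L, hL, fun z => ?_⟩
  rw [h]
  congr 1
  apply Subtype.ext
  simp [S]

theorem aux_inv_dom (g : ℂ → ℂ) (hg : ContinuousOn g (Metric.closedBall 0 1))
    (hi : Set.InjOn g (Metric.closedBall 0 1)) :
    g 0 ∈ interior (g '' Metric.closedBall 0 1) := by
  by_contra hcon
  have hss : Metric.sphere (0 : ℂ) 1 ⊆ Metric.closedBall 0 1 := Metric.sphere_subset_closedBall
  have hcl : IsClosed (g '' Metric.sphere 0 1) :=
    ((isCompact_sphere _ _).image_of_continuousOn (hg.mono hss)).isClosed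
  have h0 : g 0 ∈ (g '' Metric.sphere 0 1)ᶜ := by
    rintro ⟨ζ, hζ, h⟩
    have := hi (hss hζ) (by simp) h
    subst this
    simp at hζ
  obtain ⟨ε, hε, hball⟩ := Metric.isOpen_iff.1 hcl.isOpen_compl _ h0
  have hc : g 0 ∈ closure (g '' Metric.closedBall 0 1)ᶜ := by
    rw [closure_compl]; exact hcon
  obtain ⟨b, hb, hbd⟩ := Metric.mem_closure_iff.1 hc ε hε
  have hgD : Continuous (fun z : Metric.closedBall (0 : ℂ) 1 => g z) :=
    continuousOn_iff_continuous_domRestrict.1 hg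
  obtain ⟨L, hL, hLe⟩ := aux_log_disc (fun z => g z - b) (hgD.sub continuous_const) (fun z h => by
    apply hb
    exact ⟨z, z.2, sub_eq_zero.1 h⟩)
  have hgS : Continuous (fun z : Metric.sphere (0 : ℂ) 1 => g z) :=
    continuousOn_iff_continuous_domRestrict.1 (hg.mono hss)
  obtain ⟨L1, hL1, hL1e⟩ := aux_log_homotopy (A := Metric.sphere (0 : ℂ) 1)
    (fun x => g x.2 - (b + (x.1 : ℝ) * (g 0 - b)))
    (by
      have : Continuous (fun x : unitInterval × Metric.sphere (0 : ℂ) 1 => g x.2) :=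
        hgS.comp continuous_snd
      exact this.sub (by fun_prop))
    (fun x h => by
      have hx : g x.2 ∈ Metric.ball (g 0) ε := by
        rw [sub_eq_zero.1 h]
        have := (convex_ball (g 0) ε).add_smul_sub_mem (x := b) (y := g 0)
          (by rwa [Metric.mem_ball, dist_comm]) (Metric.mem_ball_self hε) x.1.2
        simpa using this
      exact hball hx ⟨x.2, x.2.2, rfl⟩)
    (fun z => L ⟨z, hss z.2⟩) (by fun_prop) (fun a => by simp [hLe])
  have hmem : ∀ (s : ℝ) (z : Metric.sphere (0 : ℂ) 1), |s| ≤ 1 →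
      (s : ℂ) * (z : ℂ) ∈ Metric.closedBall (0 : ℂ) 1 := by
    intro s z hs
    have := z.2
    simp only [Metric.mem_closedBall, mem_sphere_iff_norm, sub_zero, dist_zero_right] at this ⊢
    rw [norm_mul, this, Complex.norm_real, mul_one]
    exact hs
  have hA1 : ∀ t : unitInterval, |1 / (1 + (t : ℝ))| ≤ 1 := by
    intro t
    have h1 := t.2.1
    rw [abs_of_nonneg (by positivity), div_le_one (by positivity)]
    linarith
  have hA2 : ∀ t : unitInterval, |-(t : ℝ) / (1 + (t : ℝ))| ≤ 1 := by
    intro t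
    have h1 := t.2.1
    rw [neg_div, abs_neg, abs_of_nonneg (by positivity), div_le_one (by positivity)]
    linarith
  have hden : ∀ x : unitInterval × Metric.sphere (0 : ℂ) 1, 1 + (x.1 : ℝ) ≠ 0 := by
    intro x
    have := x.1.2.1
    positivity
  obtain ⟨L2, hL2, hL2e⟩ := aux_log_homotopy (A := Metric.sphere (0 : ℂ) 1)
    (fun x => g (((1 / (1 + (x.1 : ℝ)) : ℝ) : ℂ) * (x.2 : ℂ))
      - g (((-(x.1 : ℝ) / (1 + (x.1 : ℝ)) : ℝ) : ℂ) * (x.2 : ℂ)))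
    (by
      have c1 : Continuous (fun x : unitInterval × Metric.sphere (0 : ℂ) 1 =>
          (((1 / (1 + (x.1 : ℝ)) : ℝ) : ℂ) * (x.2 : ℂ))) := by
        refine Continuous.mul (Complex.continuous_ofReal.comp ?_) (by fun_prop)
        exact Continuous.div (by fun_prop) (by fun_prop) hden
      have c2 : Continuous (fun x : unitInterval × Metric.sphere (0 : ℂ) 1 =>
          (((-(x.1 : ℝ) / (1 + (x.1 : ℝ)) : ℝ) : ℂ) * (x.2 : ℂ))) := by
        refine Continuous.mul (Complex.continuous_ofReal.comp ?_) (by fun_prop)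
        exact Continuous.div (by fun_prop) (by fun_prop) hden
      exact (hg.comp_continuous c1 (fun x => hmem _ _ (hA1 _))).sub
        (hg.comp_continuous c2 (fun x => hmem _ _ (hA2 _))))
    (fun x h => by
      have h2 := hi (hmem _ _ (hA1 _)) (hmem _ _ (hA2 _)) (sub_eq_zero.1 h)
      have hz : (x.2 : ℂ) ≠ 0 := by
        intro h; have := x.2.2; rw [h] at this; simp at this
      have h3 := mul_right_cancel₀ hz h2
      have h4 : 1 / (1 + (x.1 : ℝ)) = -(x.1 : ℝ) / (1 + (x.1 : ℝ)) := by exact_mod_cast h3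
      rw [div_left_inj' (hden x)] at h4
      have := x.1.2.1
      linarith)
    L1 hL1 (fun a => by simp [hL1e])
  have hodd : ∀ z : Metric.sphere (0 : ℂ) 1, Complex.exp (L2 (-z) - L2 z) = -1 := by
    intro z
    rw [Complex.exp_sub, div_eq_iff (Complex.exp_ne_zero _), hL2e, hL2e]
    have e1 : ((((1 / (1 + ((1 : unitInterval) : ℝ)) : ℝ)) : ℂ) * ((-z : Metric.sphere (0 : ℂ) 1) : ℂ))
       = ((((-((1 : unitInterval) : ℝ) / (1 + ((1 : unitInterval) : ℝ)) : ℝ)) : ℂ) * (z : ℂ)) := by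
      push_cast
      simp
      ring
    have e2 : ((((-((1 : unitInterval) : ℝ) / (1 + ((1 : unitInterval) : ℝ)) : ℝ)) : ℂ) * ((-z : Metric.sphere (0 : ℂ) 1) : ℂ))
       = ((((1 / (1 + ((1 : unitInterval) : ℝ)) : ℝ)) : ℂ) * (z : ℂ)) := by
      push_cast
      simp
      ring
    simp only [e1, e2]
    ring
  have : PreconnectedSpace (Metric.sphere (0 : ℂ) 1) :=
    isPreconnected_iff_preconnectedSpace.1 (isPreconnected_sphere (by simp) 0 1)
  let z1 : Metric.sphere (0 : ℂ) 1 := ⟨1, by simp⟩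
  have hk := aux_const (fun z : Metric.sphere (0 : ℂ) 1 => L2 (-z) - L2 z) (by fun_prop)
    (fun a b => by simp only [hodd]) z1 (-z1)
  simp only [neg_neg] at hk
  have hz : L2 (-z1) - L2 z1 = 0 := by linear_combination hk / 2
  have := hodd z1
  rw [hz, Complex.exp_zero] at this
  norm_num at this

theorem aux_unicoherent (X Y : Set ℂ) (hX : IsClosed X) (hY : IsClosed Y)
    (hXc : IsPreconnected X) (hYc : IsPreconnected Y)
    (hU : X ∪ Y = Metric.closedBall (0 : ℂ) 1) : IsPreconnected (X ∩ Y) := by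
  rw [isPreconnected_closed_iff]
  intro u v hu hv hsub ⟨h, hhXY, hhu⟩ ⟨k, hkXY, hkv⟩
  by_contra hemp
  rw [Set.not_nonempty_iff_eq_empty] at hemp
  obtain ⟨w, hw0, hw1, -⟩ := exists_continuous_zero_one_of_isClosed
    ((hX.inter hY).inter hu) ((hX.inter hY).inter hv) (by
      rw [Set.disjoint_iff]
      intro x hx
      rw [← hemp]
      exact ⟨hx.1.1, hx.1.2, hx.2.2⟩)
  classical
  let f : ℂ → ℂ := fun z => if z ∈ X then Complex.exp (Real.pi * w z * Complex.I)
    else Complex.exp (-(Real.pi * w z * Complex.I))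
  have fX : ∀ z ∈ X, f z = Complex.exp (Real.pi * w z * Complex.I) := fun z hz => if_pos hz
  have fY : ∀ z ∈ Y, f z = Complex.exp (-(Real.pi * w z * Complex.I)) := by
    intro z hz
    by_cases hx : z ∈ X
    · rw [fX z hx]
      rcases hsub ⟨hx, hz⟩ with h | h
      · simp [hw0 ⟨⟨hx, hz⟩, h⟩]
      · simp [hw1 ⟨⟨hx, hz⟩, h⟩, Complex.exp_neg]
    · exact if_neg hx
  have wc : Continuous w := w.continuous
  have hfX : ContinuousOn f X := by
    refine ContinuousOn.congr (f := fun z => Complex.exp (Real.pi * w z * Complex.I)) ?_ fX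
    fun_prop
  have hfY : ContinuousOn f Y := by
    refine ContinuousOn.congr (f := fun z => Complex.exp (-(Real.pi * w z * Complex.I))) ?_ fY
    fun_prop
  have hf : ContinuousOn f (Metric.closedBall (0 : ℂ) 1) := by
    rw [← hU]
    exact hfX.union_of_isClosed hfY hX hY
  obtain ⟨L, hL, hLe⟩ := aux_log_disc (fun z => f z)
    (continuousOn_iff_continuous_domRestrict.1 hf) (fun z => by
      simp only [f]; split_ifs <;> exact Complex.exp_ne_zero _)
  have sX : X ⊆ Metric.closedBall (0 : ℂ) 1 := hU ▸ Set.subset_union_left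
  have sY : Y ⊆ Metric.closedBall (0 : ℂ) 1 := hU ▸ Set.subset_union_right
  have : PreconnectedSpace X := isPreconnected_iff_preconnectedSpace.1 hXc
  have : PreconnectedSpace Y := isPreconnected_iff_preconnectedSpace.1 hYc
  have e1 := aux_const (fun z : X => L ⟨z, sX z.2⟩ - Real.pi * w z * Complex.I) (by fun_prop)
    (fun a b => by
      simp only [Complex.exp_sub, hLe, fX _ a.2, fX _ b.2]
      rw [div_self (Complex.exp_ne_zero _), div_self (Complex.exp_ne_zero _)])
    ⟨h, hhXY.1⟩ ⟨k, hkXY.1⟩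
  have e2 := aux_const (fun z : Y => L ⟨z, sY z.2⟩ - (-(Real.pi * w z * Complex.I))) (by fun_prop)
    (fun a b => by
      simp only [Complex.exp_sub, hLe, fY _ a.2, fY _ b.2]
      rw [div_self (Complex.exp_ne_zero _), div_self (Complex.exp_ne_zero _)])
    ⟨h, hhXY.2⟩ ⟨k, hkXY.2⟩
  have w0 : w h = 0 := hw0 ⟨hhXY, hhu⟩
  have w1 : w k = 1 := hw1 ⟨hkXY, hkv⟩
  simp only [w0, w1] at e1 e2
  have : (Real.pi : ℂ) * Complex.I = 0 := by
    push_cast at e1 e2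
    linear_combination (e1 - e2) / 2
  simp [Real.pi_ne_zero] at this


theorem aux_two {K1 K2 : Set ℂ} {p q : ℂ} (h1 : IsClosed K1) (h2 : IsClosed K2)
    (hc : IsPreconnected (K1 ∪ K2)) (hint : K1 ∩ K2 = {p, q}) :
    IsPreconnected K1 ∨ IsPreconnected K2 := by
  have key : ∀ K K' : Set ℂ, IsClosed K → IsClosed K' → IsPreconnected (K ∪ K') →
      K ∩ K' = {p, q} → ¬ IsPreconnected K →
      ∃ a b : Set ℂ, IsClosed a ∧ IsClosed b ∧ K = a ∪ b ∧ a ∩ b = ∅ ∧ p ∈ a ∧ q ∈ b := by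
    intro K K' hK hK' hc hint hn
    rw [isPreconnected_closed_iff] at hn
    push Not at hn
    obtain ⟨u, v, hu, hv, hs, hn1, hn2, he⟩ := hn
    have hp : p ∈ K ∩ K' := by rw [hint]; simp
    have hq : q ∈ K ∩ K' := by rw [hint]; simp
    have one : ∀ u v : Set ℂ, IsClosed u → IsClosed v → K ⊆ u ∪ v →
      (K ∩ v).Nonempty → K ∩ (u ∩ v) = ∅ → p ∈ u → q ∈ u → False := by
      intro u v hu hv hs hn he hpu hqu
      rw [isPreconnected_closed_iff] at hc
      obtain ⟨x, hx, hx1, hx2⟩ := hc ((K ∩ u) ∪ K') (K ∩ v) ((hK.inter hu).union hK') (hK.inter hv)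
        (by
          rintro x (hx | hx)
          · rcases hs hx with h | h
            · exact Or.inl (Or.inl ⟨hx, h⟩)
            · exact Or.inr ⟨hx, h⟩
          · exact Or.inl (Or.inr hx))
        ⟨p, Or.inl hp.1, Or.inr hp.2⟩
        (by obtain ⟨x, hx⟩ := hn; exact ⟨x, Or.inl hx.1, hx⟩)
      have : x ∈ u := by
        rcases hx1 with h | h
        · exact h.2
        · have : x ∈ K ∩ K' := ⟨hx2.1, h⟩
          rw [hint] at this
          rcases this with rfl | rfl <;> assumption
      have : x ∈ K ∩ (u ∩ v) := ⟨hx2.1, this, hx2.2⟩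
      rw [he] at this
      exact this
    have eu : K = (K ∩ u) ∪ (K ∩ v) := by
      rw [← Set.inter_union_distrib_left]; exact (Set.inter_eq_left.2 hs).symm
    have ei : (K ∩ u) ∩ (K ∩ v) = ∅ := by
      rw [← Set.inter_inter_distrib_left]; exact he
    rcases hs hp.1 with pu | pv <;> rcases hs hq.1 with qu | qv
    · exact (one u v hu hv hs hn2 he pu qu).elim
    · exact ⟨K ∩ u, K ∩ v, hK.inter hu, hK.inter hv, eu, ei, ⟨hp.1, pu⟩, ⟨hq.1, qv⟩⟩
    · refine ⟨K ∩ v, K ∩ u, hK.inter hv, hK.inter hu, ?_, ?_, ⟨hp.1, pv⟩, ⟨hq.1, qu⟩⟩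
      · rw [Set.union_comm]; exact eu
      · rw [Set.inter_comm]; exact ei
    · exact (one v u hv hu (by rwa [Set.union_comm]) hn1 (by rwa [Set.inter_comm v u]) pv qv).elim
  by_contra hn
  push Not at hn
  obtain ⟨a, b, ha, hb, e1, i1, pa, qb⟩ := key K1 K2 h1 h2 hc hint hn.1
  obtain ⟨a', b', ha', hb', e2, i2, pa', qb'⟩ := key K2 K1 h2 h1 (by rwa [Set.union_comm])
    (by rwa [Set.inter_comm]) hn.2
  rw [isPreconnected_closed_iff] at hc
  obtain ⟨x, hx, hx1, hx2⟩ := hc (a ∪ a') (b ∪ b') (ha.union ha') (hb.union hb')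
    (by rw [e1, e2]; intro x hx; simp only [Set.mem_union] at hx ⊢; tauto)
    ⟨p, by rw [e1]; exact Or.inl (Or.inl pa), Or.inl pa⟩
    ⟨q, by rw [e1]; exact Or.inl (Or.inr qb), Or.inl qb⟩
  have d1 : ∀ x, x ∈ a → x ∈ b → False := fun x h h' => by
    have : x ∈ a ∩ b := ⟨h, h'⟩
    rw [i1] at this; exact this
  have d2 : ∀ x, x ∈ a' → x ∈ b' → False := fun x h h' => by
    have : x ∈ a' ∩ b' := ⟨h, h'⟩
    rw [i2] at this; exact this
  have d3 : ∀ x, x ∈ K1 → x ∈ K2 → x = p ∨ x = q := fun x h h' => by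
    have : x ∈ K1 ∩ K2 := ⟨h, h'⟩
    rw [hint] at this; exact this
  rcases hx1 with h | h <;> rcases hx2 with h' | h'
  · exact d1 x h h'
  · rcases d3 x (e1 ▸ Or.inl h) (e2 ▸ Or.inr h') with rfl | rfl
    · exact d2 _ pa' h'
    · exact d1 _ h qb
  · rcases d3 x (e1 ▸ Or.inr h') (e2 ▸ Or.inl h) with rfl | rfl
    · exact d1 _ pa h'
    · exact d2 _ h qb'
  · exact d2 x h h'

theorem aux_chain (c : Set (Set ℂ)) (hne : c.Nonempty) (hch : IsChain (· ⊆ ·) c)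
    (hc : ∀ K ∈ c, IsCompact K ∧ IsPreconnected K) : IsPreconnected (⋂₀ c) := by
  rw [isPreconnected_closed_iff]
  intro u v hu hv hsub ⟨h, hh, hhu⟩ ⟨k, hk, hkv⟩
  by_contra hemp
  rw [Set.not_nonempty_iff_eq_empty] at hemp
  obtain ⟨K0, hK0⟩ := hne
  have hIcl : IsClosed (⋂₀ c) := isClosed_sInter fun K hK => (hc K hK).1.isClosed
  obtain ⟨U, V, hU, hV, hUs, hVs, hd⟩ := normal_separation (hIcl.inter hu) (hIcl.inter hv) (by
    rw [Set.disjoint_iff]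
    intro x hx
    rw [← hemp]
    exact ⟨hx.1.1, hx.1.2, hx.2.2⟩)
  have : Nonempty c := ⟨⟨K0, hK0⟩⟩
  have hsubU : (⋂ i : c, (i : Set ℂ)) ⊆ U ∪ V := by
    rw [← Set.sInter_eq_iInter]
    intro x hx
    rcases hsub hx with h | h
    · exact Or.inl (hUs ⟨hx, h⟩)
    · exact Or.inr (hVs ⟨hx, h⟩)
  obtain ⟨⟨K, hK⟩, hKs⟩ := exists_subset_nhds_of_isCompact' (V := fun i : c => (i : Set ℂ))
    (by
      intro a b
      rcases hch.total a.2 b.2 with h | h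
      · exact ⟨a, subset_rfl, h⟩
      · exact ⟨b, h, subset_rfl⟩)
    (fun i => (hc i i.2).1) (fun i => (hc i i.2).1.isClosed)
    (fun x hx => (hU.union hV).mem_nhds (hsubU hx))
  obtain ⟨x, -, hx⟩ := (hc K hK).2 U V hU hV hKs ⟨h, hh K hK, hUs ⟨hh, hhu⟩⟩ ⟨k, hk K hK, hVs ⟨hk, hkv⟩⟩
  exact Set.disjoint_iff.1 hd hx

theorem aux_irred (F : Set ℂ) (hF : IsCompact F) (hFc : IsPreconnected F) (p q : ℂ) (hpq : p ≠ q)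
    (hp : p ∈ F) (hq : q ∈ F) :
    ∃ C : Set ℂ, C ⊆ F \ {p, q} ∧ IsPreconnected C ∧ p ∈ closure C ∧ q ∈ closure C := by
  obtain ⟨K, hK⟩ := zorn_superset {K : Set ℂ | K ⊆ F ∧ IsClosed K ∧ IsPreconnected K ∧ p ∈ K ∧ q ∈ K}
    (by
      intro c hcs hch
      rcases c.eq_empty_or_nonempty with rfl | hne
      · exact ⟨F, ⟨subset_rfl, hF.isClosed, hFc, hp, hq⟩, by simp⟩
      · refine ⟨⋂₀ c, ⟨?_, ?_, ?_, ?_, ?_⟩, fun s hs => Set.sInter_subset_of_mem hs⟩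
        · obtain ⟨K, hK⟩ := hne
          exact (Set.sInter_subset_of_mem hK).trans (hcs hK).1
        · exact isClosed_sInter fun K hK => (hcs hK).2.1
        · exact aux_chain c hne hch fun K hK =>
            ⟨hF.of_isClosed_subset (hcs hK).2.1 (hcs hK).1, (hcs hK).2.2.1⟩
        · exact fun K hK => (hcs hK).2.2.2.1
        · exact fun K hK => (hcs hK).2.2.2.2)
  obtain ⟨⟨hKF, hKcl, hKc, hpK, hqK⟩, hmin⟩ := hK
  have hpqo : IsOpen ({p, q} : Set ℂ)ᶜ := (Set.toFinite {p, q}).isClosed.isOpen_compl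
  have hcl : ∀ r s : ℂ, r ≠ s → r ∈ K → s ∈ K → r ∈ closure (K \ {r, s}) := by
    intro r s hrs hr hs
    by_contra hcon
    have h := isPreconnected_closed_iff.1 hKc {r} (closure (K \ {r, s}) ∪ {s}) isClosed_singleton
      (isClosed_closure.union isClosed_singleton) (by
        intro x hx
        by_cases h1 : x = r
        · exact Or.inl h1
        by_cases h2 : x = s
        · exact Or.inr (Or.inr h2)
        · exact Or.inr (Or.inl (subset_closure ⟨hx, by simp [h1, h2]⟩)))
      ⟨r, hr, rfl⟩ ⟨s, hs, Or.inr rfl⟩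
    obtain ⟨x, -, hx1, hx2⟩ := h
    rw [Set.mem_singleton_iff] at hx1
    subst hx1
    rcases hx2 with h | h
    · exact hcon h
    · exact hrs h
  refine ⟨K \ {p, q}, fun x hx => ⟨hKF hx.1, hx.2⟩, ?_, hcl p q hpq hpK hqK, ?_⟩
  · intro U V hU hV hsub ⟨x, hxC, hxU⟩ ⟨y, hyC, hyV⟩
    by_contra hemp
    rw [Set.not_nonempty_iff_eq_empty] at hemp
    have hd : ∀ z, z ∈ K → z ∉ ({p, q} : Set ℂ) → z ∈ U → z ∈ V → False := by
      intro z h1 h2 h3 h4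
      have : z ∈ K \ {p, q} ∩ (U ∩ V) := ⟨⟨h1, h2⟩, h3, h4⟩
      rw [hemp] at this
      exact this
    have c1 : IsClosed (K ∩ (V ∩ {p, q}ᶜ)ᶜ) := hKcl.inter (hV.inter hpqo).isClosed_compl
    have c2 : IsClosed (K ∩ (U ∩ {p, q}ᶜ)ᶜ) := hKcl.inter (hU.inter hpqo).isClosed_compl
    have pp : p ∈ ({p, q} : Set ℂ) := by simp
    have qq : q ∈ ({p, q} : Set ℂ) := by simp
    rcases aux_two (p := p) (q := q) c1 c2 (by
        convert hKc using 1
        ext z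
        have := hd z
        simp only [Set.mem_union, Set.mem_inter_iff, Set.mem_compl_iff] at this ⊢
        generalize (z ∈ ({p, q} : Set ℂ)) = m at *
        tauto)
      (by
        ext z
        have := hd z
        have h2 : z ∈ K → z ∉ ({p, q} : Set ℂ) → z ∈ U ∪ V := fun h h' => hsub ⟨h, h'⟩
        have h3 : z ∈ ({p, q} : Set ℂ) → z ∈ K := by
          rintro (rfl | rfl) <;> assumption
        simp only [Set.mem_union, Set.mem_inter_iff, Set.mem_compl_iff] at this h2 ⊢
        generalize (z ∈ ({p, q} : Set ℂ)) = m at *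
        clear hmin
        tauto) with h | h
    · have := hmin ⟨Set.inter_subset_left.trans hKF, c1, h, ⟨hpK, fun h => h.2 pp⟩,
        ⟨hqK, fun h => h.2 qq⟩⟩ Set.inter_subset_left hyC.1
      exact this.2 ⟨hyV, hyC.2⟩
    · have := hmin ⟨Set.inter_subset_left.trans hKF, c2, h, ⟨hpK, fun h => h.2 pp⟩,
        ⟨hqK, fun h => h.2 qq⟩⟩ Set.inter_subset_left hxC.1
      exact this.2 ⟨hxU, hxC.2⟩
  · have := hcl q p hpq.symm hqK hpK
    rwa [Set.pair_comm] at this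


theorem aux_inv {X Y : Type*} [TopologicalSpace X] [TopologicalSpace Y] [T2Space Y] [Nonempty X]
    (f : X → Y) (K : Set X) (hK : IsCompact K) (hf : ContinuousOn f K) (hi : Set.InjOn f K) :
    ContinuousOn (Function.invFunOn f K) (f '' K) := by
  rw [continuousOn_iff_isClosed]
  intro t ht
  refine ⟨f '' (K ∩ t), ((hK.inter_right ht).image_of_continuousOn
    (hf.mono Set.inter_subset_left)).isClosed, ?_⟩
  ext y
  constructor
  · rintro ⟨h1, x, hx, rfl⟩
    refine ⟨⟨x, ⟨hx, ?_⟩, rfl⟩, x, hx, rfl⟩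
    rwa [Set.mem_preimage, hi.leftInvOn_invFunOn hx] at h1
  · rintro ⟨⟨x, ⟨hx, hxt⟩, rfl⟩, -⟩
    refine ⟨?_, x, hx, rfl⟩
    rwa [Set.mem_preimage, hi.leftInvOn_invFunOn hx]

theorem aux_circle (ψ : ℝ → ℂ) (hc : ContinuousOn ψ (Set.Icc 0 1)) (hi : Set.InjOn ψ (Set.Icc 0 1))
    (hs : ∀ t ∈ Set.Icc (0 : ℝ) 1, ψ t ∈ Metric.sphere (0 : ℂ) 1) :
    ∃ B : Set ℂ, B ⊆ Metric.sphere 0 1 ∧ B.Nonempty ∧ IsPreconnected B ∧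
      (∀ t ∈ Set.Icc (0 : ℝ) 1, ψ t ∉ B) ∧ ψ 0 ∈ closure B ∧ ψ 1 ∈ closure B := by
  have hex : ∃ c ∈ Metric.sphere (0 : ℂ) 1, ∀ t ∈ Set.Icc (0 : ℝ) 1, ψ t ≠ c := by
    by_contra hcon
    push Not at hcon
    have hg := aux_inv ψ (Set.Icc 0 1) isCompact_Icc hc hi
    have him : ψ '' Set.Icc 0 1 = Metric.sphere 0 1 := by
      ext z
      constructor
      · rintro ⟨t, ht, rfl⟩; exact hs t ht
      · exact fun hz => hcon z hz
    rw [him] at hg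
    have : PreconnectedSpace (Metric.sphere (0 : ℂ) 1) :=
      isPreconnected_iff_preconnectedSpace.1 (isPreconnected_sphere (by simp) 0 1)
    have hgc : Continuous (fun z : Metric.sphere (0 : ℂ) 1 => Function.invFunOn ψ (Set.Icc 0 1) z) :=
      continuousOn_iff_continuous_domRestrict.1 hg
    set g := fun z : Metric.sphere (0 : ℂ) 1 => Function.invFunOn ψ (Set.Icc 0 1) z with hgdef
    have hψg : ∀ z, ψ (g z) = z := fun z => Function.invFunOn_eq (hcon z z.2)
    have hdc : Continuous (fun z => g z - g (-z)) := by fun_prop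
    let z1 : Metric.sphere (0 : ℂ) 1 := ⟨1, by simp⟩
    have : (0 : ℝ) ∈ Set.range (fun z => g z - g (-z)) := by
      rcases le_total (g z1) (g (-z1)) with h | h
      · exact mem_range_of_exists_le_of_exists_ge hdc ⟨z1, by simpa using h⟩
          ⟨-z1, by simpa using h⟩
      · exact mem_range_of_exists_le_of_exists_ge hdc ⟨-z1, by simpa using h⟩
          ⟨z1, by simpa using h⟩
    obtain ⟨z, hz⟩ := this
    have h1 : (z : ℂ) = -z := by
      have := congrArg ψ (sub_eq_zero.1 hz)
      rw [hψg, hψg] at this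
      simpa using this
    have h2 : (z : ℂ) = 0 := by linear_combination h1 / 2
    have := z.2
    rw [h2] at this
    simp at this
  obtain ⟨c, hcs, hcψ⟩ := hex
  have hcn : ‖c‖ = 1 := by simpa using hcs
  have hc0 : c ≠ 0 := by intro h; simp [h] at hcn
  set h : ℝ → ℝ := fun t => Complex.arg (-ψ t / c) with hh
  have hn : ∀ t ∈ Set.Icc (0 : ℝ) 1, ‖-ψ t / c‖ = 1 := by
    intro t ht
    have := hs t ht
    simp only [mem_sphere_iff_norm, sub_zero] at this
    rw [norm_div, norm_neg, this, hcn, div_one]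
  have hψ : ∀ t ∈ Set.Icc (0 : ℝ) 1, ψ t = -c * Complex.exp (h t * Complex.I) := by
    intro t ht
    have h1 := Complex.norm_mul_exp_arg_mul_I (-ψ t / c)
    rw [hn t ht, Complex.ofReal_one, one_mul] at h1
    simp only [hh]
    rw [h1]
    field_simp
  have hpi : ∀ t ∈ Set.Icc (0 : ℝ) 1, h t ≠ Real.pi := by
    intro t ht hp
    have := hψ t ht
    rw [hp, Complex.exp_pi_mul_I] at this
    exact hcψ t ht (by rw [this]; ring)
  have hIoo : ∀ t ∈ Set.Icc (0 : ℝ) 1, -Real.pi < h t ∧ h t < Real.pi := fun t ht =>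
    ⟨Complex.neg_pi_lt_arg _, lt_of_le_of_ne (Complex.arg_le_pi _) (hpi t ht)⟩
  have hhc : ContinuousOn h (Set.Icc 0 1) := by
    intro t ht
    have hsl : -ψ t / c ∈ Complex.slitPlane := by
      rw [Complex.mem_slitPlane_iff_arg]
      refine ⟨hpi t ht, fun h0 => ?_⟩
      have := hn t ht
      rw [h0] at this
      simp at this
    exact ContinuousAt.comp_continuousWithinAt (f := fun t => -ψ t / c) (g := Complex.arg)
      (Complex.continuousAt_arg hsl) (((hc t ht).neg).div_const c)
  have hhi : Set.InjOn h (Set.Icc 0 1) := by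
    intro s hs' t ht hst
    apply hi hs' ht
    rw [hψ s hs', hψ t ht, hst]
  have m0 : (0 : ℝ) ∈ Set.Icc (0 : ℝ) 1 := by simp
  have m1 : (1 : ℝ) ∈ Set.Icc (0 : ℝ) 1 := by simp
  obtain ⟨a, b, hab, hend, hlt⟩ : ∃ a b : ℝ, (∀ t ∈ Set.Icc (0 : ℝ) 1, a ≤ h t ∧ h t ≤ b) ∧
      (h 0 = a ∧ h 1 = b ∨ h 0 = b ∧ h 1 = a) ∧ b < a + 2 * Real.pi := by
    have b0 := hIoo 0 m0
    have b1 := hIoo 1 m1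
    rcases hhc.strictMonoOn_of_injOn_Icc' zero_le_one hhi with hm | hm
    · exact ⟨h 0, h 1, fun t ht => ⟨hm.monotoneOn m0 ht ht.1, hm.monotoneOn ht m1 ht.2⟩,
        Or.inl ⟨rfl, rfl⟩, by linarith⟩
    · exact ⟨h 1, h 0, fun t ht => ⟨hm.antitoneOn ht m1 ht.2, hm.antitoneOn m0 ht ht.1⟩,
        Or.inr ⟨rfl, rfl⟩, by linarith⟩
  let E : ℝ → ℂ := fun θ => -c * Complex.exp (θ * Complex.I)
  have hE : Continuous E := by fun_prop
  have clb : ∀ θ ∈ Set.Icc b (a + 2 * Real.pi), E θ ∈ closure (E '' Set.Ioo b (a + 2 * Real.pi)) := by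
    intro θ hθ
    rw [← closure_Ioo hlt.ne] at hθ
    exact image_closure_subset_closure_image hE ⟨θ, hθ, rfl⟩
  have cb : E b ∈ closure (E '' Set.Ioo b (a + 2 * Real.pi)) := clb b ⟨le_rfl, hlt.le⟩
  have ca : E a ∈ closure (E '' Set.Ioo b (a + 2 * Real.pi)) := by
    have := clb _ ⟨hlt.le, le_rfl⟩
    have e : E (a + 2 * Real.pi) = E a := by
      simp only [E]
      push_cast
      rw [add_mul, Complex.exp_add, Complex.exp_two_pi_mul_I, mul_one]
    rwa [e] at this
  refine ⟨E '' Set.Ioo b (a + 2 * Real.pi), ?_, (Set.nonempty_Ioo.2 hlt).image _,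
    isPreconnected_Ioo.image _ hE.continuousOn, ?_, ?_, ?_⟩
  · rintro _ ⟨θ, -, rfl⟩
    simp [E, hcn, Complex.norm_exp_ofReal_mul_I]
  · rintro t ht ⟨θ, hθ, he⟩
    rw [hψ t ht] at he
    have he' := mul_left_cancel₀ (neg_ne_zero.2 hc0) he
    obtain ⟨n, hn⟩ := Complex.exp_eq_exp_iff_exists_int.1 he'
    have hr : θ = h t + n * (2 * Real.pi) := by
      have : (θ : ℂ) = h t + n * (2 * Real.pi) := by
        apply mul_right_cancel₀ Complex.I_ne_zero
        rw [hn]; ring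
      exact_mod_cast this
    have hb := hab t ht
    have hpp := Real.pi_pos
    have n1 : (0 : ℝ) < n := by
      by_contra hcon
      nlinarith [hθ.1]
    have n2 : (n : ℝ) < 1 := by
      by_contra hcon
      nlinarith [hθ.2]
    have n1' : 0 < n := by exact_mod_cast n1
    have n2' : n < 1 := by exact_mod_cast n2
    omega
  · rw [hψ 0 m0]
    rcases hend with ⟨h0, -⟩ | ⟨h0, -⟩ <;> rw [h0] <;> assumption
  · rw [hψ 1 m1]
    rcases hend with ⟨-, h0⟩ | ⟨-, h0⟩ <;> rw [h0] <;> assumption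

theorem aux_sep (huni : ∀ (X Y : Set ℂ) (hX : IsClosed X) (hY : IsClosed Y)
    (hXc : IsPreconnected X) (hYc : IsPreconnected Y)
    (hU : X ∪ Y = Metric.closedBall (0 : ℂ) 1), IsPreconnected (X ∩ Y))
    (A : Set ℂ) (hA : IsClosed A) (hAc : IsPreconnected A) (hAn : A.Nonempty)
    (hAD : A ⊆ Metric.closedBall (0 : ℂ) 1) (w : ℂ) (hw : w ∈ Metric.closedBall (0 : ℂ) 1 \ A) :
    let W := connectedComponentIn (Metric.closedBall (0 : ℂ) 1 \ A) w
    IsClosed (closure W ∩ (Metric.closedBall (0 : ℂ) 1 \ W)) ∧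
    IsPreconnected (closure W ∩ (Metric.closedBall (0 : ℂ) 1 \ W)) ∧
    closure W ∩ (Metric.closedBall (0 : ℂ) 1 \ W) ⊆ A := by
  intro W
  set D := Metric.closedBall (0 : ℂ) 1 with hD
  have hDcl : IsClosed D := Metric.isClosed_closedBall
  have hDc : IsPreconnected D := (convex_closedBall 0 1).isPreconnected
  have hopen : ∀ x, ∃ O : Set ℂ, IsOpen O ∧ connectedComponentIn (D \ A) x = D ∩ O := by
    intro x
    have : ∀ z ∈ connectedComponentIn (D \ A) x, ∃ ε > 0,
        D ∩ Metric.ball z ε ⊆ connectedComponentIn (D \ A) x := by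
      intro z hz
      have hz' := connectedComponentIn_subset _ _ hz
      obtain ⟨ε, hε, hb⟩ := Metric.isOpen_iff.1 hA.isOpen_compl z hz'.2
      refine ⟨ε, hε, ?_⟩
      rw [connectedComponentIn_eq hz]
      refine IsPreconnected.subset_connectedComponentIn ?_ ⟨hz'.1, Metric.mem_ball_self hε⟩ ?_
      · exact ((convex_closedBall 0 1).inter (convex_ball z ε)).isPreconnected
      · exact fun y hy => ⟨hy.1, hb hy.2⟩
    choose! ε hε hb using this
    refine ⟨⋃ z ∈ connectedComponentIn (D \ A) x, Metric.ball z (ε z),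
      isOpen_biUnion fun _ _ => Metric.isOpen_ball, ?_⟩
    ext y
    constructor
    · intro hy
      exact ⟨(connectedComponentIn_subset _ _ hy).1, Set.mem_biUnion hy (Metric.mem_ball_self (hε y hy))⟩
    · rintro ⟨hy, hy2⟩
      obtain ⟨z, hz, hyz⟩ := Set.mem_iUnion₂.1 hy2
      exact hb z hz ⟨hy, hyz⟩
  have hclo : ∀ x ∈ D \ A, ∀ z ∈ closure (connectedComponentIn (D \ A) x), z ∉ A →
      z ∈ connectedComponentIn (D \ A) x := by
    intro x hx z hz hzA
    have hzD : z ∈ D :=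
      closure_minimal ((connectedComponentIn_subset _ _).trans Set.sdiff_subset) hDcl hz
    have hpre : IsPreconnected (insert z (connectedComponentIn (D \ A) x)) :=
      isPreconnected_connectedComponentIn.subset_closure (Set.subset_insert _ _)
        (Set.insert_subset hz subset_closure)
    exact hpre.subset_connectedComponentIn (Or.inr (mem_connectedComponentIn hx))
      (Set.insert_subset (show z ∈ D \ A from ⟨hzD, hzA⟩) (connectedComponentIn_subset _ _))
      (Or.inl rfl)
  have hWD : W ⊆ D := (connectedComponentIn_subset _ _).trans Set.sdiff_subset
  have hYcl : IsClosed (D \ W) := by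
    obtain ⟨O, hO, he⟩ := hopen w
    have : D \ W = D ∩ Oᶜ := by
      change D \ connectedComponentIn (D \ A) w = _
      rw [he]
      ext z
      simp only [Set.mem_sdiff, Set.mem_inter_iff, Set.mem_compl_iff]
      tauto
    rw [this]
    exact hDcl.inter hO.isClosed_compl
  have hAY : A ⊆ D \ W := fun z hz => ⟨hAD hz, fun h => (connectedComponentIn_subset _ _ h).2 hz⟩
  obtain ⟨a0, ha0⟩ := hAn
  have hYc : IsPreconnected (D \ W) := by
    refine isPreconnected_of_forall a0 ?_
    intro y hy
    by_cases hyA : y ∈ A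
    · exact ⟨A, hAY, ha0, hyA, hAc⟩
    have hyDA : y ∈ D \ A := ⟨hy.1, hyA⟩
    set C := connectedComponentIn (D \ A) y with hC
    have hyC : y ∈ C := mem_connectedComponentIn hyDA
    have : ∃ a ∈ A, a ∈ closure C := by
      by_contra hcon
      push Not at hcon
      obtain ⟨O, hO, he⟩ := hopen y
      have hCcl : closure C ⊆ C := fun z hz => hclo y hyDA z hz fun h => hcon z h hz
      obtain ⟨z, hzD, hzO, hzC⟩ := hDc O (closure C)ᶜ hO isClosed_closure.isOpen_compl (by
        intro z hz
        by_cases hzC : z ∈ closure C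
        · left
          have := hCcl hzC
          rw [hC, he] at this
          exact this.2
        · exact Or.inr hzC)
        ⟨y, hy.1, by
          have := hyC
          rw [hC, he] at this
          exact this.2⟩
        ⟨a0, hAD ha0, hcon a0 ha0⟩
      apply hzC
      apply subset_closure
      rw [hC, he]
      exact ⟨hzD, hzO⟩
    obtain ⟨a, haA, haC⟩ := this
    have hpre : IsPreconnected (insert a C) :=
      isPreconnected_connectedComponentIn.subset_closure (Set.subset_insert _ _)
        (Set.insert_subset haC subset_closure)
    refine ⟨insert a C ∪ A, ?_, Or.inr ha0, Or.inl (Or.inr hyC),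
      hpre.union a (Or.inl rfl) haA hAc⟩
    refine Set.union_subset (Set.insert_subset (hAY haA) ?_) hAY
    intro z hz
    refine ⟨(connectedComponentIn_subset _ _ hz).1, fun hzW => hy.2 ?_⟩
    have e1 := connectedComponentIn_eq hz
    have e2 := connectedComponentIn_eq hzW
    change y ∈ connectedComponentIn (D \ A) w
    rw [e2, ← e1]
    exact hyC
  refine ⟨isClosed_closure.inter hYcl, ?_, ?_⟩
  · refine huni _ _ isClosed_closure hYcl isPreconnected_connectedComponentIn.closure hYc ?_
    apply Set.Subset.antisymm
    · exact Set.union_subset (closure_minimal hWD hDcl) Set.sdiff_subset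
    · intro z hz
      by_cases h : z ∈ W
      · exact Or.inl (subset_closure h)
      · exact Or.inr ⟨hz, h⟩
  · rintro z ⟨hz, hz2⟩
    by_contra hzA
    exact hz2.2 (hclo w hw z hz hzA)

/-- Separation Lemma: Let `Ω` be a Jordan domain (image of the open unit
disk under a map `φ` that is continuous and injective on the closed unit disk, sending
the closed disk onto `clos Ω`). Let `A ⊆ clos Ω` be closed and connected with
`Γ = A ∩ ∂Ω` a simple arc from `P` to `Q`, such that every point of `Γ ∖ {P, Q}` has a
neighborhood disjoint from `clos Ω ∖ A`. Then `∂A ∩ Ω` has a connected component whose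
closure contains both `P` and `Q`. -/
theorem stmt_11 (Ω : Set ℂ) (φ : ℂ → ℂ)
    (hφc : ContinuousOn φ (Metric.closedBall (0 : ℂ) 1))
    (hφi : Set.InjOn φ (Metric.closedBall (0 : ℂ) 1))
    (hφcl : φ '' Metric.closedBall (0 : ℂ) 1 = closure Ω)
    (hφb : φ '' Metric.ball (0 : ℂ) 1 = Ω)
    (A : Set ℂ) (hAcl : IsClosed A) (hAconn : IsConnected A) (hAsub : A ⊆ closure Ω)
    (P Q : ℂ) (hPQ : P ≠ Q)
    (γ : ℝ → ℂ) (hγc : ContinuousOn γ (Set.Icc 0 1)) (hγi : Set.InjOn γ (Set.Icc 0 1))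
    (hγim : γ '' Set.Icc 0 1 = A ∩ frontier Ω)
    (hγ0 : γ 0 = P) (hγ1 : γ 1 = Q)
    (hnbhd : ∀ x ∈ (A ∩ frontier Ω) \ {P, Q},
      ∃ V : Set ℂ, IsOpen V ∧ x ∈ V ∧ V ∩ (closure Ω \ A) = ∅) :
    ∃ x ∈ frontier A ∩ Ω,
      P ∈ closure (connectedComponentIn (frontier A ∩ Ω) x) ∧
      Q ∈ closure (connectedComponentIn (frontier A ∩ Ω) x) := by
  classical
  set D := Metric.closedBall (0 : ℂ) 1 with hD
  have hDcomp : IsCompact D := isCompact_closedBall _ _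
  have hball : Metric.ball (0 : ℂ) 1 ⊆ D := Metric.ball_subset_closedBall
  have hΩo : ∀ z ∈ Metric.ball (0 : ℂ) 1, φ z ∈ interior Ω := by
    intro z hz
    obtain ⟨r, hr, hrs⟩ := Metric.nhds_basis_closedBall.mem_iff.1 (Metric.isOpen_ball.mem_nhds hz)
    have hm : ∀ ζ ∈ Metric.closedBall (0 : ℂ) 1, z + r * ζ ∈ Metric.closedBall z r := by
      intro ζ hζ
      simp only [Metric.mem_closedBall, dist_zero_right] at hζ
      rw [Metric.mem_closedBall, dist_eq_norm, add_sub_cancel_left, norm_mul, Complex.norm_real,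
        Real.norm_eq_abs, abs_of_pos hr]
      nlinarith
    have hr0 : (r : ℂ) ≠ 0 := by exact_mod_cast hr.ne'
    have key := aux_inv_dom (fun ζ => φ (z + r * ζ))
      (hφc.comp (by fun_prop) fun ζ hζ => hball (hrs (hm ζ hζ)))
      (fun ζ hζ ξ hξ h => by
        have := hφi (hball (hrs (hm ζ hζ))) (hball (hrs (hm ξ hξ))) h
        exact mul_left_cancel₀ hr0 (add_left_cancel this))
    simp only [mul_zero, add_zero] at key
    refine interior_mono ?_ key
    rintro _ ⟨ζ, hζ, rfl⟩
    rw [← hφb]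
    exact ⟨_, hrs (hm ζ hζ), rfl⟩
  have hfr : ∀ z ∈ D, φ z ∈ frontier Ω → z ∈ Metric.sphere (0 : ℂ) 1 := by
    intro z hz hf
    by_contra hs
    have hzb : z ∈ Metric.ball (0 : ℂ) 1 := by
      simp only [hD, Metric.mem_closedBall, Metric.mem_ball, Metric.mem_sphere] at hz hs ⊢
      exact lt_of_le_of_ne hz hs
    exact hf.2 (hΩo z hzb)
  have hfr' : ∀ z ∈ Metric.sphere (0 : ℂ) 1, φ z ∈ frontier Ω := by
    intro z hz
    have hzD : z ∈ D := Metric.sphere_subset_closedBall hz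
    refine ⟨hφcl ▸ ⟨z, hzD, rfl⟩, fun hi => ?_⟩
    have := interior_subset hi
    rw [← hφb] at this
    obtain ⟨y, hy, hyz⟩ := this
    have := hφi (hball hy) hzD hyz
    subst this
    simp only [Metric.mem_ball, Metric.mem_sphere] at hy hz
    linarith
  set ψ := Function.invFunOn φ D with hψ
  have hψc : ContinuousOn ψ (closure Ω) := by
    rw [← hφcl]; exact aux_inv φ D hDcomp hφc hφi
  have hψD : ∀ x ∈ closure Ω, ψ x ∈ D := fun x hx => by
    rw [← hφcl] at hx; exact Function.invFunOn_mem hx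
  have hφψ : ∀ x ∈ closure Ω, φ (ψ x) = x := fun x hx => by
    rw [← hφcl] at hx; exact Function.invFunOn_eq hx
  have hψφ : ∀ z ∈ D, ψ (φ z) = z := fun z hz => hφi.leftInvOn_invFunOn hz
  set A' := D ∩ φ ⁻¹' A with hA'
  have hA'cl : IsClosed A' := hφc.preimage_isClosed_of_isClosed hDcomp.isClosed hAcl
  have hA'eq : A' = ψ '' A := by
    ext z
    constructor
    · rintro ⟨hz, hzA⟩; exact ⟨φ z, hzA, hψφ z hz⟩
    · rintro ⟨x, hx, rfl⟩
      exact ⟨hψD x (hAsub hx), by rw [Set.mem_preimage, hφψ x (hAsub hx)]; exact hx⟩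
  have hA'c : IsPreconnected A' := by
    rw [hA'eq]; exact hAconn.isPreconnected.image _ (hψc.mono hAsub)
  have hA'n : A'.Nonempty := by rw [hA'eq]; exact hAconn.nonempty.image _
  have hγm : ∀ t ∈ Set.Icc (0 : ℝ) 1, γ t ∈ A ∩ frontier Ω := fun t ht => by
    rw [← hγim]; exact ⟨t, ht, rfl⟩
  have hγcl : ∀ t ∈ Set.Icc (0 : ℝ) 1, γ t ∈ closure Ω := fun t ht => hAsub (hγm t ht).1
  have m0 : (0 : ℝ) ∈ Set.Icc (0 : ℝ) 1 := by simp
  have m1 : (1 : ℝ) ∈ Set.Icc (0 : ℝ) 1 := by simp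
  obtain ⟨B, hBs, ⟨w, hwB⟩, hBc, hBd, hB0, hB1⟩ := aux_circle (fun t => ψ (γ t))
    (hψc.comp hγc hγcl)
    (fun s hs t ht h => by
      apply hγi hs ht
      rw [← hφψ _ (hγcl s hs), ← hφψ _ (hγcl t ht)]
      exact congrArg φ h)
    (fun t ht => hfr _ (hψD _ (hγcl t ht)) (by rw [hφψ _ (hγcl t ht)]; exact (hγm t ht).2))
  have hBDA : B ⊆ D \ A' := by
    intro z hz
    have hzs := hBs hz
    refine ⟨Metric.sphere_subset_closedBall hzs, fun hzA => ?_⟩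
    have : φ z ∈ A ∩ frontier Ω := ⟨hzA.2, hfr' z hzs⟩
    rw [← hγim] at this
    obtain ⟨t, ht, he⟩ := this
    apply hBd t ht
    simp only [he, hψφ z hzA.1]
    exact hz
  obtain ⟨hFcl, hFc, hFA⟩ := aux_sep aux_unicoherent A' hA'cl hA'c hA'n Set.inter_subset_left w
    (hBDA hwB)
  rw [← hD] at hFcl hFc hFA
  set W := connectedComponentIn (D \ A') w with hW
  have hBW : B ⊆ W := hBc.subset_connectedComponentIn hwB hBDA
  have hWs : W ⊆ D \ A' := connectedComponentIn_subset _ _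
  have hend : ∀ t ∈ Set.Icc (0 : ℝ) 1, ψ (γ t) ∈ closure B → ψ (γ t) ∈ closure W ∩ (D \ W) := by
    intro t ht h
    refine ⟨closure_mono hBW h, hψD _ (hγcl t ht), fun hw => (hWs hw).2 ?_⟩
    rw [hA'eq]
    exact ⟨γ t, (hγm t ht).1, rfl⟩
  have hφ0 : φ (ψ (γ 0)) = P := by rw [hφψ _ (hγcl 0 m0), hγ0]
  have hφ1 : φ (ψ (γ 1)) = Q := by rw [hφψ _ (hγcl 1 m1), hγ1]
  have hne : ψ (γ 0) ≠ ψ (γ 1) := by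
    intro h
    apply hPQ
    rw [← hφ0, ← hφ1, h]
  obtain ⟨C, hCF, hCc, hC0, hC1⟩ := aux_irred (closure W ∩ (D \ W))
    (hDcomp.of_isClosed_subset hFcl (fun z hz => hz.2.1)) hFc _ _ hne (hend 0 m0 hB0) (hend 1 m1 hB1)
  have hCD : C ⊆ D := fun z hz => (hCF hz).1.2.1
  have hCimg : φ '' C ⊆ frontier A ∩ Ω := by
    rintro _ ⟨z, hz, rfl⟩
    have hzD := hCD hz
    have hzA : z ∈ A' := hFA (hCF hz).1
    have hcl : φ z ∈ closure (closure Ω \ A) := by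
      have h1 : z ∈ closure (D \ A') := closure_mono hWs (hCF hz).1.1
      have h2 := ((hφc z hzD).mono Set.sdiff_subset).mem_closure_image h1
      refine closure_mono ?_ h2
      rintro _ ⟨y, hy, rfl⟩
      exact ⟨hφcl ▸ ⟨y, hy.1, rfl⟩, fun h => hy.2 ⟨hy.1, h⟩⟩
    refine ⟨?_, ?_⟩
    · rw [frontier_eq_closure_inter_closure]
      exact ⟨subset_closure hzA.2, closure_mono (fun y hy => hy.2) hcl⟩
    · by_contra hzΩ
      have hzf : φ z ∈ frontier Ω :=
        ⟨hφcl ▸ ⟨z, hzD, rfl⟩, fun h => hzΩ (interior_subset h)⟩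
      have hzPQ : φ z ∉ ({P, Q} : Set ℂ) := by
        intro h
        apply (hCF hz).2
        rcases h with h | h
        · left
          rw [hγ0, ← h, hψφ z hzD]
        · right
          rw [Set.mem_singleton_iff] at h ⊢
          rw [hγ1, ← h, hψφ z hzD]
      obtain ⟨V, hV, hzV, hVe⟩ := hnbhd (φ z) ⟨⟨hzA.2, hzf⟩, hzPQ⟩
      have := mem_closure_iff.1 hcl V hV hzV
      rw [hVe] at this
      exact Set.not_nonempty_empty this
  obtain ⟨z, hz⟩ : C.Nonempty := closure_nonempty_iff.1 ⟨_, hC0⟩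
  have hsub : φ '' C ⊆ connectedComponentIn (frontier A ∩ Ω) (φ z) :=
    (hCc.image φ (hφc.mono hCD)).subset_connectedComponentIn ⟨z, hz, rfl⟩ hCimg
  refine ⟨φ z, hCimg ⟨z, hz, rfl⟩, closure_mono hsub ?_, closure_mono hsub ?_⟩
  · have := ((hφc _ (hψD _ (hγcl 0 m0))).mono hCD).mem_closure_image hC0
    rwa [hφ0] at this
  · have := ((hφc _ (hψD _ (hγcl 1 m1))).mono hCD).mem_closure_image hC1
    rwa [hφ1] at this
end

section
/- Let p, q ∈ ℂ[z] be coprime polynomials with q ≠ 0 and d = max(deg p, deg q) ≥ 2. Let n be the number of distinct poles of r = p/q on the Riemann sphere, i.e. n = (number of distinct roots of q) + (1 if deg p > deg q, else 0). Then the set F = {z ∈ ℂ : q(z) ≠ 0 and p(z) = conj(z)·q(z)} of finite fixed points of z ↦ conj(r(z)) is finite, and, counting also ∞ as a fixed point when deg p > deg q, the total number of fixed points satisfies |F| + (1 if deg p > deg q, else 0) ≤ min(3d + 2n − 3, 5d − 5). -/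
open Polynomial

/-- The set of finite fixed points of `z ↦ conj(r(z))` for the rational function
`r = p/q`: points `z` with `q(z) ≠ 0` and `p(z) = conj(z)·q(z)`. -/
def fixedPts (p q : Polynomial ℂ) : Set ℂ :=
  {z | q.eval z ≠ 0 ∧ p.eval z = (starRingEnd ℂ) z * q.eval z}

theorem signature_aux {ι κ : Type} [Fintype ι] [Fintype κ] (σ : ι → ι) (hσ : ∀ i, σ (σ i) = i)
    (wt : ι → ℂ) (hwt : ∀ i, wt (σ i) = (starRingEnd ℂ) (wt i)) (hwt0 : ∀ i, wt i ≠ 0)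
    (e : κ → ι → ℂ)
    (hli : ∀ c : κ → ℂ, (∀ i, ∑ k, c k * e k i = 0) → c = 0)
    (hiso : ∀ k l, ∑ i, e k i * (starRingEnd ℂ) (e l (σ i)) * wt i = 0) 
    (neg pos : Finset ι)
    (hneg : ∀ i, i ∈ neg ↔ (σ i = i ∧ (wt i).re < 0))
    (hpos : ∀ i, i ∈ pos ↔ (σ i = i ∧ 0 < (wt i).re)) :
    2 * Fintype.card κ + pos.card ≤ Fintype.card ι + neg.card := by
  classical
  obtain ⟨g, hg⟩ : ∃ g : ι → ℕ, Function.Injective g :=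
    ⟨fun i => (Fintype.equivFin ι i : ℕ), fun a b h => (Fintype.equivFin ι).injective (Fin.ext h)⟩
  set T : Finset ι := Finset.univ.filter (fun i => g i < g (σ i)) with hT
  set T' : Finset ι := Finset.univ.filter (fun i => g (σ i) < g i) with hT'
  have hTT' : T.card = T'.card := by
    apply Finset.card_bij (fun i _ => σ i)
    · intro i hi; simp [hT, hT', hσ] at hi ⊢; exact hi
    · intro i _ j _ h; rw [← hσ i, ← hσ j, h]
    · intro i hi; refine ⟨σ i, ?_, hσ i⟩; simp [hT, hT', hσ] at hi ⊢; exact hi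
  have him : ∀ i, σ i = i → (wt i).im = 0 := by
    intro i hi
    have := hwt i
    rw [hi] at this
    exact Complex.conj_eq_iff_im.mp this.symm
  have hre : ∀ i, σ i = i → (wt i).re ≠ 0 := by
    intro i hi h
    exact hwt0 i (Complex.ext h (him i hi))
  have hcard : Fintype.card ι = pos.card + neg.card + T.card + T'.card := by
    rw [← Finset.card_univ]
    have hu : (Finset.univ : Finset ι) = ((pos ∪ neg) ∪ T) ∪ T' := by
      ext i
      simp only [Finset.mem_univ, Finset.mem_union, hpos, hneg, hT, hT', Finset.mem_filter, true_and,
        true_iff]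
      rcases lt_trichotomy (g i) (g (σ i)) with h | h | h
      · tauto
      · have h1 := hg h
        have := hre i h1.symm
        rcases lt_or_gt_of_ne this with h2 | h2
        · left; left; right; exact ⟨h1.symm, h2⟩
        · left; left; left; exact ⟨h1.symm, h2⟩
      · tauto
    rw [hu, Finset.card_union_of_disjoint, Finset.card_union_of_disjoint, Finset.card_union_of_disjoint]
    · rw [Finset.disjoint_left]; intro i h1 h2
      rw [hpos] at h1; rw [hneg] at h2; linarith [h1.2, h2.2]
    · rw [Finset.disjoint_left]; intro i h1 h2
      simp only [Finset.mem_union, hpos, hneg, hT, Finset.mem_filter, Finset.mem_univ, true_and] at h1 h2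
      rcases h1 with h1 | h1 <;> rw [h1.1] at h2 <;> omega
    · rw [Finset.disjoint_left]; intro i h1 h2
      simp only [Finset.mem_union, hpos, hneg, hT, hT', Finset.mem_filter, Finset.mem_univ, true_and] at h1 h2
      rcases h1 with (h1 | h1) | h1
      · rw [h1.1] at h2; omega
      · rw [h1.1] at h2; omega
      · omega
  suffices hmain : Fintype.card κ ≤ neg.card + T.card by omega
  by_contra hlt
  push Not at hlt
  let ev : (κ → ℂ) → ι → ℂ := fun c i => ∑ k, c k * e k i
  let L : (κ → ℂ) →ₗ[ℂ] ((neg ⊕ T) → ℂ) :=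
    { toFun := fun c x => match x with
        | Sum.inl i => ev c i
        | Sum.inr i => ev c i * wt i - ev c (σ i)
      map_add' := by
        intro c c'
        ext x
        rcases x with i | i <;> simp [ev, add_mul, Finset.sum_add_distrib] <;> ring
      map_smul' := by
        intro m c
        ext x
        rcases x with i | i <;> simp [ev, mul_assoc, Finset.mul_sum, mul_sub, Finset.sum_mul] }
  have hk : LinearMap.ker L ≠ ⊥ := by
    apply LinearMap.ker_ne_bot_of_finrank_lt
    simp
    omega
  obtain ⟨c, hcL, hc0⟩ := (Submodule.ne_bot_iff _).mp hk
  have hcL' : L c = 0 := hcL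
  apply hc0
  apply hli
  have hsum : ∑ i, ev c i * (starRingEnd ℂ) (ev c (σ i)) * wt i = 0 := by
    have : ∀ i, ev c i * (starRingEnd ℂ) (ev c (σ i)) * wt i
        = ∑ k, ∑ l, c k * (starRingEnd ℂ) (c l) * (e k i * (starRingEnd ℂ) (e l (σ i)) * wt i) := by
      intro i
      simp only [ev, map_sum, map_mul]
      rw [Finset.sum_mul_sum]
      simp only [Finset.sum_mul]
      refine Finset.sum_congr rfl fun k _ => Finset.sum_congr rfl fun l _ => by ring
    simp only [this]
    rw [Finset.sum_comm]
    refine Finset.sum_eq_zero fun k _ => ?_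
    rw [Finset.sum_comm]
    refine Finset.sum_eq_zero fun l _ => ?_
    rw [← Finset.mul_sum, hiso, mul_zero]
  let s : ι → ℝ := fun i => (ev c i * (starRingEnd ℂ) (ev c (σ i)) * wt i).re
  have hs0 : ∑ i, s i = 0 := by
    have := congrArg Complex.re hsum
    rwa [Complex.re_sum, Complex.zero_re] at this
  have hsσ : ∀ i, s (σ i) = s i := by
    intro i
    simp only [s, hσ, hwt]
    rw [← Complex.conj_re]
    congr 1
    simp only [map_mul, Complex.conj_conj]
    ring
  have hfix : ∀ i, σ i = i → s i = Complex.normSq (ev c i) * (wt i).re := by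
    intro i hi
    simp only [s, hi, Complex.mul_conj, Complex.re_ofReal_mul]
  have hTs : ∀ i, g i < g (σ i) → ev c i * wt i = ev c (σ i) := by
    intro i hi
    have := congrFun hcL' (Sum.inr ⟨i, by simp [hT, hi]⟩)
    simpa [L, sub_eq_zero] using this
  have hTs' : ∀ i, g i < g (σ i) → s i = Complex.normSq (ev c (σ i)) := by
    intro i hi
    simp only [s]
    rw [mul_right_comm, hTs i hi, Complex.mul_conj, Complex.ofReal_re]
  have hn0 : ∀ i, i ∈ neg → ev c i = 0 := by
    intro i hi
    have := congrFun hcL' (Sum.inl ⟨i, hi⟩)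
    simpa [L] using this
  have hsnn : ∀ i, 0 ≤ s i := by
    intro i
    rcases lt_trichotomy (g i) (g (σ i)) with h | h | h
    · rw [hTs' i h]; exact Complex.normSq_nonneg _
    · have h1 := (hg h).symm
      rw [hfix i h1]
      rcases lt_or_gt_of_ne (hre i h1) with h2 | h2
      · rw [hn0 i ((hneg i).2 ⟨h1, h2⟩)]; simp
      · exact mul_nonneg (Complex.normSq_nonneg _) h2.le
    · rw [← hsσ, hTs' (σ i) (by rwa [hσ])]; exact Complex.normSq_nonneg _
  have hsz : ∀ i, s i = 0 := by
    intro i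
    exact (Finset.sum_eq_zero_iff_of_nonneg (fun i _ => hsnn i)).1 hs0 i (Finset.mem_univ i)
  intro i
  change ev c i = 0
  rcases lt_trichotomy (g i) (g (σ i)) with h | h | h
  · have h2 := hTs' i h
    rw [hsz, eq_comm, Complex.normSq_eq_zero] at h2
    have h3 := hTs i h
    rw [h2] at h3
    exact (mul_eq_zero.1 h3).resolve_right (hwt0 i)
  · have h1 := (hg h).symm
    rcases lt_or_gt_of_ne (hre i h1) with h2 | h2
    · exact hn0 i ((hneg i).2 ⟨h1, h2⟩)
    · have h3 := hfix i h1
      rw [hsz, eq_comm, mul_eq_zero] at h3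
      exact Complex.normSq_eq_zero.1 (h3.resolve_right h2.ne')
  · have h2 := hTs' (σ i) (by rwa [hσ])
    rw [hsz, eq_comm, Complex.normSq_eq_zero, hσ] at h2
    exact h2

noncomputable def cj (p : ℂ[X]) : ℂ[X] := p.map (starRingEnd ℂ)

noncomputable def fm (p q : ℂ[X]) (z : ℂ) : ℂ := (starRingEnd ℂ) (p.eval z / q.eval z)

noncomputable def Wr (p q : ℂ[X]) : ℂ[X] := derivative p * q - p * derivative q

noncomputable def rho (p q : ℂ[X]) (z : ℂ) : ℂ := (Wr p q).eval z / (q.eval z) ^ 2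

noncomputable def hc (d : ℕ) (f p q : ℂ[X]) : ℂ[X] :=
  ∑ k ∈ Finset.range (d + 1), C (f.coeff k) * p ^ k * q ^ (d - k)

noncomputable def GG (d : ℕ) (p q p2 q2 : ℂ[X]) : ℂ[X] := hc d p2 p q - X * hc d q2 p q

theorem cj_eval (p : ℂ[X]) (z : ℂ) : (cj p).eval z = (starRingEnd ℂ) (p.eval ((starRingEnd ℂ) z)) := by
  have := Polynomial.eval₂_hom (p := p) (starRingEnd ℂ) ((starRingEnd ℂ) z)
  rw [Complex.conj_conj] at this
  rw [cj, eval_map, this]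

theorem cj_natDegree (p : ℂ[X]) : (cj p).natDegree = p.natDegree :=
  natDegree_map_eq_of_injective (starRingEnd ℂ).injective p

theorem cj_coprime {p q : ℂ[X]} (h : IsCoprime p q) : IsCoprime (cj p) (cj q) :=
  h.map (mapRingHom (starRingEnd ℂ))

theorem cj_Wr (p q : ℂ[X]) : Wr (cj p) (cj q) = cj (Wr p q) := by
  simp [Wr, cj, derivative_map]

theorem cj_rho (p q : ℂ[X]) (z : ℂ) : 
    rho (cj p) (cj q) z = (starRingEnd ℂ) (rho p q ((starRingEnd ℂ) z)) := by
  simp [rho, cj_Wr, cj_eval]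

theorem cop_ne {p q : ℂ[X]} (h : IsCoprime p q) (z : ℂ) (hq : q.eval z = 0) : p.eval z ≠ 0 := by
  intro hp
  obtain ⟨a, b, hab⟩ := h
  have := congrArg (eval z) hab
  simp [hp, hq] at this

theorem hc_eval (d : ℕ) (f p q : ℂ[X]) (hf : f.natDegree ≤ d) (z : ℂ) (hq : q.eval z ≠ 0) :
    (hc d f p q).eval z = (q.eval z) ^ d * f.eval (p.eval z / q.eval z) := by
  rw [eval_eq_sum_range' (Nat.lt_succ_of_le hf), hc, eval_finsetSum, Finset.mul_sum]
  refine Finset.sum_congr rfl fun k hk => ?_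
  have hk' : k ≤ d := by simp at hk; omega
  simp only [eval_mul, eval_C, eval_pow]
  have : eval z q ^ d = eval z q ^ (d - k) * eval z q ^ k := by rw [← pow_add]; congr 1; omega
  rw [this, div_pow]
  field_simp

theorem hc_eval_zero (d : ℕ) (f p q : ℂ[X]) (z : ℂ) (hq : q.eval z = 0) :
    (hc d f p q).eval z = f.coeff d * (p.eval z) ^ d := by
  rw [hc, eval_finsetSum, Finset.sum_eq_single d]
  · simp
  · intro k hk hkd
    have : d - k ≠ 0 := by simp at hk; omega
    simp [hq, this]
  · simp

theorem hc_natDegree_le (d : ℕ) (f p q : ℂ[X]) (hp : p.natDegree ≤ d) (hq : q.natDegree ≤ d) :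
    (hc d f p q).natDegree ≤ d * d := by
  apply natDegree_sum_le_of_forall_le
  intro k hk
  have hk' : k ≤ d := by simp at hk; omega
  have h1 : (C (f.coeff k) * p ^ k).natDegree ≤ k * d :=
    (natDegree_C_mul_le _ _).trans (natDegree_pow_le_of_le k hp)
  have h2 : (q ^ (d - k)).natDegree ≤ (d - k) * d := natDegree_pow_le_of_le _ hq
  refine (natDegree_mul_le_of_le h1 h2).trans (le_of_eq ?_)
  rw [← add_mul]; congr 1; omega

theorem hc_coeff (d : ℕ) (f p q : ℂ[X]) (hf : f.natDegree ≤ d) 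
    (hp : p.natDegree ≤ d) (hq : q.natDegree ≤ d) (hq0 : q.coeff d ≠ 0) :
    (hc d f p q).coeff (d * d) = (q.coeff d) ^ d * f.eval (p.coeff d / q.coeff d) := by
  rw [eval_eq_sum_range' (Nat.lt_succ_of_le hf), hc, finsetSum_coeff, Finset.mul_sum]
  refine Finset.sum_congr rfl fun k hk => ?_
  have hk' : k ≤ d := by simp at hk; omega
  have h1 : (C (f.coeff k) * p ^ k).natDegree ≤ k * d :=
    (natDegree_C_mul_le _ _).trans (natDegree_pow_le_of_le k hp)
  have h2 : (q ^ (d - k)).natDegree ≤ (d - k) * d := natDegree_pow_le_of_le _ hq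
  have e : d * d = k * d + (d - k) * d := by rw [← add_mul]; congr 1; omega
  rw [e, coeff_mul_add_eq_of_natDegree_le h1 h2, coeff_C_mul, coeff_pow_of_natDegree_le hp,
    coeff_pow_of_natDegree_le hq]
  have : q.coeff d ^ d = q.coeff d ^ (d - k) * q.coeff d ^ k := by rw [← pow_add]; congr 1; omega
  rw [this, div_pow]
  field_simp

theorem GG_natDegree_le (d : ℕ) (p q p2 q2 : ℂ[X]) (hp : p.natDegree ≤ d) (hq : q.natDegree ≤ d) :
    (GG d p q p2 q2).natDegree ≤ d * d + 1 := by
  refine (natDegree_sub_le _ _).trans (max_le ((hc_natDegree_le _ _ _ _ hp hq).trans (by omega)) ?_)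
  refine natDegree_mul_le.trans ?_
  rw [natDegree_X]
  have := hc_natDegree_le d q2 p q hp hq
  omega

theorem GG_coeff (d : ℕ) (p q p2 q2 : ℂ[X]) (hq2 : q2.natDegree ≤ d) 
    (hp : p.natDegree ≤ d) (hq : q.natDegree ≤ d) (hq0 : q.coeff d ≠ 0) :
    (GG d p q p2 q2).coeff (d * d + 1) = - ((q.coeff d) ^ d * q2.eval (p.coeff d / q.coeff d)) := by
  rw [GG, coeff_sub, coeff_X_mul, hc_coeff d q2 p q hq2 hp hq hq0,
    coeff_eq_zero_of_natDegree_lt, zero_sub]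
  have := hc_natDegree_le d p2 p q hp hq
  omega

theorem GG_natDegree (d : ℕ) (p q p2 q2 : ℂ[X]) (hq2 : q2.natDegree ≤ d) 
    (hp : p.natDegree ≤ d) (hq : q.natDegree ≤ d) (hq0 : q.coeff d ≠ 0)
    (hinf : q2.eval (p.coeff d / q.coeff d) ≠ 0) :
    (GG d p q p2 q2).natDegree = d * d + 1 := by
  apply natDegree_eq_of_le_of_coeff_ne_zero (GG_natDegree_le d p q p2 q2 hp hq)
  rw [GG_coeff d p q p2 q2 hq2 hp hq hq0]
  exact neg_ne_zero.2 (mul_ne_zero (pow_ne_zero _ hq0) hinf)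

theorem GG_eval (d : ℕ) (p q p2 q2 : ℂ[X]) (hp2 : p2.natDegree ≤ d) (hq2 : q2.natDegree ≤ d) 
    (z : ℂ) (hq : q.eval z ≠ 0) :
    (GG d p q p2 q2).eval z = (q.eval z) ^ d * 
      (p2.eval (p.eval z / q.eval z) - z * q2.eval (p.eval z / q.eval z)) := by
  rw [GG, eval_sub, eval_mul, eval_X, hc_eval d p2 p q hp2 z hq, hc_eval d q2 p q hq2 z hq]
  ring

theorem rho_hasDerivAt (p q : ℂ[X]) (z : ℂ) (hq : q.eval z ≠ 0) :
    HasDerivAt (fun x => p.eval x / q.eval x) (rho p q z) z := by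
  have := (p.hasDerivAt z).div (q.hasDerivAt z) hq
  exact this.congr_deriv (by rw [rho, Wr, eval_sub, eval_mul, eval_mul])

theorem GG_deriv (d : ℕ) (p q p2 q2 : ℂ[X]) (hp2 : p2.natDegree ≤ d) (hq2 : q2.natDegree ≤ d) 
    (z : ℂ) (hq : q.eval z ≠ 0) (hq2w : q2.eval (p.eval z / q.eval z) ≠ 0)
    (hz : p2.eval (p.eval z / q.eval z) = z * q2.eval (p.eval z / q.eval z)) :
    (derivative (GG d p q p2 q2)).eval z = (q.eval z) ^ d * q2.eval (p.eval z / q.eval z) *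
      (rho p2 q2 (p.eval z / q.eval z) * rho p q z - 1) := by
  have hr := rho_hasDerivAt p q z hq
  set w := p.eval z / q.eval z with hw
  have h2 : HasDerivAt (fun x => p2.eval (p.eval x / q.eval x)) ((derivative p2).eval w * rho p q z) z :=
    HasDerivAt.comp z (h₂ := fun y => eval y p2) (p2.hasDerivAt w) hr
  have h3 : HasDerivAt (fun x => q2.eval (p.eval x / q.eval x)) ((derivative q2).eval w * rho p q z) z :=
    HasDerivAt.comp z (h₂ := fun y => eval y q2) (q2.hasDerivAt w) hr
  have h4 := ((q.hasDerivAt z).pow d).mul (h2.sub ((hasDerivAt_id z).mul h3))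
  have h5 : HasDerivAt (fun x => (GG d p q p2 q2).eval x) ((derivative (GG d p q p2 q2)).eval z) z :=
    (GG d p q p2 q2).hasDerivAt z
  have hev : ∀ᶠ x in nhds z, q.eval x ≠ 0 := q.continuous.continuousAt.eventually_ne hq
  have h6 := h5.congr_of_eventuallyEq (f₁ := _) (hev.mono fun x hx => 
    (GG_eval d p q p2 q2 hp2 hq2 x hx).symm)
  have h7 := h6.unique h4
  rw [h7]
  simp only [Pi.sub_apply, Pi.mul_apply, id, Pi.pow_apply, ← hw, hz]
  have h8 : rho p2 q2 w = ((derivative p2).eval w - z * (derivative q2).eval w) / q2.eval w := by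
    rw [rho, Wr, eval_sub, eval_mul, eval_mul, hz]
    field_simp
  rw [h8]
  field_simp
  ring

theorem GG_root (d : ℕ) (p q p2 q2 : ℂ[X]) (hp2 : p2.natDegree ≤ d) (hq2 : q2.natDegree ≤ d) 
    (hcop : IsCoprime p2 q2) (z : ℂ) (hq : q.eval z ≠ 0) (h : (GG d p q p2 q2).eval z = 0) :
    q2.eval (p.eval z / q.eval z) ≠ 0 ∧ 
    p2.eval (p.eval z / q.eval z) = z * q2.eval (p.eval z / q.eval z) := by
  rw [GG_eval d p q p2 q2 hp2 hq2 z hq] at h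
  have h1 := (mul_eq_zero.1 h).resolve_left (pow_ne_zero _ hq)
  rw [sub_eq_zero] at h1
  refine ⟨fun h2 => cop_ne hcop _ h2 ?_, h1⟩
  rw [h1, h2, mul_zero]

/-- roots of the second iterate equation -/
theorem GG_cj_root (d : ℕ) (p q : ℂ[X]) (hd : 2 ≤ d) (hcop : IsCoprime p q) (hqd : q.natDegree = d)
    (hpd : p.natDegree ≤ d) (hinf : (cj q).eval (p.coeff d / q.coeff d) ≠ 0) (z : ℂ) :
    (GG d p q (cj p) (cj q)).eval z = 0 ↔ 
      (q.eval z ≠ 0 ∧ q.eval (fm p q z) ≠ 0 ∧ fm p q (fm p q z) = z) := by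
  have hq0 : q.coeff d ≠ 0 := by
    rw [← hqd]; exact leadingCoeff_ne_zero.2 (by rintro rfl; simp at hqd; omega)
  have hp2 : (cj p).natDegree ≤ d := by rwa [cj_natDegree]
  have hq2 : (cj q).natDegree ≤ d := by rw [cj_natDegree, hqd]
  constructor
  · intro h
    have hqz : q.eval z ≠ 0 := by
      intro hqz
      rw [GG, eval_sub, eval_mul, hc_eval_zero _ _ _ _ _ hqz, hc_eval_zero _ _ _ _ _ hqz, eval_X,
        ← mul_assoc, ← sub_mul] at h
      have h1 := (mul_eq_zero.1 h).resolve_right (pow_ne_zero _ (cop_ne hcop z hqz))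
      apply hinf
      rw [cj_eval]
      simp only [cj, coeff_map] at h1
      have h2 : (starRingEnd ℂ) (p.coeff d / q.coeff d) = z := by
        rw [map_div₀, div_eq_iff (by simpa using hq0)]
        exact sub_eq_zero.1 h1
      rw [h2, hqz, map_zero]
    obtain ⟨h1, h2⟩ := GG_root d p q _ _ hp2 hq2 (cj_coprime hcop) z hqz h
    rw [cj_eval] at h1 
    refine ⟨hqz, by simpa [fm] using h1, ?_⟩
    rw [cj_eval, cj_eval] at h2
    rw [fm, map_div₀]
    exact (div_eq_iff h1).2 h2
  · rintro ⟨h1, h2, h3⟩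
    rw [GG_eval d p q _ _ hp2 hq2 z h1, cj_eval, cj_eval]
    rw [fm, map_div₀, div_eq_iff (by simpa using h2)] at h3
    have : (starRingEnd ℂ) (p.eval z / q.eval z) = fm p q z := rfl
    rw [this, h3]
    simp

theorem fixed_iff (p q : ℂ[X]) (z : ℂ) : z ∈ fixedPts p q ↔ (q.eval z ≠ 0 ∧ fm p q z = z) := by
  simp only [fixedPts, Set.mem_ofPred_eq, fm]
  refine and_congr_right fun h => ?_
  rw [← (starRingEnd ℂ).injective.eq_iff (a := (starRingEnd ℂ) _), Complex.conj_conj, div_eq_iff h]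

theorem lagr_sum (G N : ℂ[X]) (hG : G.Separable) (hN : N.natDegree + 1 < G.natDegree) :
    ∑ z ∈ G.roots.toFinset, N.eval z / (derivative G).eval z = 0 := by
  classical
  have hsp : G.Splits := IsAlgClosed.splits G
  have hG0 : G ≠ 0 := hG.ne_zero
  have hnd := nodup_roots hG
  set Z := G.roots.toFinset with hZ
  have hcard : Z.card = G.natDegree := by
    rw [hZ, Multiset.toFinset_card_of_nodup hnd, ← hsp.natDegree_eq_card_roots]
  have hGn : G = C G.leadingCoeff * Lagrange.nodal Z id := by
    conv_lhs => rw [hsp.eq_prod_roots]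
    congr 1
    rw [Lagrange.nodal, hZ, Finset.prod_multiset_map_count, ← Finset.prod_congr rfl]
    intro z hz
    rw [Multiset.count_eq_one_of_mem hnd (by simpa using hz), pow_one]
    rfl
  have hlc : G.leadingCoeff ≠ 0 := leadingCoeff_ne_zero.2 hG0
  have h1 := Lagrange.coeff_eq_sum (s := Z) (v := (id : ℂ → ℂ)) (Set.injOn_id _) (P := N) (by
    rw [hcard]
    exact lt_of_le_of_lt degree_le_natDegree (by exact_mod_cast (by omega)))
  rw [coeff_eq_zero_of_natDegree_lt (by omega)] at h1
  have h2 : ∀ z ∈ Z, N.eval z / (derivative G).eval z = 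
      (G.leadingCoeff)⁻¹ * (N.eval (id z) / ∏ j ∈ Z.erase z, (id z - id j)) := by
    intro z hz
    have h3 := Lagrange.eval_nodal_derivative_eval_node_eq (v := (id : ℂ → ℂ)) hz
    rw [Lagrange.eval_nodal] at h3
    rw [← h3]
    conv_lhs => rw [hGn]
    rw [derivative_C_mul, eval_mul, eval_C]
    simp only [id]
    rw [div_eq_mul_inv, mul_inv]
    ring
  rw [Finset.sum_congr rfl h2, ← Finset.mul_sum, ← h1, mul_zero]

theorem indep_q (q p1 : ℂ[X]) (hcop : IsCoprime q p1) (m : ℕ) : ∀ (e : ℕ → ℂ[X]),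
    (∀ b < m, (e b).natDegree < q.natDegree) → 
    (∑ b ∈ Finset.range m, q ^ b * p1 ^ (m - 1 - b) * e b = 0) → ∀ b < m, e b = 0 := by
  induction m with
  | zero => intro e _ _ b hb; omega
  | succ m ih =>
    intro e hdeg hsum b hb
    rw [Finset.sum_range_succ'] at hsum
    have hq0 : q ≠ 0 := by
      rintro rfl
      have := hdeg b hb
      simp at this
    have hs : ∑ b ∈ Finset.range m, q ^ (b + 1) * p1 ^ (m + 1 - 1 - (b + 1)) * e (b + 1) =
        q * ∑ b ∈ Finset.range m, q ^ b * p1 ^ (m - 1 - b) * e (b + 1) := by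
      rw [Finset.mul_sum]
      refine Finset.sum_congr rfl fun k hk => ?_
      rw [show m + 1 - 1 - (k + 1) = m - 1 - k by omega]
      ring
    rw [hs] at hsum
    have he0 : e 0 = 0 := by
      have h1 : q ∣ p1 ^ m * e 0 := by
        refine ⟨-∑ b ∈ Finset.range m, q ^ b * p1 ^ (m - 1 - b) * e (b + 1), ?_⟩
        simp at hsum
        linear_combination hsum
      have h2 : q ∣ e 0 := (hcop.pow_right).dvd_of_dvd_mul_left h1
      by_contra h0
      have := natDegree_le_of_dvd h2 h0
      have := hdeg 0 (by omega)
      omega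
    rw [he0, mul_zero, add_zero] at hsum
    have h3 := ih (fun b => e (b + 1)) (fun b hb => hdeg (b + 1) (by omega)) 
      ((mul_eq_zero.1 hsum).resolve_left hq0)
    rcases b with _ | b
    · exact he0
    · exact h3 b (by omega)

theorem indep_X (a : ℂ) (N : ℕ) (c : Fin N → ℂ) 
    (h : ∑ j : Fin N, C (c j) * (X - C a) ^ (N - 1 - (j : ℕ)) = 0) : ∀ j, c j = 0 := by
  intro j
  have h1 := congrArg (fun P => (P.comp (X + C a)).coeff (N - 1 - (j : ℕ))) h
  simp only [Polynomial.sum_comp, mul_comp, C_comp, pow_comp, sub_comp, X_comp, add_sub_cancel_right,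
    finsetSum_coeff, coeff_C_mul_X_pow, zero_comp, coeff_zero] at h1
  rw [Finset.sum_eq_single j] at h1
  · simpa using h1
  · intro i _ hij
    have : (i : ℕ) ≠ j := fun h => hij (Fin.ext h)
    rw [if_neg]
    have := i.2
    have := j.2
    omega
  · simp

noncomputable def JJ (p q : ℂ[X]) (z : ℂ) : ℂ :=
  q.eval z * (starRingEnd ℂ) (q.eval (fm p q z)) * 
    ((starRingEnd ℂ) (rho p q (fm p q z)) * rho p q z - 1)

noncomputable def wtt (d : ℕ) (p q : ℂ[X]) (a z : ℂ) : ℂ :=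
  (z - a) ^ (d - 1) * ((starRingEnd ℂ) (fm p q z - a)) ^ (d - 1) / JJ p q z

noncomputable def UU (p q : ℂ[X]) (a : ℂ) (α β : ℕ) (z : ℂ) : ℂ :=
  ((z - a)⁻¹) ^ α * (((starRingEnd ℂ) (fm p q z - a))⁻¹) ^ β

theorem JJ_conj (p q : ℂ[X]) (z : ℂ) (h : fm p q (fm p q z) = z) : 
    JJ p q (fm p q z) = (starRingEnd ℂ) (JJ p q z) := by
  simp only [JJ, h, map_mul, map_sub, Complex.conj_conj, map_one]
  ring

theorem wtt_conj (d : ℕ) (p q : ℂ[X]) (a z : ℂ) (h : fm p q (fm p q z) = z) : 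
    wtt d p q a (fm p q z) = (starRingEnd ℂ) (wtt d p q a z) := by
  simp only [wtt, h, map_mul, map_div₀, map_pow, Complex.conj_conj, JJ_conj p q z h]
  ring

theorem UU_conj (p q : ℂ[X]) (a z : ℂ) (α β : ℕ) (h : fm p q (fm p q z) = z) : 
    UU p q a α β (fm p q z) = (starRingEnd ℂ) (UU p q a β α z) := by
  simp only [UU, h, map_mul, map_inv₀, map_pow, Complex.conj_conj]
  ring

theorem G_deriv_J (d : ℕ) (p q : ℂ[X]) (hd : 2 ≤ d) (hcop : IsCoprime p q) (hqd : q.natDegree = d)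
    (hpd : p.natDegree ≤ d) (hinf : (cj q).eval (p.coeff d / q.coeff d) ≠ 0) (z : ℂ)
    (hz : (GG d p q (cj p) (cj q)).eval z = 0) :
    (derivative (GG d p q (cj p) (cj q))).eval z = q.eval z ^ (d - 1) * JJ p q z := by
  obtain ⟨h1, h2, h3⟩ := (GG_cj_root d p q hd hcop hqd hpd hinf z).1 hz
  have hp2 : (cj p).natDegree ≤ d := by rwa [cj_natDegree]
  have hq2 : (cj q).natDegree ≤ d := by rw [cj_natDegree, hqd]
  obtain ⟨h4, h5⟩ := GG_root d p q _ _ hp2 hq2 (cj_coprime hcop) z h1 hz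
  rw [GG_deriv d p q _ _ hp2 hq2 z h1 h4 h5, cj_rho, cj_eval, JJ]
  have : (starRingEnd ℂ) (p.eval z / q.eval z) = fm p q z := rfl
  rw [this]
  have : q.eval z ^ d = q.eval z ^ (d - 1) * q.eval z := by
    rw [← pow_succ]; congr 1; omega
  rw [this]
  ring

theorem iso_sum1 (d : ℕ) (p q : ℂ[X]) (hd : 2 ≤ d) (hcop : IsCoprime p q) (hqd : q.natDegree = d)
    (hpd : p.natDegree ≤ d) (hinf : (cj q).eval (p.coeff d / q.coeff d) ≠ 0) 
    (hsep : (GG d p q (cj p) (cj q)).Separable) (a : ℂ) (ha : a ∈ fixedPts p q)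
    (α β : ℕ) (hβ : β ≤ d - 1) (hαβ : α + β + 4 ≤ 2 * d) :
    ∑ z ∈ (GG d p q (cj p) (cj q)).roots.toFinset.erase a, UU p q a α β z * wtt d p q a z = 0 := by
  set G := GG d p q (cj p) (cj q) with hG
  have hq0 : q.coeff d ≠ 0 := by
    rw [← hqd]; exact leadingCoeff_ne_zero.2 (by rintro rfl; simp at hqd; omega)
  have hGd : G.natDegree = d * d + 1 := 
    GG_natDegree d p q _ _ (by rw [cj_natDegree, hqd]) hpd hqd.le hq0 hinf
  obtain ⟨p1, hp1⟩ : (X - C a) ∣ (p - C ((starRingEnd ℂ) a) * q) := by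
    rw [dvd_iff_isRoot]
    simp [ha.2]
  have hp1d : p1.natDegree ≤ d - 1 := by
    by_cases h0 : p1 = 0
    · simp [h0]
    have h1 := congrArg natDegree hp1
    rw [natDegree_mul (X_sub_C_ne_zero a) h0, natDegree_X_sub_C] at h1
    have : (p - C ((starRingEnd ℂ) a) * q).natDegree ≤ d := 
      (natDegree_sub_le _ _).trans (max_le hpd ((natDegree_C_mul_le _ _).trans hqd.le))
    omega
  set N : ℂ[X] := (X - C a) ^ (2 * d - 2 - α - β) * p1 ^ (d - 1 - β) * q ^ β with hN
  have hNd : N.natDegree ≤ d * d - 1 := by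
    have e1 : ((X - C a : ℂ[X]) ^ (2 * d - 2 - α - β)).natDegree ≤ (2 * d - 2 - α - β) * 1 :=
      natDegree_pow_le_of_le _ (natDegree_X_sub_C a).le
    have e2 : (p1 ^ (d - 1 - β)).natDegree ≤ (d - 1 - β) * (d - 1) := natDegree_pow_le_of_le _ hp1d
    have e3 : (q ^ β).natDegree ≤ β * d := natDegree_pow_le_of_le _ hqd.le
    refine (natDegree_mul_le_of_le (natDegree_mul_le_of_le e1 e2) e3).trans ?_
    obtain ⟨k, rfl⟩ : ∃ k, d = k + β + 1 := ⟨d - 1 - β, by omega⟩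
    obtain ⟨j, hj⟩ : ∃ j, 2 * (k + β + 1) - 2 - α - β = j := ⟨_, rfl⟩
    rw [hj]
    have hj' : j + α + β + 2 = 2 * (k + β + 1) := by omega
    rw [show k + β + 1 - 1 - β = k by omega, show k + β + 1 - 1 = k + β by omega]
    have : 1 ≤ (k+β+1) * (k+β+1) := Nat.one_le_iff_ne_zero.2 (by positivity)
    zify [this]
    zify at hj'
    nlinarith
  have hs := lagr_sum G N hsep (by
    rw [hGd]
    have : 1 ≤ d * d := Nat.one_le_iff_ne_zero.2 (by positivity)
    omega)
  have haG : a ∈ G.roots.toFinset := by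
    rw [Multiset.mem_toFinset, mem_roots hsep.ne_zero, IsRoot.def,
      GG_cj_root d p q hd hcop hqd hpd hinf]
    obtain ⟨h1, h2⟩ := (fixed_iff p q a).1 ha
    rw [h2]
    exact ⟨h1, h1, h2⟩
  rw [← Finset.add_sum_erase _ _ haG] at hs
  have hNa : N.eval a = 0 := by
    rw [hN]
    simp
    left; left; omega
  rw [hNa, zero_div, zero_add] at hs
  rw [← hs]
  refine Finset.sum_congr rfl fun z hz => ?_
  rw [Finset.mem_erase, Multiset.mem_toFinset, mem_roots hsep.ne_zero, IsRoot.def] at hz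
  obtain ⟨hza, hz⟩ := hz
  rw [G_deriv_J d p q hd hcop hqd hpd hinf z hz]
  obtain ⟨h1, h2, h3⟩ := (GG_cj_root d p q hd hcop hqd hpd hinf z).1 hz
  have hza' : z - a ≠ 0 := sub_ne_zero.2 hza
  have hw : (starRingEnd ℂ) (fm p q z - a) = (z - a) * p1.eval z / q.eval z := by
    have h4 := congrArg (eval z) hp1
    simp only [eval_sub, eval_mul, eval_C, eval_X] at h4
    rw [← h4, map_sub, fm, Complex.conj_conj]
    field_simp
  have hfa : fm p q z - a ≠ 0 := by
    intro h
    have : fm p q z = a := sub_eq_zero.1 h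
    rw [this, ((fixed_iff p q a).1 ha).2] at h3
    exact hza h3.symm
  have hp1z : p1.eval z ≠ 0 := by
    intro h
    rw [h, mul_zero, zero_div] at hw
    exact hfa ((map_eq_zero (starRingEnd ℂ)).1 hw)
  have hJ : JJ p q z ≠ 0 := by
    intro h
    have h5 := G_deriv_J d p q hd hcop hqd hpd hinf z hz
    rw [h, mul_zero] at h5
    exact cop_ne hsep z h5 (hz)
  rw [UU, wtt, hw, hN]
  simp only [eval_mul, eval_pow, eval_sub, eval_X, eval_C]
  generalize hA : z - a = A at *
  generalize p1.eval z = P at *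
  generalize q.eval z = Q at *
  generalize JJ p q z = J at *
  obtain ⟨k, rfl⟩ : ∃ k, d = k + β + 1 := ⟨d - 1 - β, by omega⟩
  obtain ⟨j, hj⟩ : ∃ j, 2 * (k + β + 1) - 2 - α - β = j := ⟨_, rfl⟩
  have hj' : j + α + β = (k + β) + (k + β) := by omega
  rw [hj, show k + β + 1 - 1 - β = k by omega, show k + β + 1 - 1 = k + β by omega]
  have e : A ^ j * A ^ α * A ^ β = A ^ (k + β) * A ^ (k + β) := by
    rw [← pow_add, ← pow_add, ← pow_add, hj']
  simp only [inv_pow, div_pow, mul_pow]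
  field_simp
  rw [pow_add P]
  linear_combination (-P^k * P^β) * e

theorem iso_sum (d : ℕ) (p q : ℂ[X]) (hd : 2 ≤ d) (hcop : IsCoprime p q) (hqd : q.natDegree = d)
    (hpd : p.natDegree ≤ d) (hinf : (cj q).eval (p.coeff d / q.coeff d) ≠ 0) 
    (hsep : (GG d p q (cj p) (cj q)).Separable) (a : ℂ) (ha : a ∈ fixedPts p q)
    (α β : ℕ) (hαβ : α + β + 4 ≤ 2 * d) :
    ∑ z ∈ (GG d p q (cj p) (cj q)).roots.toFinset.erase a, UU p q a α β z * wtt d p q a z = 0 := by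
  by_cases hβ : β ≤ d - 1
  · exact iso_sum1 d p q hd hcop hqd hpd hinf hsep a ha α β hβ hαβ
  have h1 := iso_sum1 d p q hd hcop hqd hpd hinf hsep a ha β α (by omega) (by omega)
  have h2 := congrArg (starRingEnd ℂ) h1
  rw [map_sum, map_zero] at h2
  rw [← h2]
  set Z := (GG d p q (cj p) (cj q)).roots.toFinset with hZ
  have hm : ∀ z, z ∈ Z.erase a ↔ z ≠ a ∧ q.eval z ≠ 0 ∧ q.eval (fm p q z) ≠ 0 ∧ fm p q (fm p q z) = z := by
    intro z
    rw [Finset.mem_erase, hZ, Multiset.mem_toFinset, mem_roots hsep.ne_zero, IsRoot.def,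
      GG_cj_root d p q hd hcop hqd hpd hinf]
  have hfa := ((fixed_iff p q a).1 ha).2
  have hmm : ∀ z ∈ Z.erase a, fm p q z ∈ Z.erase a := by
    intro z hz
    rw [hm] at hz ⊢
    obtain ⟨h1, h2, h3, h4⟩ := hz
    refine ⟨?_, h3, by rwa [h4], by rw [h4]⟩
    intro h5
    rw [h5, hfa] at h4
    exact h1 h4.symm
  refine Finset.sum_bij' (fun z _ => fm p q z) (fun z _ => fm p q z) hmm hmm ?_ ?_ ?_
  · intro z hz; exact ((hm z).1 hz).2.2.2
  · intro z hz; exact ((hm z).1 hz).2.2.2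
  · intro z hz
    have := ((hm z).1 hz).2.2.2
    rw [map_mul, ← wtt_conj d p q a _ (by rw [this]), ← UU_conj _ _ _ _ _ _ (by rw [this]), this]

theorem no_neutral (d : ℕ) (p q : ℂ[X]) (hd : 2 ≤ d) (hcop : IsCoprime p q) (hqd : q.natDegree = d)
    (hpd : p.natDegree ≤ d) (hinf : (cj q).eval (p.coeff d / q.coeff d) ≠ 0) 
    (hsep : (GG d p q (cj p) (cj q)).Separable) (z : ℂ) (hz : (GG d p q (cj p) (cj q)).eval z = 0) :
    JJ p q z ≠ 0 := by
  intro h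
  have h5 := G_deriv_J d p q hd hcop hqd hpd hinf z hz
  rw [h, mul_zero] at h5
  exact cop_ne hsep z h5 hz

theorem fixed_root (d : ℕ) (p q : ℂ[X]) (hd : 2 ≤ d) (hcop : IsCoprime p q) (hqd : q.natDegree = d)
    (hpd : p.natDegree ≤ d) (hinf : (cj q).eval (p.coeff d / q.coeff d) ≠ 0) 
    (a : ℂ) (ha : a ∈ fixedPts p q) : (GG d p q (cj p) (cj q)).eval a = 0 := by
  rw [GG_cj_root d p q hd hcop hqd hpd hinf]
  obtain ⟨h1, h2⟩ := (fixed_iff p q a).1 ha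
  rw [h2]
  exact ⟨h1, h1, h2⟩

theorem JJ_fixed (p q : ℂ[X]) (z : ℂ) (hz : fm p q z = z) :
    JJ p q z = ((‖q.eval z‖ ^ 2 * (‖rho p q z‖ ^ 2 - 1) : ℝ) : ℂ) := by
  rw [JJ, hz, Complex.mul_conj, Complex.conj_mul', Complex.normSq_eq_norm_sq]
  push_cast
  ring

theorem fixed_norm_ne_one (d : ℕ) (p q : ℂ[X]) (hd : 2 ≤ d) (hcop : IsCoprime p q) (hqd : q.natDegree = d)
    (hpd : p.natDegree ≤ d) (hinf : (cj q).eval (p.coeff d / q.coeff d) ≠ 0) 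
    (hsep : (GG d p q (cj p) (cj q)).Separable) 
    (a : ℂ) (ha : a ∈ fixedPts p q) : ‖rho p q a‖ ≠ 1 := by
  intro h
  apply no_neutral d p q hd hcop hqd hpd hinf hsep a (fixed_root d p q hd hcop hqd hpd hinf a ha)
  rw [JJ_fixed p q a ((fixed_iff p q a).1 ha).2, h]
  simp

theorem wtt_fixed (d : ℕ) (p q : ℂ[X]) (a z : ℂ) (hz : fm p q z = z) :
    wtt d p q a z = (((‖z - a‖ ^ 2) ^ (d - 1) / (‖q.eval z‖ ^ 2 * (‖rho p q z‖ ^ 2 - 1)) : ℝ) : ℂ) := by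
  rw [wtt, JJ_fixed p q z hz, hz, ← mul_pow, Complex.mul_conj, Complex.normSq_eq_norm_sq]
  push_cast
  rfl

theorem indep_main (d m : ℕ) (hm : m = d - 1) (p q : ℂ[X]) (hd : 2 ≤ d) (hcop : IsCoprime p q) (hqd : q.natDegree = d)
    (hpd : p.natDegree ≤ d) (a : ℂ) (ha : a ∈ fixedPts p q) (Z : Finset ℂ) (hZc : Z.card = d * d)
    (hZ : ∀ z ∈ Z, z ≠ a ∧ q.eval z ≠ 0 ∧ fm p q z ≠ a)
    (c : (Σ b : Fin m, Fin (m - b)) → ℂ)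
    (hc : ∀ z ∈ Z, ∑ k, c k * UU p q a k.2 k.1 z = 0) : c = 0 := by
  obtain ⟨p1, hp1⟩ : (X - C a) ∣ (p - C ((starRingEnd ℂ) a) * q) := by
    rw [dvd_iff_isRoot]
    simp [ha.2]
  have hp1d : p1.natDegree ≤ d - 1 := by
    by_cases h0 : p1 = 0
    · simp [h0]
    have h1 := congrArg natDegree hp1
    rw [natDegree_mul (X_sub_C_ne_zero a) h0, natDegree_X_sub_C] at h1
    have : (p - C ((starRingEnd ℂ) a) * q).natDegree ≤ d := 
      (natDegree_sub_le _ _).trans (max_le hpd ((natDegree_C_mul_le _ _).trans hqd.le))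
    omega
  have hcop1 : IsCoprime q p1 := by
    have h1 : IsCoprime (p - C ((starRingEnd ℂ) a) * q) q := by
      have := (IsCoprime.add_mul_right_left_iff (x := p) (y := q) (z := - C ((starRingEnd ℂ) a))).2 hcop
      rwa [neg_mul, ← sub_eq_add_neg] at this
    rw [hp1] at h1
    exact (IsCoprime.of_mul_left_right h1).symm
  let e : ℕ → ℂ[X] := fun b => if hb : b < m then 
    ∑ j : Fin (m - b), C (c ⟨⟨b, hb⟩, j⟩) * (X - C a) ^ (m - b - 1 - (j : ℕ)) else 0
  have hed : ∀ b, (e b).natDegree ≤ m - 1 - b := by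
    intro b
    by_cases hb : b < m
    · simp only [e, dif_pos hb]
      refine natDegree_sum_le_of_forall_le _ _ fun j _ => ?_
      refine (natDegree_C_mul_le _ _).trans ((natDegree_pow_le_of_le _ (natDegree_X_sub_C a).le).trans ?_)
      omega
    · simp [e, hb]
  set P : ℂ[X] := ∑ b ∈ Finset.range m, q ^ b * p1 ^ (m - 1 - b) * e b with hP
  have hPd : P.natDegree < d * d := by
    have : P.natDegree ≤ (m - 1) * d := by
      refine natDegree_sum_le_of_forall_le _ _ fun b hb => ?_
      have hb' : b < m := by simpa using hb
      have e2 : (p1 ^ (m - 1 - b)).natDegree ≤ (m - 1 - b) * (d - 1) := natDegree_pow_le_of_le _ hp1d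
      have e3 : (q ^ b).natDegree ≤ b * d := natDegree_pow_le_of_le _ hqd.le
      refine (natDegree_mul_le_of_le (natDegree_mul_le_of_le e3 e2) (hed b)).trans ?_
      obtain ⟨k, hk⟩ : ∃ k, m - 1 - b = k := ⟨_, rfl⟩
      rw [hk, show m - 1 = k + b by omega]
      obtain ⟨d', rfl⟩ : ∃ d', d = d' + 1 := ⟨d - 1, by omega⟩
      rw [show d' + 1 - 1 = d' by omega]
      nlinarith
    refine lt_of_le_of_lt this ?_
    exact Nat.mul_lt_mul_of_pos_right (by omega) (by omega)
  have hPz : ∀ z ∈ Z, P.eval z = 0 := by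
    intro z hz
    obtain ⟨h1, h2, h3⟩ := hZ z hz
    have hza' : z - a ≠ 0 := sub_ne_zero.2 h1
    have hw : (starRingEnd ℂ) (fm p q z - a) = (z - a) * p1.eval z / q.eval z := by
      have h4 := congrArg (eval z) hp1
      simp only [eval_sub, eval_mul, eval_C, eval_X] at h4
      rw [← h4, map_sub, fm, Complex.conj_conj]
      field_simp
    have hp1z : p1.eval z ≠ 0 := by
      intro h
      rw [h, mul_zero, zero_div] at hw
      exact sub_ne_zero.2 h3 ((map_eq_zero (starRingEnd ℂ)).1 hw)
    have h5 := congrArg (fun x => (z - a) ^ (m - 1) * p1.eval z ^ (m - 1) * x) (hc z hz)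
    simp only [mul_zero] at h5
    rw [← h5, hP, eval_finsetSum, ← Fin.sum_univ_eq_sum_range (fun b => eval z (q ^ b * p1 ^ (m - 1 - b) * e b)), 
      Fintype.sum_sigma, Finset.mul_sum]
    refine Finset.sum_congr rfl fun b _ => ?_
    simp only [e, dif_pos b.2, eval_mul, eval_finsetSum, Fin.eta, Finset.mul_sum, eval_pow, eval_sub, eval_X, eval_C]
    refine Finset.sum_congr rfl fun j _ => ?_
    rw [UU, hw]
    have hb := b.2
    have hj := j.2
    obtain ⟨k, hk⟩ : ∃ k, m - b - 1 - (j : ℕ) = k := ⟨_, rfl⟩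
    rw [hk, show m - 1 - (b : ℕ) = k + j by omega, show m - 1 = k + j + b by omega]
    generalize (j : ℕ) = j'
    generalize (b : ℕ) = b'
    simp only [inv_pow, div_pow, mul_pow]
    field_simp
    ring
  have hP0 : P = 0 := by
    apply eq_zero_of_natDegree_lt_card_of_eval_eq_zero' P Z hPz
    rw [hZc]; exact hPd
  have he := indep_q q p1 hcop1 m e (fun b hb => lt_of_le_of_lt (hed b) (by omega)) hP0
  funext ⟨b, j⟩
  have h6 := he b b.2
  rw [show e b = ∑ j : Fin (m - b), C (c ⟨b, j⟩) * (X - C a) ^ (m - b - 1 - (j : ℕ)) from dif_pos b.2] at h6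
  exact indep_X a (m - b) (fun j => c ⟨b, j⟩) h6 j

theorem card_kappa (d : ℕ) (hd : 2 ≤ d) : 
    2 * Fintype.card (Σ b : Fin (d - 1), Fin (d - 1 - b)) + d = d * d := by
  rw [Fintype.card_sigma]
  simp only [Fintype.card_fin]
  rw [Fin.sum_univ_eq_sum_range (fun b => d - 1 - b)]
  obtain ⟨m, rfl⟩ : ∃ m, d = m + 1 := ⟨d - 1, by omega⟩
  rw [show m + 1 - 1 = m by omega]
  clear hd
  have : ∑ i ∈ Finset.range m, (m - i) = ∑ i ∈ Finset.range m, (i + 1) := by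
    rw [← Finset.sum_range_reflect (fun i => i + 1)]
    refine Finset.sum_congr rfl fun i hi => ?_
    simp at hi; omega
  rw [this]
  induction m with
  | zero => simp
  | succ k ih => 
    rw [Finset.sum_range_succ]
    have := ih ?_
    · nlinarith
    · rw [← Finset.sum_range_reflect (fun i => i + 1)]
      refine Finset.sum_congr rfl fun i hi => ?_
      simp at hi; omega

theorem partA (d : ℕ) (p q : ℂ[X]) (hd : 2 ≤ d) (hcop : IsCoprime p q) (hqd : q.natDegree = d)
    (hpd : p.natDegree ≤ d) (hinf : (cj q).eval (p.coeff d / q.coeff d) ≠ 0) 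
    (hsep : (GG d p q (cj p) (cj q)).Separable) (a : ℂ) (ha : a ∈ fixedPts p q)
    (rep att : Finset ℂ) (hrep : ∀ z, z ∈ rep ↔ z ∈ fixedPts p q ∧ z ≠ a ∧ 1 < ‖rho p q z‖)
    (hatt : ∀ z, z ∈ att ↔ z ∈ fixedPts p q ∧ z ≠ a ∧ ‖rho p q z‖ < 1) :
    rep.card ≤ att.card + d := by
  classical
  have hG0 := hsep.ne_zero
  set G := GG d p q (cj p) (cj q) with hG
  have hq0 : q.coeff d ≠ 0 := by
    rw [← hqd]; exact leadingCoeff_ne_zero.2 (by rintro rfl; simp at hqd; omega)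
  have hGd : G.natDegree = d * d + 1 := 
    GG_natDegree d p q _ _ (by rw [cj_natDegree, hqd]) hpd hqd.le hq0 hinf
  have hGc : G.roots.toFinset.card = d * d + 1 := by
    rw [Multiset.toFinset_card_of_nodup (nodup_roots hsep), ← (IsAlgClosed.splits G).natDegree_eq_card_roots, hGd]
  have hr : ∀ z, z ∈ G.roots.toFinset ↔ G.eval z = 0 := by
    intro z
    rw [Multiset.mem_toFinset, mem_roots hG0, IsRoot.def]
  have haG : a ∈ G.roots.toFinset := (hr a).2 (fixed_root d p q hd hcop hqd hpd hinf a ha)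
  set Z := G.roots.toFinset.erase a with hZ
  have hZc : Z.card = d * d := by rw [hZ, Finset.card_erase_of_mem haG, hGc]; rfl
  have hm : ∀ z, z ∈ Z ↔ z ≠ a ∧ q.eval z ≠ 0 ∧ q.eval (fm p q z) ≠ 0 ∧ fm p q (fm p q z) = z := by
    intro z
    rw [hZ, Finset.mem_erase, hr,
      GG_cj_root d p q hd hcop hqd hpd hinf]
  have hfa := ((fixed_iff p q a).1 ha).2
  have hmm : ∀ z ∈ Z, fm p q z ∈ Z := by
    intro z hz
    rw [hm] at hz ⊢
    obtain ⟨h1, h2, h3, h4⟩ := hz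
    refine ⟨?_, h3, by rwa [h4], by rw [h4]⟩
    intro h5
    rw [h5, hfa] at h4
    exact h1 h4.symm
  have hfix : ∀ z ∈ Z, fm p q z = z → z ∈ fixedPts p q ∧ z ≠ a := fun z hz h => 
    ⟨(fixed_iff p q z).2 ⟨((hm z).1 hz).2.1, h⟩, ((hm z).1 hz).1⟩
  have hfix' : ∀ z, z ∈ fixedPts p q → z ≠ a → z ∈ Z ∧ fm p q z = z := by
    intro z h1 h2
    have h3 := (fixed_iff p q z).1 h1
    refine ⟨?_, h3.2⟩
    rw [hm, h3.2]
    exact ⟨h2, h3.1, h3.1, h3.2⟩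
  have hsgn : ∀ z ∈ Z, fm p q z = z → ((0 < (wtt d p q a z).re ↔ 1 < ‖rho p q z‖) ∧ 
      ((wtt d p q a z).re < 0 ↔ ‖rho p q z‖ < 1)) := by
    intro z hz h
    rw [wtt_fixed d p q a z h, Complex.ofReal_re]
    have h1 := (hm z).1 hz
    have h2 : 0 < ‖z - a‖ := norm_pos_iff.2 (sub_ne_zero.2 h1.1)
    have h3 : 0 < ‖q.eval z‖ := norm_pos_iff.2 h1.2.1
    have h4 : 0 ≤ ‖rho p q z‖ := norm_nonneg _
    have h5 : 0 < (‖z - a‖ ^ 2) ^ (d - 1) := by positivity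
    have h6 : 0 < ‖q.eval z‖ ^ 2 := by positivity
    constructor
    · rw [div_pos_iff_of_pos_left h5, mul_pos_iff_of_pos_left h6, sub_pos, one_lt_sq_iff₀ h4]
    · rw [div_neg_iff]
      constructor
      · rintro (h7 | h7)
        · have : ‖rho p q z‖ ^ 2 - 1 < 0 := by
            by_contra h8
            exact absurd h7.2 (not_lt.2 (mul_nonneg h6.le (not_lt.1 h8)))
          nlinarith
        · exact absurd h7.1 (not_lt.2 h5.le)
      · intro h7
        left
        refine ⟨h5, mul_neg_of_pos_of_neg h6 ?_⟩
        nlinarith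
  have key := signature_aux (ι := {z // z ∈ Z}) (κ := (Σ b : Fin (d - 1), Fin (d - 1 - b)))
    (fun z => ⟨fm p q z.1, hmm z.1 z.2⟩) (fun z => Subtype.ext ((hm z.1).1 z.2).2.2.2)
    (fun z => wtt d p q a z.1) (fun z => wtt_conj d p q a z.1 ((hm z.1).1 z.2).2.2.2)
    (by
      intro z h
      have h1 := no_neutral d p q hd hcop hqd hpd hinf hsep z.1 ((hr _).1 (Finset.mem_of_mem_erase z.2))
      have h2 := ((hm _).1 (hmm z.1 z.2)).1
      have h3 := ((hm _).1 z.2).1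
      rw [wtt, div_eq_zero_iff, mul_eq_zero] at h
      rcases h with (h | h) | h
      · exact sub_ne_zero.2 h3 (eq_zero_of_pow_eq_zero h)
      · exact sub_ne_zero.2 h2 ((map_eq_zero (starRingEnd ℂ)).1 (eq_zero_of_pow_eq_zero h))
      · exact h1 h)
    (fun k z => UU p q a k.2 k.1 z.1)
    (by
      intro c hc
      refine indep_main d (d - 1) rfl p q hd hcop hqd hpd a ha Z hZc ?_ c (fun z hz => hc ⟨z, hz⟩)
      intro z hz
      exact ⟨((hm z).1 hz).1, ((hm z).1 hz).2.1, ((hm _).1 (hmm z hz)).1⟩)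
    (by
      intro k l
      have h1 := iso_sum d p q hd hcop hqd hpd hinf hsep a ha (k.2 + l.1) (k.1 + l.2) (by
        have := k.1.2
        have := k.2.2
        have := l.1.2
        have := l.2.2
        omega)
      rw [← hG, ← hZ, ← Finset.sum_coe_sort] at h1
      rw [← h1]
      refine Finset.sum_congr rfl fun z _ => ?_
      rw [UU_conj p q a z.1 _ _ ((hm z.1).1 z.2).2.2.2, Complex.conj_conj]
      congr 1
      simp only [UU]
      rw [pow_add, pow_add]
      ring)
    (Finset.univ.filter fun z => fm p q z.1 = z.1 ∧ (wtt d p q a z.1).re < 0)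
    (Finset.univ.filter fun z => fm p q z.1 = z.1 ∧ 0 < (wtt d p q a z.1).re)
    (by intro i; simp [Subtype.ext_iff])
    (by intro i; simp [Subtype.ext_iff])
  have hc1 : (Finset.univ.filter fun z : {z // z ∈ Z} => fm p q z.1 = z.1 ∧ (wtt d p q a z.1).re < 0).card = att.card := by
    refine Finset.card_bij (fun z _ => z.1) ?_ ?_ ?_
    · intro z hz
      rw [Finset.mem_filter] at hz
      have h1 := hfix z.1 z.2 hz.2.1
      exact (hatt _).2 ⟨h1.1, h1.2, (hsgn z.1 z.2 hz.2.1).2.1 hz.2.2⟩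
    · intro x _ y _ h; exact Subtype.ext h
    · intro z hz
      obtain ⟨h1, h2, h3⟩ := (hatt z).1 hz
      obtain ⟨h4, h5⟩ := hfix' z h1 h2
      exact ⟨⟨z, h4⟩, by rw [Finset.mem_filter]; exact ⟨Finset.mem_univ _, h5, (hsgn z h4 h5).2.2 h3⟩, rfl⟩
  have hc2 : (Finset.univ.filter fun z : {z // z ∈ Z} => fm p q z.1 = z.1 ∧ 0 < (wtt d p q a z.1).re).card = rep.card := by
    refine Finset.card_bij (fun z _ => z.1) ?_ ?_ ?_
    · intro z hz
      rw [Finset.mem_filter] at hz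
      have h1 := hfix z.1 z.2 hz.2.1
      exact (hrep _).2 ⟨h1.1, h1.2, (hsgn z.1 z.2 hz.2.1).1.1 hz.2.2⟩
    · intro x _ y _ h; exact Subtype.ext h
    · intro z hz
      obtain ⟨h1, h2, h3⟩ := (hrep z).1 hz
      obtain ⟨h4, h5⟩ := hfix' z h1 h2
      exact ⟨⟨z, h4⟩, by rw [Finset.mem_filter]; exact ⟨Finset.mem_univ _, h5, (hsgn z h4 h5).1.2 h3⟩, rfl⟩
  rw [hc1, hc2, Fintype.card_coe, hZc] at key
  have := card_kappa d hd
  omega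

theorem fm_continuousAt (p q : ℂ[X]) (z : ℂ) (h : q.eval z ≠ 0) : ContinuousAt (fm p q) z :=
  Complex.continuous_conj.continuousAt.comp (p.continuous.continuousAt.div q.continuous.continuousAt h)

theorem fm_eq_iff (p q : ℂ[X]) (z y : ℂ) (h : q.eval z ≠ 0) : 
    fm p q z = y ↔ p.eval z = (starRingEnd ℂ) y * q.eval z := by
  rw [fm, ← (starRingEnd ℂ).injective.eq_iff (a := (starRingEnd ℂ) _), Complex.conj_conj, div_eq_iff h]

theorem B_cov (p q : ℂ[X]) (hcop : IsCoprime p q) (hdeg : q.natDegree < p.natDegree) (B : Set ℂ)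
    (hBo : IsOpen B) (hBq : ∀ z ∈ B, q.eval z ≠ 0) (hBW : ∀ z ∈ B, (Wr p q).eval z ≠ 0)
    (hBf : ∀ z ∈ B, fm p q z ∈ B) (hBb : ∀ z, q.eval z ≠ 0 → fm p q z ∈ B → z ∈ B)
    (R : ℝ) (hR : ∀ z ∈ B, ‖z‖ ≤ R) :
    IsCoveringMap (fun z : B => (⟨fm p q z.1, hBf z.1 z.2⟩ : B)) := by
  set F : B → B := fun z : B => (⟨fm p q z.1, hBf z.1 z.2⟩ : B) with hF
  have hcont : Continuous F := by
    refine Continuous.subtype_mk ?_ _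
    rw [continuous_iff_continuousAt]
    intro z
    exact (fm_continuousAt p q z.1 (hBq z.1 z.2)).comp continuous_subtype_val.continuousAt
  rw [isCoveringMap_iff_isCoveringMapOn_univ]
  apply IsClosedMap.isCoveringMapOn_of_isLocalHomeomorphOn
  · intro S hS
    apply IsSeqClosed.isClosed
    intro y y0 hy hlim
    choose x hxS hxy using hy
    obtain ⟨z, hz, φ, hφ, hzl⟩ := (isCompact_closedBall (0 : ℂ) R).tendsto_subseq 
      (x := fun n => (x n : ℂ)) (fun n => by simpa using hR _ (x n).2)
    have h1 : Filter.Tendsto (fun n => (y (φ n) : ℂ)) Filter.atTop (nhds y0.1) :=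
      (continuous_subtype_val.tendsto y0).comp (hlim.comp hφ.tendsto_atTop)
    have h2 : ∀ n, p.eval (x (φ n) : ℂ) = (starRingEnd ℂ) (y (φ n) : ℂ) * q.eval (x (φ n) : ℂ) := by
      intro n
      rw [← fm_eq_iff p q _ _ (hBq _ (x (φ n)).2), ← hxy]
    have h3 : p.eval z = (starRingEnd ℂ) y0.1 * q.eval z := by
      have l1 : Filter.Tendsto (fun n => p.eval (x (φ n) : ℂ)) Filter.atTop (nhds (p.eval z)) :=
        (p.continuous.tendsto z).comp hzl
      have l2 : Filter.Tendsto (fun n => (starRingEnd ℂ) (y (φ n) : ℂ) * q.eval (x (φ n) : ℂ)) Filter.atTop 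
          (nhds ((starRingEnd ℂ) y0.1 * q.eval z)) :=
        ((Complex.continuous_conj.tendsto _).comp h1).mul ((q.continuous.tendsto z).comp hzl)
      refine tendsto_nhds_unique l1 (l2.congr fun n => (h2 n).symm)
    have hqz : q.eval z ≠ 0 := by
      intro h
      apply cop_ne hcop z h
      rw [h3, h, mul_zero]
    have hfz : fm p q z = y0.1 := (fm_eq_iff p q z _ hqz).2 h3
    have hzB : z ∈ B := hBb z hqz (by rw [hfz]; exact y0.2)
    refine ⟨⟨z, hzB⟩, ?_, Subtype.ext hfz⟩
    refine hS.isSeqClosed (x := fun n => x (φ n)) (fun n => hxS (φ n)) ?_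
    rw [tendsto_subtype_rng]
    exact hzl
  · intro y _
    have hne : p - C ((starRingEnd ℂ) y.1) * q ≠ 0 := by
      intro h
      have h1 : p = C ((starRingEnd ℂ) y.1) * q := sub_eq_zero.1 h
      have := natDegree_C_mul_le ((starRingEnd ℂ) y.1) q
      rw [← h1] at this
      omega
    have hfin : ({z | (p - C ((starRingEnd ℂ) y.1) * q).eval z = 0}).Finite := by
      refine ((p - C ((starRingEnd ℂ) y.1) * q).roots.toFinset.finite_toSet).subset ?_
      intro z hz
      simp only [Finset.mem_coe, Multiset.mem_toFinset, mem_roots hne, IsRoot.def]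
      exact hz
    refine (hfin.preimage (Subtype.val_injective.injOn (s := Set.univ) |>.mono (Set.subset_univ _))).subset ?_
    intro z hz
    have h1 : fm p q z.1 = y.1 := congrArg Subtype.val hz
    rw [fm_eq_iff p q _ _ (hBq _ z.2)] at h1
    simp [h1]
  · rw [Set.preimage_univ, ← isLocalHomeomorph_iff_isLocalHomeomorphOn_univ]
    have hloc : IsLocalHomeomorphOn (fun x => p.eval x / q.eval x) B := by
      intro z hz
      have hs : HasStrictDerivAt (fun x => p.eval x / q.eval x) (rho p q z) z := by
        have := (p.hasStrictDerivAt z).div (q.hasStrictDerivAt z) (hBq z hz)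
        exact this.congr_deriv (by rw [rho, Wr, eval_sub, eval_mul, eval_mul])
      have hr : rho p q z ≠ 0 := div_ne_zero (hBW z hz) (pow_ne_zero _ (hBq z hz))
      exact ⟨_, (hs.hasStrictFDerivAt_equiv hr).mem_toOpenPartialHomeomorph_source, by simp⟩
    have hconj : IsLocalHomeomorph (fun z : ℂ => (starRingEnd ℂ) z) := 
      Complex.conjLIE.toHomeomorph.isLocalHomeomorph
    have hv : IsLocalHomeomorph (Subtype.val : B → ℂ) := hBo.isOpenEmbedding_subtypeVal.isLocalHomeomorph
    have h1 : IsLocalHomeomorph ((fun x => p.eval x / q.eval x) ∘ (Subtype.val : B → ℂ)) := by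
      rw [isLocalHomeomorph_iff_isLocalHomeomorphOn_univ]
      exact hloc.comp hv.isLocalHomeomorphOn (fun z _ => z.2)
    have h2 := hconj.comp h1
    exact IsLocalHomeomorph.of_comp (g := (Subtype.val : B → ℂ)) (f := F) h2 hv hcont

theorem B_lift (p q : ℂ[X]) (hcop : IsCoprime p q) (hdeg : q.natDegree < p.natDegree) (B : Set ℂ)
    (hBo : IsOpen B) (hBq : ∀ z ∈ B, q.eval z ≠ 0) (hBW : ∀ z ∈ B, (Wr p q).eval z ≠ 0)
    (hBf : ∀ z ∈ B, fm p q z ∈ B) (hBb : ∀ z, q.eval z ≠ 0 → fm p q z ∈ B → z ∈ B)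
    (R : ℝ) (hR : ∀ z ∈ B, ‖z‖ ≤ R) (a : ℂ) (s : ℝ) (hs : 0 < s) (hsB : Metric.ball a s ⊆ B) 
    (ha : fm p q a = a) (n : ℕ) :
    ∃ G : C(Metric.ball a s, B), (G ⟨a, Metric.mem_ball_self hs⟩ : ℂ) = a ∧ 
      ∀ x, (fm p q)^[n] (G x) = x := by
  have hcov := B_cov p q hcop hdeg B hBo hBq hBW hBf hBb R hR
  have : ContractibleSpace (Metric.ball a s) := (convex_ball a s).contractibleSpace (by simpa)
  have : LocallyPathConnectedSpace (Metric.ball a s) := Metric.isOpen_ball.locallyPathConnectedSpace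
  induction n with
  | zero => exact ⟨⟨fun x => ⟨x.1, hsB x.2⟩, by fun_prop⟩, rfl, fun x => rfl⟩
  | succ n ih =>
    obtain ⟨G, h1, h2⟩ := ih
    obtain ⟨F, ⟨h3, h4⟩, _⟩ := hcov.existsUnique_continuousMap_lifts G ⟨a, Metric.mem_ball_self hs⟩ 
      ⟨a, hsB (Metric.mem_ball_self hs)⟩ (Subtype.ext (by rw [h1]; exact ha))
    refine ⟨F, by rw [h3], fun x => ?_⟩
    have h5 : fm p q (F x) = G x := congrArg Subtype.val (congrFun h4 x)
    rw [Function.iterate_succ_apply, h5, h2]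

theorem ff_hasDerivAt (p q : ℂ[X]) (z : ℂ) (h1 : q.eval z ≠ 0) (h2 : q.eval (fm p q z) ≠ 0) :
    HasDerivAt ((fm p q)^[2]) ((starRingEnd ℂ) (rho p q (fm p q z)) * rho p q z) z := by
  have e : (fm p q)^[2] = (fun w => (cj p).eval w / (cj q).eval w) ∘ (fun z => p.eval z / q.eval z) := by
    funext z
    simp only [Function.iterate_succ, Function.iterate_zero, Function.comp, id, cj_eval]
    rw [fm, map_div₀]
    rfl
  rw [e]
  have h3 := rho_hasDerivAt (cj p) (cj q) (p.eval z / q.eval z) (by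
    rw [cj_eval]; exact (_root_.map_ne_zero _).2 h2)
  rw [cj_rho] at h3
  exact h3.comp z (rho_hasDerivAt p q z h1)

theorem B_contra (p q : ℂ[X]) (hcop : IsCoprime p q) (hdeg : q.natDegree < p.natDegree) (B : Set ℂ)
    (hBo : IsOpen B) (hBq : ∀ z ∈ B, q.eval z ≠ 0) (hBW : ∀ z ∈ B, (Wr p q).eval z ≠ 0)
    (hBf : ∀ z ∈ B, fm p q z ∈ B) (hBb : ∀ z, q.eval z ≠ 0 → fm p q z ∈ B → z ∈ B)
    (R : ℝ) (hR : ∀ z ∈ B, ‖z‖ ≤ R) (a : ℂ) (s : ℝ) (hs : 0 < s) (hsB : Metric.ball a s ⊆ B) 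
    (ha : fm p q a = a) (hatt : ‖rho p q a‖ < 1) : False := by
  classical
  set F := (fm p q)^[2] with hF
  set D : ℂ → ℂ := fun z => (starRingEnd ℂ) (rho p q (fm p q z)) * rho p q z with hD
  have haB : a ∈ B := hsB (Metric.mem_ball_self hs)
  have hFd : ∀ z ∈ B, HasDerivAt F (D z) z := fun z hz => 
    ff_hasDerivAt p q z (hBq z hz) (hBq _ (hBf z hz))
  have hr : ∀ z ∈ B, rho p q z ≠ 0 := fun z hz => div_ne_zero (hBW z hz) (pow_ne_zero _ (hBq z hz))
  have hD0 : ∀ z ∈ B, D z ≠ 0 := fun z hz => 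
    mul_ne_zero ((_root_.map_ne_zero _).2 (hr _ (hBf z hz))) (hr z hz)
  have hFB : ∀ z ∈ B, F z ∈ B := fun z hz => hBf _ (hBf z hz)
  have hFn : ∀ n : ℕ, ∀ z ∈ B, ∃ D' : ℂ, D' ≠ 0 ∧ HasDerivAt (F^[n]) D' z := by
    intro n
    induction n with
    | zero => intro z hz; exact ⟨1, one_ne_zero, hasDerivAt_id z⟩
    | succ n ih => 
      intro z hz
      obtain ⟨D', h1, h2⟩ := ih (F z) (hFB z hz)
      exact ⟨D' * D z, mul_ne_zero h1 (hD0 z hz), h2.comp z (hFd z hz)⟩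
  have hFa : F a = a := by simp [hF, ha]
  have hDa : ‖D a‖ < 1 := by
    simp only [hD, ha, norm_mul, RCLike.norm_conj]
    have := norm_nonneg (rho p q a)
    nlinarith
  have hDa0 : 0 < ‖D a‖ := norm_pos_iff.2 (hD0 a haB)
  have hlow : ∀ n : ℕ, 1 ≤ R / (s / 2) * ‖D a‖ ^ n := by
    intro n
    obtain ⟨G, hG1, hG2⟩ := B_lift p q hcop hdeg B hBo hBq hBW hBf hBb R hR a s hs hsB ha (2 * n)
    set g : ℂ → ℂ := fun y => if h : y ∈ Metric.ball a s then (G ⟨y, h⟩ : ℂ) else 0 with hg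
    have hgv : ∀ y (h : y ∈ Metric.ball a s), g y = G ⟨y, h⟩ := fun y h => dif_pos h
    have hgB : ∀ y ∈ Metric.ball a s, g y ∈ B := fun y h => by rw [hgv y h]; exact (G _).2
    have hgF : ∀ y ∈ Metric.ball a s, F^[n] (g y) = y := by
      intro y h
      rw [hgv y h, hF, ← Function.iterate_mul]
      exact hG2 ⟨y, h⟩
    have hgc : ContinuousOn g (Metric.ball a s) := by
      rw [continuousOn_iff_continuous_domRestrict]
      have : Set.domRestrict (Metric.ball a s) g = fun x => (G x : ℂ) := by
        funext x
        exact hgv x.1 x.2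
      rw [this]
      fun_prop
    have hgd : ∀ y ∈ Metric.ball a s, ∀ D', D' ≠ 0 → HasDerivAt (F^[n]) D' (g y) → HasDerivAt g D'⁻¹ y := by
      intro y hy D' h1 h2
      refine HasDerivAt.of_local_left_inverse (hgc.continuousAt (Metric.isOpen_ball.mem_nhds hy)) h2 h1 ?_
      filter_upwards [Metric.isOpen_ball.mem_nhds hy] with x hx using hgF x hx
    have hga : g a = a := by rw [hgv a (Metric.mem_ball_self hs)]; exact hG1
    have hda : HasDerivAt g ((D a) ^ n)⁻¹ a := by
      refine hgd a (Metric.mem_ball_self hs) _ (pow_ne_zero _ (hD0 a haB)) ?_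
      rw [hga]
      exact HasDerivAt.iterate a (hFd a haB) hFa n
    have hdiff : DifferentiableOn ℂ g (Metric.ball a s) := by
      intro y hy
      obtain ⟨D', h1, h2⟩ := hFn n (g y) (hgB y hy)
      exact (hgd y hy D' h1 h2).differentiableAt.differentiableWithinAt
    have hcl : DiffContOnCl ℂ g (Metric.ball a (s / 2)) := by
      apply DifferentiableOn.diffContOnCl
      refine hdiff.mono ?_
      refine Metric.closure_ball_subset_closedBall.trans (Metric.closedBall_subset_ball (by linarith))
    have hC := Complex.norm_deriv_le_of_forall_mem_sphere_norm_le (by linarith : 0 < s / 2) hcl (C := R) (by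
      intro z hz
      apply hR
      apply hgB
      exact (Metric.sphere_subset_closedBall.trans (Metric.closedBall_subset_ball (by linarith))) hz)
    rw [hda.deriv, norm_inv, norm_pow] at hC
    have h5 : 0 < ‖D a‖ ^ n := by positivity
    calc (1 : ℝ) = (‖D a‖ ^ n)⁻¹ * ‖D a‖ ^ n := by field_simp
      _ ≤ _ := by gcongr
  have hlim : Filter.Tendsto (fun n : ℕ => R / (s / 2) * ‖D a‖ ^ n) Filter.atTop (nhds (R / (s / 2) * 0)) :=
    (tendsto_pow_atTop_nhds_zero_of_lt_one hDa0.le hDa).const_mul _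
  have := ge_of_tendsto' hlim hlow
  norm_num at this

def BB (p q : ℂ[X]) (U : Set ℂ) : ℕ → Set ℂ
  | 0 => U
  | n + 1 => {z | q.eval z ≠ 0} ∩ fm p q ⁻¹' (BB p q U n)

theorem att_ball (p q : ℂ[X]) (a : ℂ) (ha : a ∈ fixedPts p q) (hatt : ‖rho p q a‖ < 1) (ε : ℝ) (hε : 0 < ε) :
    ∃ s > 0, s ≤ ε ∧ ∀ t, 0 < t → t ≤ s → 
      ∀ z ∈ Metric.ball a t, q.eval z ≠ 0 ∧ fm p q z ∈ Metric.ball a t := by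
  obtain ⟨h1, h2⟩ := (fixed_iff p q a).1 ha
  have hd := rho_hasDerivAt p q a h1
  rw [hasDerivAt_iff_isLittleO] at hd
  obtain ⟨k, hk1, hk2⟩ := exists_between hatt
  have hev := hd.def (c := k - ‖rho p q a‖) (by linarith)
  have hev2 : ∀ᶠ x in nhds a, q.eval x ≠ 0 := q.continuous.continuousAt.eventually_ne h1
  obtain ⟨s, hs, hsub⟩ := Metric.eventually_nhds_iff_ball.1 (hev.and hev2)
  refine ⟨min s ε, lt_min hs hε, min_le_right _ _, fun t ht hts z hz => ?_⟩
  have hz' : z ∈ Metric.ball a s := Metric.ball_subset_ball (hts.trans (min_le_left _ _)) hz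
  obtain ⟨h3, h4⟩ := hsub z hz'
  refine ⟨h4, ?_⟩
  rw [Metric.mem_ball, dist_eq_norm] at hz ⊢
  have h5 : ‖fm p q z - a‖ = ‖p.eval z / q.eval z - p.eval a / q.eval a‖ := by
    have h7 : ‖fm p q z - fm p q a‖ = ‖p.eval z / q.eval z - p.eval a / q.eval a‖ := by
      simp only [fm]; rw [← map_sub, RCLike.norm_conj]
    rwa [h2] at h7
  rw [h5]
  have h6 : ‖p.eval z / q.eval z - p.eval a / q.eval a‖ ≤ k * ‖z - a‖ := by
    calc _ = ‖(p.eval z / q.eval z - p.eval a / q.eval a - (z - a) • rho p q a) + (z - a) • rho p q a‖ := by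
          rw [sub_add_cancel]
      _ ≤ _ := norm_add_le _ _
      _ ≤ (k - ‖rho p q a‖) * ‖z - a‖ + ‖z - a‖ * ‖rho p q a‖ := by
          rw [norm_smul]
          gcongr
      _ = _ := by ring
  have := norm_nonneg (z - a)
  nlinarith

theorem fatou (p q : ℂ[X]) (hcop : IsCoprime p q) (hdeg : q.natDegree < p.natDegree) 
    (R : ℝ) (hesc : ∀ z, R ≤ ‖z‖ → q.eval z ≠ 0 → R ≤ ‖fm p q z‖) (a : ℂ) (haR : ‖a‖ < R)
    (ha : a ∈ fixedPts p q) (hatt : ‖rho p q a‖ < 1) (ε : ℝ) (hε : 0 < ε) :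
    ∃ u, q.eval u ≠ 0 ∧ (Wr p q).eval u = 0 ∧ ∃ n, u ∈ BB p q (Metric.ball a ε) n := by
  obtain ⟨s, hs, hsε, hsU⟩ := att_ball p q a ha hatt (min ε (R - ‖a‖)) (lt_min hε (by linarith))
  set U := Metric.ball a s with hU
  have hUq := hsU s hs le_rfl
  have hUR : ∀ z ∈ U, ‖z‖ < R := by
    intro z hz
    rw [hU, Metric.mem_ball, dist_eq_norm] at hz
    have h1 : ‖z‖ ≤ ‖z - a‖ + ‖a‖ := by simpa using norm_add_le (z - a) a
    have := hsε.trans (min_le_right _ _)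
    linarith
  have hmono : ∀ n z, z ∈ BB p q U n → z ∈ BB p q (Metric.ball a ε) n := by
    intro n
    induction n with
    | zero => intro z hz; exact Metric.ball_subset_ball (hsε.trans (min_le_left _ _)) hz
    | succ n ih => intro z hz; exact ⟨hz.1, ih _ hz.2⟩
  set B : Set ℂ := ⋃ n, BB p q U n with hB
  by_contra hcon
  push Not at hcon
  have hBq : ∀ z ∈ B, q.eval z ≠ 0 := by
    intro z hz
    obtain ⟨n, hn⟩ := Set.mem_iUnion.1 hz
    cases n with
    | zero => exact (hUq z hn).1
    | succ n => exact hn.1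
  refine B_contra p q hcop hdeg B ?_ hBq ?_ ?_ ?_ R ?_ a s hs ?_ ((fixed_iff p q a).1 ha).2 hatt
  · refine isOpen_iUnion fun n => ?_
    induction n with
    | zero => exact Metric.isOpen_ball
    | succ n ih => 
      refine ContinuousOn.isOpen_inter_preimage ?_ ?_ ih
      · intro z hz
        exact (fm_continuousAt p q z hz).continuousWithinAt
      · exact isOpen_ne_fun q.continuous continuous_const
  · intro z hz h0
    obtain ⟨n, hn⟩ := Set.mem_iUnion.1 hz
    exact hcon z (hBq z hz) h0 n (hmono n z hn)
  · intro z hz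
    obtain ⟨n, hn⟩ := Set.mem_iUnion.1 hz
    cases n with
    | zero => exact Set.mem_iUnion.2 ⟨0, (hUq z hn).2⟩
    | succ n => exact Set.mem_iUnion.2 ⟨n, hn.2⟩
  · intro z hz hz'
    obtain ⟨n, hn⟩ := Set.mem_iUnion.1 hz'
    exact Set.mem_iUnion.2 ⟨n + 1, hz, hn⟩
  · intro z hz
    obtain ⟨n, hn⟩ := Set.mem_iUnion.1 hz
    have : ∀ n z, z ∈ BB p q U n → ‖z‖ < R := by
      intro n
      induction n with
      | zero => exact hUR
      | succ n ih => 
        intro z hz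
        by_contra h
        exact absurd (ih _ hz.2) (not_lt.2 (hesc z (not_lt.1 h) hz.1))
    exact (this n z hn).le
  · exact Set.subset_iUnion (BB p q U) 0

noncomputable def SS (d : ℕ) (m : ℂ) (f : ℂ[X]) : ℂ[X] := reflect d (f.comp (X + C m))

theorem comp_natDegree (f : ℂ[X]) (m : ℂ) : (f.comp (X + C m)).natDegree = f.natDegree := by
  rw [natDegree_comp, natDegree_X_add_C, mul_one]

theorem SS_eval (d : ℕ) (m : ℂ) (f : ℂ[X]) (hf : f.natDegree ≤ d) (u : ℂ) (hu : u ≠ 0) :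
    (SS d m f).eval u = u ^ d * f.eval (m + u⁻¹) := by
  have : Invertible u⁻¹ := invertibleOfNonzero (inv_ne_zero hu)
  have h := eval₂_reflect_mul_pow (RingHom.id ℂ) u⁻¹ d (f.comp (X + C m)) (by rwa [comp_natDegree]) 
  rw [invOf_eq_inv, inv_inv, ← eval, ← eval, eval_comp, eval_add, eval_X, eval_C] at h
  rw [SS, add_comm m, ← h, inv_pow]
  field_simp

theorem SS_coeff (d : ℕ) (m : ℂ) (f : ℂ[X]) : (SS d m f).coeff d = f.eval m := by
  rw [SS, coeff_reflect, revAt_le le_rfl, Nat.sub_self, coeff_zero_eq_eval_zero, eval_comp]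
  simp

theorem SS_eval_zero (d : ℕ) (m : ℂ) (f : ℂ[X]) (hf : f.natDegree ≤ d) : 
    (SS d m f).eval 0 = f.coeff d := by
  rw [← coeff_zero_eq_eval_zero, SS, coeff_reflect, revAt_le (Nat.zero_le _), Nat.sub_zero]
  rcases hf.lt_or_eq with h | h
  · rw [coeff_eq_zero_of_natDegree_lt h, coeff_eq_zero_of_natDegree_lt (by rwa [comp_natDegree])]
  · have h1 := leadingCoeff_comp (p := f) (q := X + C m) (by rw [natDegree_X_add_C]; exact one_ne_zero)
    rw [leadingCoeff, leadingCoeff, comp_natDegree, leadingCoeff_X_add_C, one_pow, mul_one] at h1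
    rw [← h, h1]

theorem SS_natDegree_le (d : ℕ) (m : ℂ) (f : ℂ[X]) (hf : f.natDegree ≤ d) : (SS d m f).natDegree ≤ d := by
  rw [natDegree_le_iff_coeff_eq_zero]
  intro k hk
  rw [SS, coeff_reflect, revAt_eq_self_of_lt hk]
  exact coeff_eq_zero_of_natDegree_lt (by rw [comp_natDegree]; omega)

theorem SS_natDegree (d : ℕ) (m : ℂ) (f : ℂ[X]) (hf : f.natDegree ≤ d) (h : f.eval m ≠ 0) : 
    (SS d m f).natDegree = d := by
  refine le_antisymm (SS_natDegree_le d m f hf) (le_natDegree_of_ne_zero ?_)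
  rwa [SS_coeff]

theorem SS_hasDerivAt (d : ℕ) (m : ℂ) (f : ℂ[X]) (hf : f.natDegree ≤ d) (u : ℂ) (hu : u ≠ 0) :
    (derivative (SS d m f)).eval u = 
      d * u ^ (d - 1) * f.eval (m + u⁻¹) - u ^ d * ((derivative f).eval (m + u⁻¹) * (u ^ 2)⁻¹) := by
  have h1 : HasDerivAt (fun u => u ^ d * f.eval (m + u⁻¹)) 
     (d * u ^ (d - 1) * f.eval (m + u⁻¹) + u ^ d * ((derivative f).eval (m + u⁻¹) * (-(u ^ 2)⁻¹))) u := by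
    have h2 : HasDerivAt (fun u : ℂ => m + u⁻¹) (-(u ^ 2)⁻¹) u := (hasDerivAt_inv hu).const_add m
    exact (hasDerivAt_pow d u).mul ((f.hasDerivAt _).comp u h2)
  have h3 : (fun u => (SS d m f).eval u) =ᶠ[nhds u] (fun u => u ^ d * f.eval (m + u⁻¹)) := by
    filter_upwards [isOpen_ne.mem_nhds hu] with x hx using SS_eval d m f hf x hx
  rw [(((SS d m f).hasDerivAt u).congr_of_eventuallyEq h3.symm).unique h1]
  ring

theorem Wr_sub (p q : ℂ[X]) (b : ℂ) : Wr (p - C b * q) q = Wr p q := by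
  simp [Wr, derivative_mul]; ring

theorem Wr_natDegree_lt (p q : ℂ[X]) (h : Wr p q ≠ 0) : (Wr p q).natDegree < p.natDegree + q.natDegree := by
  have e : Wr p q = - wronskian p q := by simp [Wr, wronskian]
  rw [e] at h ⊢
  rw [natDegree_neg]
  exact natDegree_wronskian_lt_add (neg_ne_zero.1 h)

theorem Wr_natDegree (d : ℕ) (p q : ℂ[X]) (hd : 1 ≤ d) (hp : p.natDegree ≤ d) (hq : q.natDegree ≤ d) :
    (Wr p q).natDegree ≤ 2 * d - 2 := by
  by_cases h0 : Wr p q = 0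
  · simp [h0]
  rcases hq.lt_or_eq with h | h
  · have := Wr_natDegree_lt p q h0
    omega
  · have hq0 : q.coeff d ≠ 0 := by
      rw [← h, coeff_natDegree, leadingCoeff_ne_zero]
      rintro rfl
      simp at h; omega
    set b := p.coeff d / q.coeff d with hb
    have h1 : (p - C b * q).natDegree < d := by
      have h2 : (p - C b * q).natDegree ≤ d := 
        (natDegree_sub_le_of_le hp ((natDegree_C_mul_le _ _).trans hq)).trans (max_self d).le
      refine lt_of_le_of_ne h2 fun h3 => ?_
      have h4 : (p - C b * q).coeff d = 0 := by
        rw [coeff_sub, coeff_C_mul, hb]; field_simp; simp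
      rw [← h3, coeff_natDegree, leadingCoeff_eq_zero] at h4
      rw [h4] at h3; simp at h3; omega
    rw [← Wr_sub p q b] at h0 ⊢
    have := Wr_natDegree_lt _ _ h0
    omega

noncomputable def TQ (d : ℕ) (m : ℂ) (p q : ℂ[X]) : ℂ[X] := SS d m (p - C ((starRingEnd ℂ) m) * q)

theorem sub_deg (d : ℕ) (b : ℂ) (p q : ℂ[X]) (hp : p.natDegree ≤ d) (hq : q.natDegree ≤ d) :
    (p - C b * q).natDegree ≤ d :=
  (natDegree_sub_le_of_le hp ((natDegree_C_mul_le _ _).trans hq)).trans (max_self d).le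

theorem T_coprime (d : ℕ) (m : ℂ) (p q : ℂ[X]) (hp : p.natDegree ≤ d) (hq : q.natDegree ≤ d)
    (hcop : IsCoprime p q) (hd : p.coeff d ≠ 0 ∨ q.coeff d ≠ 0) : IsCoprime (SS d m q) (TQ d m p q) := by
  rw [isCoprime_iff_aeval_ne_zero_of_isAlgClosed ℂ ℂ]
  intro u
  simp only [coe_aeval_eq_eval]
  by_contra! hcon
  obtain ⟨h1, h2⟩ := hcon
  rw [TQ] at h2
  by_cases hu : u = 0
  · subst hu
    rw [SS_eval_zero d m _ hq] at h1
    rw [SS_eval_zero d m _ (sub_deg d _ p q hp hq), coeff_sub, coeff_C_mul, h1, mul_zero, sub_zero] at h2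
    simp [h1, h2] at hd
  · rw [SS_eval d m _ hq u hu] at h1
    rw [SS_eval d m _ (sub_deg d _ p q hp hq) u hu] at h2
    have h3 : q.eval (m + u⁻¹) = 0 := by simpa [hu] using h1
    have h4 : p.eval (m + u⁻¹) = 0 := by simpa [hu, h3] using h2
    exact cop_ne hcop _ h3 h4

theorem T_Wr (d : ℕ) (m : ℂ) (p q : ℂ[X]) (hd : 1 ≤ d) (hp : p.natDegree ≤ d) (hq : q.natDegree ≤ d) :
    Wr (SS d m q) (TQ d m p q) = SS (2 * d - 2) m (Wr p q) := by
  apply eq_of_infinite_eval_eq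
  refine Set.Infinite.mono (s := {u : ℂ | u ≠ 0}) ?_ (Set.finite_singleton (0 : ℂ)).infinite_compl
  intro u hu
  have hu : u ≠ 0 := hu
  rw [Set.mem_ofPred_eq, SS_eval _ _ _ (Wr_natDegree d p q hd hp hq) u hu]
  simp only [Wr, eval_sub, eval_mul]
  rw [TQ, SS_hasDerivAt _ _ _ hq u hu, SS_hasDerivAt _ _ _ (sub_deg d _ p q hp hq) u hu, 
    SS_eval _ _ _ hq u hu, SS_eval _ _ _ (sub_deg d _ p q hp hq) u hu]
  simp only [derivative_sub, derivative_mul, derivative_C, zero_mul, zero_add, eval_sub, eval_mul, eval_C]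
  obtain ⟨e, rfl⟩ : ∃ e, d = e + 1 := ⟨d - 1, by omega⟩
  have : 2 * (e + 1) - 2 = 2 * e := by omega
  rw [this]
  simp only [Nat.add_sub_cancel]
  field_simp
  ring

theorem T_fm (d : ℕ) (m : ℂ) (p q : ℂ[X]) (hp : p.natDegree ≤ d) (hq : q.natDegree ≤ d) (u : ℂ) (hu : u ≠ 0)
    (hz : q.eval (m + u⁻¹) ≠ 0) : 
    fm (SS d m q) (TQ d m p q) u = (fm p q (m + u⁻¹) - m)⁻¹ := by
  rw [fm, fm, TQ, SS_eval _ _ _ hq u hu, SS_eval _ _ _ (sub_deg d _ p q hp hq) u hu]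
  conv_rhs => rw [show m = (starRingEnd ℂ) ((starRingEnd ℂ) m) by simp]
  rw [← map_sub, ← map_inv₀]
  congr 1
  simp only [Complex.conj_conj, eval_sub, eval_mul, eval_C]
  rw [mul_div_mul_left _ _ (pow_ne_zero _ hu), ← inv_div]
  congr 1
  rw [sub_div, mul_div_cancel_right₀ _ hz]

theorem T_q (d : ℕ) (m : ℂ) (p q : ℂ[X]) (hp : p.natDegree ≤ d) (hq : q.natDegree ≤ d) (u : ℂ) (hu : u ≠ 0)
    (hz : q.eval (m + u⁻¹) ≠ 0) : 
    (TQ d m p q).eval u ≠ 0 ↔ fm p q (m + u⁻¹) ≠ m := by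
  rw [TQ, SS_eval _ _ _ (sub_deg d _ p q hp hq) u hu, Ne, Ne, fm_eq_iff p q _ _ hz]
  simp [hu, sub_eq_zero]

theorem T_q' (d : ℕ) (m : ℂ) (p q : ℂ[X]) (hp : p.natDegree ≤ d) (hq : q.natDegree ≤ d) (u : ℂ) (hu : u ≠ 0)
    (hcop : IsCoprime p q) (hz : q.eval (m + u⁻¹) = 0) : 
    (TQ d m p q).eval u ≠ 0 ∧ fm (SS d m q) (TQ d m p q) u = 0 := by
  rw [fm, TQ, SS_eval _ _ _ hq u hu, SS_eval _ _ _ (sub_deg d _ p q hp hq) u hu]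
  have := cop_ne hcop _ hz
  simp [hu, hz, this]

theorem T_rho (d : ℕ) (m : ℂ) (p q : ℂ[X]) (hd : 1 ≤ d) (hp : p.natDegree ≤ d) (hq : q.natDegree ≤ d) 
    (z : ℂ) (hz : z ∈ fixedPts p q) (hzm : z ≠ m) : 
    (z - m)⁻¹ ∈ fixedPts (SS d m q) (TQ d m p q) ∧ 
    ‖rho (SS d m q) (TQ d m p q) (z - m)⁻¹‖ = ‖rho p q z‖ := by
  obtain ⟨h1, h2⟩ := (fixed_iff p q z).1 hz
  have hsub : z - m ≠ 0 := sub_ne_zero.2 hzm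
  have hu : (z - m)⁻¹ ≠ 0 := inv_ne_zero hsub
  have e : m + ((z - m)⁻¹)⁻¹ = z := by rw [inv_inv]; ring
  have h3 : (TQ d m p q).eval (z - m)⁻¹ ≠ 0 := by
    rw [T_q d m p q hp hq _ hu (by rwa [e]), e, h2]; exact hzm
  refine ⟨?_, ?_⟩
  · rw [fixed_iff]
    refine ⟨h3, ?_⟩
    rw [T_fm d m p q hp hq _ hu (by rwa [e]), e, h2]
  · rw [rho, T_Wr d m p q hd hp hq, rho, SS_eval _ _ _ (Wr_natDegree d p q hd hp hq) _ hu, e, TQ, 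
      SS_eval _ _ _ (sub_deg d _ p q hp hq) _ hu, e]
    have h4 : p.eval z = (starRingEnd ℂ) z * q.eval z := hz.2
    have h5 : eval z (p - C ((starRingEnd ℂ) m) * q) = (starRingEnd ℂ) (z - m) * q.eval z := by
      simp [h4]; ring
    rw [h5]
    simp only [norm_div, norm_mul, norm_pow, RCLike.norm_conj, norm_inv]
    have h6 : ‖z - m‖ ≠ 0 := norm_ne_zero_iff.2 hsub
    have h7 : ‖q.eval z‖ ≠ 0 := norm_ne_zero_iff.2 h1
    obtain ⟨e, rfl⟩ : ∃ e, d = e + 1 := ⟨d - 1, by omega⟩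
    have : 2 * (e + 1) - 2 = 2 * e := by omega
    rw [this]
    simp only [inv_pow]
    field_simp
    ring

open Classical in
noncomputable def gs (d : ℕ) (p q : ℂ[X]) : Option ℂ → Option ℂ
  | none => some ((starRingEnd ℂ) (p.coeff d / q.coeff d))
  | some z => if q.eval z = 0 then none else some (fm p q z)

open Classical in
noncomputable def ph (m u : ℂ) : Option ℂ := if u = 0 then none else some (m + u⁻¹)

theorem gs_ph (d : ℕ) (m : ℂ) (p q : ℂ[X]) (hp : p.natDegree ≤ d) (hq : q.natDegree ≤ d) (hcop : IsCoprime p q)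
    (hqd : q.coeff d ≠ 0) (u : ℂ) (hu : (TQ d m p q).eval u ≠ 0) :
    gs d p q (ph m u) = ph m (fm (SS d m q) (TQ d m p q) u) := by
  by_cases h0 : u = 0
  · subst h0
    have h1 : (TQ d m p q).eval 0 = p.coeff d - (starRingEnd ℂ) m * q.coeff d := by
      rw [TQ, SS_eval_zero d m _ (sub_deg d _ p q hp hq), coeff_sub, coeff_C_mul]
    rw [h1] at hu
    rw [fm, h1, SS_eval_zero d m _ hq, ph, if_pos rfl, gs, ph, if_neg]
    · congr 1
      rw [← map_inv₀, inv_div, sub_div, mul_div_cancel_right₀ _ hqd, map_sub, Complex.conj_conj]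
      ring
    · rw [map_eq_zero (starRingEnd ℂ)]
      exact div_ne_zero hqd hu
  · rw [ph, if_neg h0, gs]
    by_cases hz : q.eval (m + u⁻¹) = 0
    · rw [if_pos hz, (T_q' d m p q hp hq u h0 hcop hz).2, ph, if_pos rfl]
    · have h1 := (T_q d m p q hp hq u h0 hz).1 hu
      rw [if_neg hz, T_fm d m p q hp hq u h0 hz, ph, if_neg (inv_ne_zero (sub_ne_zero.2 h1))]
      congr 1
      rw [inv_inv]; ring

theorem BB_gs (d : ℕ) (m : ℂ) (p q : ℂ[X]) (hp : p.natDegree ≤ d) (hq : q.natDegree ≤ d) (hcop : IsCoprime p q)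
    (hqd : q.coeff d ≠ 0) (U : Set ℂ) (n : ℕ) : ∀ u, u ∈ BB (SS d m q) (TQ d m p q) U n → 
    ∃ w ∈ U, (gs d p q)^[n] (ph m u) = ph m w := by
  induction n with
  | zero => intro u hu; exact ⟨u, hu, rfl⟩
  | succ n ih =>
    intro u hu
    obtain ⟨w, h1, h2⟩ := ih _ hu.2
    refine ⟨w, h1, ?_⟩
    rw [Function.iterate_succ_apply, gs_ph d m p q hp hq hcop hqd u hu.1, h2]

theorem crit_exists (d : ℕ) (p q : ℂ[X]) (hd : 2 ≤ d) (hcop : IsCoprime p q) (hqd : q.natDegree = d)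
    (hpd : p.natDegree ≤ d) (hW : (Wr p q).natDegree = 2 * d - 2) (a m : ℂ) (ham : a ≠ m)
    (ha : a ∈ fixedPts p q) (hm : m ∈ fixedPts p q) (hra : ‖rho p q a‖ < 1) (hrm : ‖rho p q m‖ < 1)
    (δ : ℝ) (hδ : 0 < δ) : 
    ∃ c, (Wr p q).eval c = 0 ∧ ∃ n, ∃ w ∈ Metric.ball a δ, (gs d p q)^[n] (some c) = some w := by
  have hq0 : q.coeff d ≠ 0 := by
    rw [← hqd, coeff_natDegree, leadingCoeff_ne_zero]
    rintro rfl
    simp at hqd; omega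
  have hqd' := hqd.le
  have hW0 : (Wr p q).coeff (2 * d - 2) ≠ 0 := by
    rw [← hW, coeff_natDegree, leadingCoeff_ne_zero]
    intro h
    rw [h] at hW
    simp at hW; omega
  obtain ⟨hm1, hm2⟩ := (fixed_iff p q m).1 hm
  obtain ⟨ha1, ha2⟩ := (fixed_iff p q a).1 ha
  set P := SS d m q with hP
  set Q := TQ d m p q with hQ
  have hcop' : IsCoprime P Q := T_coprime d m p q hpd hqd' hcop (Or.inr hq0)
  have hPd : P.natDegree = d := SS_natDegree d m q hqd' hm1
  have hQd : Q.natDegree < d := by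
    have h2 : Q.natDegree ≤ d := SS_natDegree_le d m _ (sub_deg d _ p q hpd hqd')
    refine lt_of_le_of_ne h2 fun h3 => ?_
    have h4 : Q.coeff d = 0 := by
      rw [hQ, TQ, SS_coeff, eval_sub, eval_mul, eval_C, hm.2, sub_self]
    rw [← h3, coeff_natDegree, leadingCoeff_eq_zero] at h4
    rw [h4] at h3; simp at h3; omega
  obtain ⟨s, hs, -, hsU⟩ := att_ball p q m hm hrm 1 one_pos
  have hesc : ∀ R : ℝ, s⁻¹ < R → ∀ z, R ≤ ‖z‖ → Q.eval z ≠ 0 → R ≤ ‖fm P Q z‖ := by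
    intro R hR u hu hQu
    have hR0 : 0 < R := (inv_pos.2 hs).trans hR
    have hu0 : u ≠ 0 := by
      rintro rfl
      simp at hu; linarith
    have hRs : R⁻¹ < s := inv_lt_of_inv_lt₀ hs hR
    have h1 : ‖u⁻¹‖ ≤ R⁻¹ := by
      rw [norm_inv]; exact inv_anti₀ hR0 hu
    have h2 : ∀ t, R⁻¹ < t → t ≤ s → q.eval (m + u⁻¹) ≠ 0 ∧ fm p q (m + u⁻¹) ∈ Metric.ball m t := by
      intro t ht hts
      refine hsU t ((inv_pos.2 hR0).trans ht) hts _ ?_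
      rw [Metric.mem_ball, dist_eq_norm]
      simpa using h1.trans_lt ht
    have hz := (h2 s hRs le_rfl).1
    have h3 := (T_q d m p q hpd hqd' u hu0 hz).1 hQu
    have h4 : ‖fm p q (m + u⁻¹) - m‖ ≤ R⁻¹ := by
      refine le_of_forall_gt_imp_ge_of_dense fun t ht => ?_
      rcases le_total t s with h | h
      · have := (h2 t ht h).2
        rw [Metric.mem_ball, dist_eq_norm] at this
        exact this.le
      · have := (h2 s hRs le_rfl).2
        rw [Metric.mem_ball, dist_eq_norm] at this
        linarith
    rw [T_fm d m p q hpd hqd' u hu0 hz, norm_inv]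
    exact (le_inv_comm₀ hR0 (norm_pos_iff.2 (sub_ne_zero.2 h3))).2 h4
  have hT := T_rho d m p q (by omega) hpd hqd' a ha ham
  have hu0 : (a - m)⁻¹ ≠ 0 := inv_ne_zero (sub_ne_zero.2 ham)
  have hcont : ContinuousAt (fun u : ℂ => m + u⁻¹) (a - m)⁻¹ := 
    continuousAt_const.add (continuousAt_inv₀ hu0)
  have hev : ∀ᶠ u in nhds (a - m)⁻¹, u ≠ 0 ∧ m + u⁻¹ ∈ Metric.ball a δ := by
    have h0 : ∀ᶠ u in nhds (a - m)⁻¹, u ≠ 0 := isOpen_ne.mem_nhds hu0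
    refine h0.and (hcont.eventually_mem ?_)
    rw [inv_inv, add_sub_cancel]
    exact Metric.ball_mem_nhds a hδ
  obtain ⟨ε, hε, hsub⟩ := Metric.eventually_nhds_iff_ball.1 hev
  obtain ⟨u, hu1, hu2, n, hn⟩ := fatou P Q hcop' (by omega) (max (s⁻¹ + 1) (‖(a - m)⁻¹‖ + 1)) 
    (hesc _ (lt_of_lt_of_le (by linarith) (le_max_left _ _)))
    (a - m)⁻¹ (lt_of_lt_of_le (by linarith) (le_max_right _ _)) hT.1 (by rw [hT.2]; exact hra) ε hε
  obtain ⟨w, hw, h5⟩ := BB_gs d m p q hpd hqd' hcop hq0 _ n u hn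
  rw [hP, hQ, T_Wr d m p q (by omega) hpd hqd'] at hu2
  have hune : u ≠ 0 := by
    rintro rfl
    rw [SS_eval_zero _ _ _ hW.le] at hu2
    exact hW0 hu2
  rw [SS_eval _ _ _ hW.le u hune] at hu2
  refine ⟨m + u⁻¹, by simpa [hune] using hu2, n, m + w⁻¹, (hsub w hw).2, ?_⟩
  rw [ph, ph, if_neg hune, if_neg (hsub w hw).1] at h5
  exact h5

theorem rm_le (p q : ℂ[X]) (hW0 : Wr p q ≠ 0) (x : ℂ) : 
    p.rootMultiplicity x ≤ (Wr p q).rootMultiplicity x + 1 := by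
  have h : (X - C x) ^ (p.rootMultiplicity x - 1) ∣ Wr p q := by
    have h1 : (X - C x) ^ (p.rootMultiplicity x) ∣ p := pow_rootMultiplicity_dvd p x
    have h2 := pow_sub_one_dvd_derivative_of_pow_dvd h1
    exact dvd_sub (Dvd.dvd.mul_right h2 _) (Dvd.dvd.mul_right ((pow_dvd_pow _ (Nat.sub_le _ _)).trans h1) _)
  have := (le_rootMultiplicity_iff hW0).2 h
  omega

theorem W_count (P W : ℂ[X]) (hP : P ≠ 0) (hW0 : W ≠ 0) 
    (h : ∀ x, P.rootMultiplicity x ≤ W.rootMultiplicity x + 1) :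
    (W.roots.toFinset \ P.roots.toFinset).card + P.natDegree ≤ W.natDegree + P.roots.toFinset.card := by
  classical
  have h1 : Multiset.card P.roots = P.natDegree := IsAlgClosed.card_roots_eq_natDegree
  have h2 : Multiset.card W.roots ≤ W.natDegree := card_roots' W
  have h3 : ∑ x ∈ P.roots.toFinset, P.roots.count x = P.natDegree := by
    rw [Multiset.toFinset_sum_count_eq, h1]
  have h4 : ∑ x ∈ (W.roots.toFinset \ P.roots.toFinset) ∪ P.roots.toFinset, W.roots.count x = Multiset.card W.roots := by
    rw [Finset.sdiff_union_self_eq_union]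
    apply Multiset.sum_count_eq_card
    intro a ha
    simp at ha ⊢
    exact Or.inl ha
  rw [Finset.sum_union Finset.sdiff_disjoint] at h4
  have h5 : (W.roots.toFinset \ P.roots.toFinset).card ≤ ∑ x ∈ (W.roots.toFinset \ P.roots.toFinset), W.roots.count x := by
    rw [Finset.card_eq_sum_ones]
    apply Finset.sum_le_sum
    intro x hx
    rw [Finset.mem_sdiff, Multiset.mem_toFinset] at hx
    exact Multiset.one_le_count_iff_mem.2 hx.1
  have h6 : ∑ x ∈ P.roots.toFinset, P.roots.count x ≤ ∑ x ∈ P.roots.toFinset, (W.roots.count x + 1) := by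
    apply Finset.sum_le_sum
    intro x _
    rw [count_roots, count_roots]
    exact h x
  rw [Finset.sum_add_distrib, ← Finset.card_eq_sum_ones] at h6
  omega

theorem att_count (d : ℕ) (p q : ℂ[X]) (hd : 2 ≤ d) (hcop : IsCoprime p q) (hqd : q.natDegree = d)
    (hpd : p.natDegree ≤ d) (hW : (Wr p q).natDegree = 2 * d - 2) (b : ℂ) (hb : (p - C b * q).natDegree = d)
    (att : Finset ℂ) (hatt : ∀ z ∈ att, z ∈ fixedPts p q ∧ ‖rho p q z‖ < 1) :
    att.card ≤ 2 * d - 2 ∧ att.card + 1 ≤ d + (p - C b * q).roots.toFinset.card := by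
  classical
  set P := p - C b * q with hP
  have hW0 : Wr p q ≠ 0 := by
    intro h
    rw [h] at hW
    simp at hW; omega
  have hP0 : P ≠ 0 := by
    intro h
    rw [h] at hb
    simp at hb; omega
  have hPr : 1 ≤ P.roots.toFinset.card := by
    rw [Nat.one_le_iff_ne_zero, Ne, Finset.card_eq_zero, Multiset.toFinset_eq_empty, ← Multiset.card_eq_zero,
      IsAlgClosed.card_roots_eq_natDegree]
    omega
  rcases Nat.lt_or_ge 1 att.card with h1 | h1
  swap
  · omega
  have hnt : (att : Set ℂ).Nontrivial := by
    rw [Finset.one_lt_card_iff_nontrivial] at h1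
    exact h1
  have hsep : 0 < (att : Set ℂ).infsep := (att.finite_toSet.infsep_pos_iff_nontrivial).2 hnt
  have hex : ∀ a : att, ∃ s > 0, s ≤ (att : Set ℂ).infsep / 2 ∧ 
      (∀ z ∈ Metric.ball a.1 s, q.eval z ≠ 0 ∧ fm p q z ∈ Metric.ball a.1 s) ∧ 
      ∃ c, (Wr p q).eval c = 0 ∧ ∃ n, ∃ w ∈ Metric.ball a.1 s, (gs d p q)^[n] (some c) = some w := by
    rintro ⟨a, ha⟩
    obtain ⟨s, hs, hs2, hs3⟩ := att_ball p q a (hatt a ha).1 (hatt a ha).2 ((att : Set ℂ).infsep / 2) (by linarith)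
    obtain ⟨m, hm, hma⟩ := hnt.exists_ne a
    exact ⟨s, hs, hs2, hs3 s hs le_rfl, crit_exists d p q hd hcop hqd hpd hW a m hma.symm (hatt a ha).1 
      (hatt m hm).1 (hatt a ha).2 (hatt m hm).2 s hs⟩
  choose s hs hs2 hsU c hc n hn using hex
  have horb : ∀ a k, ∃ w ∈ Metric.ball a.1 (s a), (gs d p q)^[n a + k] (some (c a)) = some w := by
    intro a k
    induction k with
    | zero => exact hn a
    | succ k ih => 
      obtain ⟨w, h2, h3⟩ := ih
      refine ⟨_, (hsU a w h2).2, ?_⟩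
      rw [← add_assoc, Function.iterate_succ_apply', h3, gs, if_neg (hsU a w h2).1]
  have hkey : ∀ a a', gs d p q (some (c a)) = gs d p q (some (c a')) → a = a' := by
    intro a a' h
    by_contra hne
    obtain ⟨w, h2, h3⟩ := horb a (n a' + 1)
    obtain ⟨w', h4, h5⟩ := horb a' (n a + 1)
    rw [← add_assoc, Function.iterate_succ_apply, h] at h3
    rw [← add_assoc, Function.iterate_succ_apply, add_comm (n a'), h3] at h5
    have h6 : w = w' := Option.some.inj h5
    subst h6
    have h7 : (att : Set ℂ).infsep ≤ dist a.1 a'.1 := 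
      Set.infsep_le_dist_of_mem a.2 a'.2 (fun h => hne (Subtype.ext h))
    have h8 := dist_triangle_left a.1 a'.1 w
    rw [Metric.mem_ball] at h2 h4
    have := hs2 a
    have := hs2 a'
    linarith
  have hcinj : Function.Injective c := fun a a' h => hkey a a' (by rw [h])
  have hcW : ∀ a, c a ∈ (Wr p q).roots.toFinset := fun a => by
    rw [Multiset.mem_toFinset, mem_roots hW0]; exact hc a
  constructor
  · have h2 : att.card ≤ (Wr p q).roots.toFinset.card := by
      rw [← Fintype.card_coe att, ← Finset.card_univ, ← Finset.card_image_of_injective _ hcinj]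
      apply Finset.card_le_card
      intro x hx
      obtain ⟨a, -, rfl⟩ := Finset.mem_image.1 hx
      exact hcW a
    have h3 := (Multiset.toFinset_card_le (Wr p q).roots).trans (card_roots' _)
    omega
  · have h2 : (Finset.univ.filter fun a => c a ∈ P.roots.toFinset).card ≤ 1 := by
      rw [Finset.card_le_one]
      have h3 : ∀ a, c a ∈ P.roots.toFinset → gs d p q (some (c a)) = some ((starRingEnd ℂ) b) := by
        intro a ha
        rw [Multiset.mem_toFinset, mem_roots hP0, IsRoot.def, hP, eval_sub, eval_mul, eval_C, sub_eq_zero] at ha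
        have h4 : q.eval (c a) ≠ 0 := by
          intro h
          apply cop_ne hcop _ h
          rw [ha, h, mul_zero]
        rw [gs, if_neg h4, fm, ha, mul_div_cancel_right₀ _ h4]
      intro a ha a' ha'
      simp only [Finset.mem_filter, Finset.mem_univ, true_and] at ha ha'
      exact hkey a a' (by rw [h3 a ha, h3 a' ha'])
    have h4 : (Finset.univ.filter fun a => ¬ c a ∈ P.roots.toFinset).card ≤ 
        ((Wr p q).roots.toFinset \ P.roots.toFinset).card := by
      rw [← Finset.card_image_of_injective _ hcinj]
      apply Finset.card_le_card
      intro x hx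
      obtain ⟨a, ha, rfl⟩ := Finset.mem_image.1 hx
      simp only [Finset.mem_filter, Finset.mem_univ, true_and] at ha
      exact Finset.mem_sdiff.2 ⟨hcW a, ha⟩
    have h5 := Finset.card_filter_add_card_filter_not (s := (Finset.univ : Finset att)) (fun a => c a ∈ P.roots.toFinset)
    rw [Finset.card_univ, Fintype.card_coe] at h5
    have h6 := W_count P (Wr p q) hP0 hW0 (fun x => by
      rw [← Wr_sub p q b] at hW0 ⊢
      exact rm_le _ _ hW0 x)
    omega

theorem generic_bound (d : ℕ) (p q : ℂ[X]) (hd : 2 ≤ d) (hcop : IsCoprime p q) (hqd : q.natDegree = d)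
    (hpd : p.natDegree ≤ d) (hinf : (cj q).eval (p.coeff d / q.coeff d) ≠ 0) 
    (hsep : (GG d p q (cj p) (cj q)).Separable) 
    (hW : (Wr p q).natDegree = 2 * d - 2) (b : ℂ) (hb : (p - C b * q).natDegree = d)
    (F : Finset ℂ) (hF : ∀ z ∈ F, z ∈ fixedPts p q) :
    F.card ≤ 5 * d - 5 ∧ F.card + 3 ≤ 3 * d + 2 * (p - C b * q).roots.toFinset.card := by
  classical
  have hfin : (fixedPts p q).Finite := by
    refine ((GG d p q (cj p) (cj q)).roots.toFinset.finite_toSet).subset ?_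
    intro z hz
    simp only [Finset.mem_coe, Multiset.mem_toFinset, mem_roots hsep.ne_zero, IsRoot.def]
    exact fixed_root d p q hd hcop hqd hpd hinf z hz
  set F' := hfin.toFinset with hF'
  have hFF : F.card ≤ F'.card := Finset.card_le_card (fun z hz => hfin.mem_toFinset.2 (hF z hz))
  set A := F'.filter (fun z => ‖rho p q z‖ < 1) with hA
  set Rp := F'.filter (fun z => 1 < ‖rho p q z‖) with hRp
  have hsum : F'.card ≤ A.card + Rp.card := by
    rw [← Finset.card_filter_add_card_filter_not (s := F') (fun z => ‖rho p q z‖ < 1)]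
    apply Nat.add_le_add_left
    apply Finset.card_le_card
    intro z hz
    rw [Finset.mem_filter] at hz ⊢
    refine ⟨hz.1, lt_of_le_of_ne (not_lt.1 hz.2) ?_⟩
    exact (fixed_norm_ne_one d p q hd hcop hqd hpd hinf hsep z (hfin.mem_toFinset.1 hz.1)).symm
  have hcount := att_count d p q hd hcop hqd hpd hW b hb A (by
    intro z hz
    rw [hA, Finset.mem_filter, hF', hfin.mem_toFinset] at hz
    exact hz)
  have hpart : ∀ a ∈ F', (Rp.erase a).card ≤ (A.erase a).card + d := by
    intro a ha
    refine partA d p q hd hcop hqd hpd hinf hsep a (hfin.mem_toFinset.1 ha) _ _ ?_ ?_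
    · intro z
      rw [Finset.mem_erase, hRp, Finset.mem_filter, hfin.mem_toFinset]; tauto
    · intro z
      rw [Finset.mem_erase, hA, Finset.mem_filter, hfin.mem_toFinset]; tauto
  have hPr : 1 ≤ (p - C b * q).roots.toFinset.card := by
    rw [Nat.one_le_iff_ne_zero, Ne, Finset.card_eq_zero, Multiset.toFinset_eq_empty, ← Multiset.card_eq_zero,
      IsAlgClosed.card_roots_eq_natDegree]
    omega
  rcases A.eq_empty_or_nonempty with h | ⟨a, ha⟩
  · rw [h, Finset.card_empty] at hsum
    rcases Rp.eq_empty_or_nonempty with h' | ⟨a, ha⟩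
    · rw [h', Finset.card_empty] at hsum
      omega
    · have h2 := hpart a (Finset.mem_filter.1 ha).1
      rw [Finset.card_erase_of_mem ha, h, Finset.erase_empty, Finset.card_empty] at h2
      omega
  · have h2 := hpart a (Finset.mem_filter.1 ha).1
    have h3 : a ∉ Rp := by
      intro h3
      have := (Finset.mem_filter.1 ha).2
      have := (Finset.mem_filter.1 h3).2
      linarith
    rw [Finset.card_erase_of_mem ha, Finset.erase_eq_of_notMem h3] at h2
    have : 0 < A.card := Finset.card_pos.2 ⟨a, ha⟩
    omega

noncomputable def bigG (d : ℕ) (p q : ℂ[X]) (ω ω' : ℂ) : ℂ[X][X] := 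
  (∑ k ∈ Finset.range (d + 1), C (C ((cj p).coeff k) + C ω' * X * C ((cj q).coeff k)) * 
    (p.map C + C (C ω * X) * q.map C) ^ k * (q.map C) ^ (d - k))
  - X * (∑ k ∈ Finset.range (d + 1), C (C ((cj q).coeff k)) * 
    (p.map C + C (C ω * X) * q.map C) ^ k * (q.map C) ^ (d - k))

theorem bigG_map (d : ℕ) (p q : ℂ[X]) (ω ω' t : ℂ) : 
    (bigG d p q ω ω').map (evalRingHom t) = 
      GG d (p + C (t * ω) * q) q (cj p + C (t * ω') * cj q) (cj q) := by
  have hid : ∀ f : ℂ[X], (f.map C).map (evalRingHom t) = f := by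
    intro f
    rw [Polynomial.map_map]
    have h1 : (evalRingHom t).comp (C : ℂ →+* ℂ[X]) = RingHom.id ℂ := by
      ext x; simp
    rw [h1, Polynomial.map_id]
  simp only [bigG, GG, hc, Polynomial.map_sub, Polynomial.map_mul, Polynomial.map_sum, Polynomial.map_pow,
    Polynomial.map_add, hid, Polynomial.map_X, Polynomial.map_C]
  simp only [map_add, map_mul, coe_evalRingHom, eval_C, eval_X, mul_comm ω t, mul_comm ω' t, coeff_add, 
    coeff_C_mul]
  simp only [← C_mul, coeff_C_mul]

theorem cop_of_ne {p q : ℂ[X]} (h : ∀ z, q.eval z = 0 → p.eval z ≠ 0) : IsCoprime p q := by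
  rw [isCoprime_iff_aeval_ne_zero_of_isAlgClosed ℂ ℂ]
  intro a
  simp only [coe_aeval_eq_eval]
  by_cases h1 : q.eval a = 0
  · exact Or.inl (h a h1)
  · exact Or.inr h1

theorem hc_add (d : ℕ) (f g p q : ℂ[X]) (c : ℂ) : hc d (f + C c * g) p q = hc d f p q + C c * hc d g p q := by
  simp only [hc, coeff_add, coeff_C_mul, C_add, C_mul, Finset.mul_sum, ← Finset.sum_add_distrib]
  refine Finset.sum_congr rfl fun k _ => ?_
  ring

theorem hc_coprime (d : ℕ) (f g p q : ℂ[X]) (hfd : f.natDegree ≤ d) (hgd : g.natDegree ≤ d) 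
    (hfg : IsCoprime f g) (hcop : IsCoprime p q) (hg : g.coeff d ≠ 0) : IsCoprime (hc d f p q) (hc d g p q) := by
  apply cop_of_ne
  intro z hz
  by_cases hq : q.eval z = 0
  · rw [hc_eval_zero _ _ _ _ _ hq] at hz
    exact absurd hz (mul_ne_zero hg (pow_ne_zero _ (cop_ne hcop z hq)))
  · rw [hc_eval d g p q hgd z hq] at hz
    rw [hc_eval d f p q hfd z hq]
    refine mul_ne_zero (pow_ne_zero _ hq) (cop_ne hfg _ ?_)
    simpa [hq] using hz

theorem bad_finite (A B : ℂ[X]) (h : IsCoprime A B) (hB : 1 ≤ B.natDegree) : 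
    ∃ S : Finset ℂ, ∀ c ∉ S, (A + (C c - X) * B).Separable := by
  classical
  set E := derivative A * B - A * derivative B - B ^ 2 with hE
  have hE0 : E ≠ 0 := by
    intro h0
    have h1 : B ∣ derivative B := by
      have h2 : B ∣ A * derivative B := by
        refine ⟨derivative A - B, ?_⟩
        linear_combination (exp := 1) (-1 : ℂ[X]) * h0
      exact h.symm.dvd_of_dvd_mul_left h2
    have h2 : derivative B ≠ 0 := by
      intro h3
      have := derivative_eq_zero.1 h3
      omega
    have h3 := natDegree_le_of_dvd h1 h2
    have h4 := natDegree_derivative_lt (p := B) (by omega)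
    omega
  refine ⟨E.roots.toFinset.image (fun z => z - A.eval z / B.eval z), fun c hc => ?_⟩
  apply cop_of_ne
  intro z hz1 hz2
  apply hc
  have hBz : B.eval z ≠ 0 := by
    intro hB
    simp [hB] at hz2
    exact cop_ne h z hB hz2
  simp only [derivative_add, derivative_mul, derivative_sub, derivative_C, derivative_X, eval_add, eval_mul, 
    eval_sub, eval_C, eval_X, eval_zero, eval_one] at hz1 hz2
  rw [Finset.mem_image]
  refine ⟨z, ?_, ?_⟩
  · rw [Multiset.mem_toFinset, mem_roots hE0, IsRoot.def, hE]
    simp only [eval_sub, eval_mul, eval_pow]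
    linear_combination (eval z B) * hz1 - (derivative B).eval z * hz2
  · field_simp
    linear_combination (-1 : ℂ) * hz2

theorem pert_sep (d : ℕ) (p q : ℂ[X]) (hd : 2 ≤ d) (hcop : IsCoprime p q) (hqd : q.natDegree = d)
    (hpd : p.natDegree ≤ d) : ∃ S : Finset ℂ, ∀ η ∉ S, ∀ ω ω' : ℂ, ω ≠ 0 → ω' = η * ω → 
      ∃ R : ℂ[X], R ≠ 0 ∧ ∀ t, R.eval t ≠ 0 → (cj q).eval (p.coeff d / q.coeff d + t * ω) ≠ 0 → 
        (GG d (p + C (t * ω) * q) q (cj p + C (t * ω') * cj q) (cj q)).Separable := by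
  classical
  have hq0 : q.coeff d ≠ 0 := by
    rw [← hqd]; exact leadingCoeff_ne_zero.2 (by rintro rfl; simp at hqd; omega)
  have hp2 : (cj p).natDegree ≤ d := by rwa [cj_natDegree]
  have hq2 : (cj q).natDegree ≤ d := by rw [cj_natDegree, hqd]
  have hcq : cj q ≠ 0 := by
    intro h
    have := cj_natDegree q
    rw [h, hqd] at this
    simp at this; omega
  have hdd : 4 ≤ d * d := Nat.mul_le_mul hd hd
  obtain ⟨c0, hc0⟩ := Infinite.exists_notMem_finset 
    (insert 0 ((cj q).roots.toFinset.image (fun z => z - p.coeff d / q.coeff d)))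
  rw [Finset.mem_insert, not_or, Finset.mem_image] at hc0
  obtain ⟨hc1, hc2⟩ := hc0
  have hc3 : (cj q).eval (p.coeff d / q.coeff d + c0) ≠ 0 := by
    intro h
    apply hc2
    refine ⟨_, ?_, add_sub_cancel_left _ _⟩
    rw [Multiset.mem_toFinset, mem_roots hcq]
    exact h
  have hcopc : ∀ c, IsCoprime (p + C c * q) q := fun c => (IsCoprime.add_mul_right_left_iff).2 hcop
  have hpc : ∀ c, (p + C c * q).natDegree ≤ d := fun c => 
    (natDegree_add_le_of_le hpd ((natDegree_C_mul_le _ _).trans hqd.le)).trans (max_self d).le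
  have hcoeff : ∀ c, (p + C c * q).coeff d / q.coeff d = p.coeff d / q.coeff d + c := by
    intro c
    rw [coeff_add, coeff_C_mul]
    field_simp
  have hGe : ∀ c c', GG d (p + C c * q) q (cj p + C c' * cj q) (cj q) = 
      hc d (cj p) (p + C c * q) q + (C c' - X) * hc d (cj q) (p + C c * q) q := by
    intro c c'
    rw [GG, hc_add]; ring
  have hB : 1 ≤ (hc d (cj q) (p + C c0 * q) q).natDegree := by
    have h1 : (hc d (cj q) (p + C c0 * q) q).coeff (d * d) ≠ 0 := by
      rw [hc_coeff d _ _ _ hq2 (hpc _) hqd.le hq0, hcoeff]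
      exact mul_ne_zero (pow_ne_zero _ hq0) hc3
    have := le_natDegree_of_ne_zero h1
    omega
  obtain ⟨S, hS⟩ := bad_finite (hc d (cj p) (p + C c0 * q) q) (hc d (cj q) (p + C c0 * q) q)
    (hc_coprime d _ _ _ _ hp2 hq2 (cj_coprime hcop) (hcopc c0) (by
      rw [cj, coeff_map]; exact (_root_.map_ne_zero _).2 hq0)) hB
  refine ⟨S.image (fun z => z / c0), fun η hη ω ω' hω hω' => ?_⟩
  set R := resultant (bigG d p q ω ω') (derivative (bigG d p q ω ω')) (d * d + 1) (d * d) with hR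
  have hRe : ∀ t, (cj q).eval (p.coeff d / q.coeff d + t * ω) ≠ 0 → (R.eval t ≠ 0 ↔ 
      (GG d (p + C (t * ω) * q) q (cj p + C (t * ω') * cj q) (cj q)).Separable) := by
    intro t ht
    set G := GG d (p + C (t * ω) * q) q (cj p + C (t * ω') * cj q) (cj q) with hG
    have hGd : G.natDegree = d * d + 1 := 
      GG_natDegree d _ _ _ _ hq2 (hpc _) hqd.le hq0 (by rw [hcoeff]; exact ht)
    have hG0 : G ≠ 0 := by
      intro h
      rw [h] at hGd
      simp at hGd
    have hGd' : (derivative G).natDegree = d * d := by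
      rw [natDegree_derivative, hGd]; rfl
    have h1 : R.eval t = resultant G (derivative G) := by
      rw [hGd, hGd', ← coe_evalRingHom, hR, ← resultant_map_map, ← derivative_map, bigG_map]
    rw [h1, Ne, resultant_eq_zero_iff]
    simp [hG0, Separable]
  refine ⟨R, ?_, fun t ht1 ht2 => (hRe t ht2).1 ht1⟩
  intro h0
  have e : c0 / ω * ω = c0 := div_mul_cancel₀ _ hω
  have h1 := (hRe (c0 / ω) (by rw [e]; exact hc3)).2 (by
    rw [e, hGe]
    apply hS
    intro h
    apply hη
    rw [Finset.mem_image]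
    refine ⟨_, h, ?_⟩
    rw [hω']
    field_simp)
  rw [h0] at h1
  simp at h1

theorem one_side (h : ℝ → ℝ) (s : ℝ) (hs : 0 < s) (hc : ContinuousOn h (Set.Icc 0 s)) (h0 : h 0 = 0) (h1 : h s ≠ 0) :
    ∃ σ : ℝ, (σ = 1 ∨ σ = -1) ∧ ∀ t, 0 < t → t < |h s| → ∃ x, 0 < x ∧ x ≤ s ∧ h x = σ * t := by
  rcases lt_or_gt_of_ne h1 with h2 | h2
  · refine ⟨-1, Or.inr rfl, fun t ht ht2 => ?_⟩
    rw [abs_of_neg h2] at ht2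
    obtain ⟨x, hx, hx2⟩ := intermediate_value_Icc' hs.le hc (show -t ∈ Set.Icc (h s) (h 0) by
      rw [h0]; constructor <;> linarith)
    refine ⟨x, lt_of_le_of_ne hx.1 ?_, hx.2, by rw [hx2]; ring⟩
    rintro rfl
    linarith
  · refine ⟨1, Or.inl rfl, fun t ht ht2 => ?_⟩
    rw [abs_of_pos h2] at ht2
    obtain ⟨x, hx, hx2⟩ := intermediate_value_Icc hs.le hc (show t ∈ Set.Icc (h 0) (h s) by
      rw [h0]; constructor <;> linarith)
    refine ⟨x, lt_of_le_of_ne hx.1 ?_, hx.2, by rw [hx2]; ring⟩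
    rintro rfl
    linarith

theorem local_double (p q : ℂ[X]) (z0 : ℂ) (hz0 : z0 ∈ fixedPts p q) (ω : ℂ) (hω : ω ≠ 0)
    (hκ : ((starRingEnd ℂ) ω)⁻¹ + rho p q z0 / ω ≠ 0) (ε : ℝ) (hε : 0 < ε)
    (hiso : ∀ z ∈ Metric.ball z0 ε, z ∈ fixedPts p q → z = z0) :
    ∃ σ : Bool → ℝ, (∀ b, σ b = 1 ∨ σ b = -1) ∧ ∃ t0 > 0, ∀ t : ℝ, 0 < t → t < t0 → 
      ∃ x : Bool → ℂ, Function.Injective x ∧ ∀ b, x b ∈ Metric.ball z0 ε ∧ 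
        x b ∈ fixedPts (p + C ((σ b * t : ℝ) * ω) * q) q := by
  set g : ℂ → ℂ := fun z => ((starRingEnd ℂ) ω)⁻¹ * z + p.eval z / q.eval z / ω with hg
  have hq0 : q.eval z0 ≠ 0 := hz0.1
  have hgd : HasStrictDerivAt g (((starRingEnd ℂ) ω)⁻¹ + rho p q z0 / ω) z0 := by
    have h1 : HasStrictDerivAt (fun x => p.eval x / q.eval x) (rho p q z0) z0 := by
      have := (p.hasStrictDerivAt z0).div (q.hasStrictDerivAt z0) hq0
      exact this.congr_deriv (by rw [rho, Wr, eval_sub, eval_mul, eval_mul])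
    have h2 := ((hasStrictDerivAt_id z0).const_mul ((starRingEnd ℂ) ω)⁻¹).add (h1.div_const ω)
    rw [mul_one] at h2
    exact h2
  set e := (hgd.hasStrictFDerivAt_equiv hκ).toOpenPartialHomeomorph g with he
  have heg : ∀ z, e z = g z := fun z => rfl
  have hsrc : z0 ∈ e.source := (hgd.hasStrictFDerivAt_equiv hκ).mem_toOpenPartialHomeomorph_source
  have htgt : g z0 ∈ e.target := e.map_source hsrc
  have hsymm : e.symm (g z0) = z0 := e.left_inv hsrc
  have hev : ∀ᶠ w in nhds (g z0), w ∈ e.target ∧ e.symm w ∈ Metric.ball z0 ε ∧ q.eval (e.symm w) ≠ 0 := by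
    have hc : ContinuousAt e.symm (g z0) := e.continuousAt_symm htgt
    have h0 : ∀ᶠ w in nhds (g z0), w ∈ e.target := e.open_target.mem_nhds htgt
    refine h0.and ?_
    refine Filter.Eventually.and (hc.eventually_mem ?_) ?_
    · rw [hsymm]; exact Metric.ball_mem_nhds z0 hε
    · have : ContinuousAt (fun w => q.eval (e.symm w)) (g z0) := q.continuous.continuousAt.comp hc
      exact this.eventually_ne (by rwa [hsymm])
  obtain ⟨δ, hδ, hball⟩ := Metric.eventually_nhds_iff_ball.1 hev
  set γ : ℝ → ℂ := fun s => e.symm (g z0 + s) with hγ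
  have hmem : ∀ s : ℝ, |s| < δ → g z0 + s ∈ Metric.ball (g z0) δ := by
    intro s hs
    rw [Metric.mem_ball, dist_eq_norm]
    simpa using hs
  have hγg : ∀ s : ℝ, |s| < δ → g (γ s) = g z0 + s := fun s hs => e.right_inv (hball _ (hmem s hs)).1
  have hγb : ∀ s : ℝ, |s| < δ → γ s ∈ Metric.ball z0 ε := fun s hs => (hball _ (hmem s hs)).2.1
  have hγq : ∀ s : ℝ, |s| < δ → q.eval (γ s) ≠ 0 := fun s hs => (hball _ (hmem s hs)).2.2
  have hγc : ∀ s : ℝ, |s| < δ → ContinuousAt γ s := by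
    intro s hs
    have h1 : ContinuousAt (fun s : ℝ => g z0 + s) s := by fun_prop
    exact (e.continuousAt_symm (hball _ (hmem s hs)).1).comp_of_eq h1 rfl
  have hγ0 : γ 0 = z0 := by simp [hγ, hsymm]
  set φ : ℂ → ℂ := fun z => ((starRingEnd ℂ) z - p.eval z / q.eval z) / ω with hφ
  have him : ∀ z, (φ z).im = - (g z).im := by
    intro z
    have : (starRingEnd ℂ) ((starRingEnd ℂ) z / ω) = ((starRingEnd ℂ) ω)⁻¹ * z := by
      rw [map_div₀, Complex.conj_conj]; ring
    simp only [hφ, hg]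
    rw [← this, sub_div, Complex.sub_im, Complex.add_im, Complex.conj_im]
    ring
  have hφ0 : ∀ z, q.eval z ≠ 0 → ∀ c : ℂ, φ z = c → z ∈ fixedPts (p + C (c * ω) * q) q := by
    intro z hz c hc
    refine ⟨hz, ?_⟩
    have h1 : (starRingEnd ℂ) z - p.eval z / q.eval z = c * ω := by
      rw [← hc, hφ]; field_simp
    rw [eval_add, eval_mul, eval_C, ← h1]
    field_simp
    ring
  have hφz : φ z0 = 0 := by
    simp only [hφ]
    rw [hz0.2]; field_simp; simp
  have hgim : (g z0).im = 0 := by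
    have := him z0
    rw [hφz] at this
    simpa using this.symm
  set h : ℝ → ℝ := fun s => (φ (γ s)).re with hh
  have hre : ∀ s : ℝ, |s| < δ → φ (γ s) = (h s : ℂ) := by
    intro s hs
    apply Complex.ext
    · simp [hh]
    · rw [him, hγg s hs]; simp [hgim]
  have hhc : ∀ s : ℝ, |s| < δ → ContinuousAt h s := by
    intro s hs
    have h1 : ContinuousAt φ (γ s) := by
      have := p.continuous.continuousAt.div q.continuous.continuousAt (hγq s hs)
      exact ((Complex.continuous_conj.continuousAt).sub this).div_const ω
    exact Complex.continuous_re.continuousAt.comp (h1.comp (hγc s hs))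
  have hh0 : h 0 = 0 := by simp [hh, hγ0, hφz]
  have hhne : ∀ s : ℝ, |s| < δ → s ≠ 0 → h s ≠ 0 := by
    intro s hs hs0 h1
    have h2 := hφ0 (γ s) (hγq s hs) 0 (by rw [hre s hs, h1]; simp)
    rw [zero_mul, C_0, zero_mul, add_zero] at h2
    have h3 := hiso _ (hγb s hs) h2
    have h4 := hγg s hs
    rw [h3] at h4
    apply hs0
    simpa using h4
  set s1 := δ / 2 with hs1
  have hs10 : 0 < s1 := by linarith
  have hlt : ∀ s : ℝ, 0 ≤ s → s ≤ s1 → |s| < δ := by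
    intro s h1 h2
    rw [abs_of_nonneg h1]; linarith
  have hlt' : ∀ s : ℝ, 0 ≤ s → s ≤ s1 → |-s| < δ := by
    intro s h1 h2
    rw [abs_neg]; exact hlt s h1 h2
  obtain ⟨σ1, hσ1, H1⟩ := one_side h s1 hs10 
    (fun s hs => (hhc s (hlt s hs.1 hs.2)).continuousWithinAt) hh0 (hhne _ (hlt s1 hs10.le le_rfl) hs10.ne')
  obtain ⟨σ2, hσ2, H2⟩ := one_side (fun s => h (-s)) s1 hs10 
    (fun s hs => by
      have h1 : ContinuousAt (fun s : ℝ => -s) s := by fun_prop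
      exact ((hhc (-s) (hlt' s hs.1 hs.2)).comp_of_eq h1 rfl).continuousWithinAt) 
    (by simp [hh0]) (hhne _ (hlt' s1 hs10.le le_rfl) (by simpa using hs10.ne'))
  have hA1 : 0 < |h s1| := abs_pos.2 (hhne _ (hlt s1 hs10.le le_rfl) hs10.ne')
  have hA2 : 0 < |h (-s1)| := abs_pos.2 (hhne _ (hlt' s1 hs10.le le_rfl) (by simpa using hs10.ne'))
  refine ⟨fun b => if b then σ1 else σ2, ?_, min |h s1| |h (-s1)|, lt_min hA1 hA2, fun t ht1 ht2 => ?_⟩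
  · intro b
    cases b
    · simpa using hσ2
    · simpa using hσ1
  obtain ⟨x, hx0, hxs, hx⟩ := H1 t ht1 (ht2.trans_le (min_le_left _ _))
  obtain ⟨y, hy0, hys, hy⟩ := H2 t ht1 (ht2.trans_le (min_le_right _ _))
  have hxl := hlt x hx0.le hxs
  have hyl := hlt' y hy0.le hys
  have hne : γ x ≠ γ (-y) := by
    intro h1
    have h2 := hγg x hxl
    rw [h1, hγg _ hyl] at h2
    have h3 : ((-y : ℝ) : ℂ) = (x : ℂ) := by simpa using h2
    have h4 : -y = x := by exact_mod_cast h3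
    linarith
  refine ⟨fun b => if b then γ x else γ (-y), ?_, ?_⟩
  · intro b b' hbb
    cases b <;> cases b' <;> simp at hbb ⊢
    · exact hne hbb.symm
    · exact hne hbb
  · intro b
    cases b
    · simp only [Bool.false_eq_true, if_false]
      exact ⟨hγb _ hyl, hφ0 _ (hγq _ hyl) _ (by rw [hre _ hyl, hy])⟩
    · simp only [if_true]
      exact ⟨hγb _ hxl, hφ0 _ (hγq _ hxl) _ (by rw [hre _ hxl, hx])⟩

theorem sep_exists (S : Set ℂ) (hS : S.Finite) : ∃ ε > 0, ∀ x ∈ S, ∀ y ∈ S, x ≠ y → 2 * ε ≤ dist x y := by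
  by_cases h : S.Nontrivial
  · refine ⟨S.infsep / 2, half_pos ((hS.infsep_pos_iff_nontrivial).2 h), fun x hx y hy hxy => ?_⟩
    have := Set.infsep_le_dist_of_mem hx hy hxy
    linarith
  · rw [Set.not_nontrivial_iff] at h
    exact ⟨1, one_pos, fun x hx y hy hxy => absurd (h hx hy) hxy⟩

theorem eta_exists (S : Finset ℂ) : ∃ ω : ℂ, ω ≠ 0 ∧ ∃ η ∉ S, η ≠ 0 ∧ (starRingEnd ℂ) ω = η * ω := by
  have h0 : ∀ s : ℝ, (1 + Complex.I * s : ℂ) ≠ 0 := by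
    intro s h
    have := congrArg Complex.re h
    simp at this
  have h1 : ∀ s : ℝ, (1 - Complex.I * s : ℂ) ≠ 0 := by
    intro s h
    have := congrArg Complex.re h
    simp at this
  set f : ℝ → ℂ := fun s => (1 - Complex.I * s) / (1 + Complex.I * s) with hf
  have hinj : Function.Injective f := by
    intro s s' h
    simp only [hf] at h
    rw [div_eq_div_iff (h0 s) (h0 s')] at h
    have h2 : Complex.I * 2 * ((s : ℂ) - s') = 0 := by linear_combination -h
    have h3 : (s : ℂ) - s' = 0 := by simpa using h2
    have h4 : (s : ℂ) = s' := sub_eq_zero.1 h3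
    exact_mod_cast h4
  obtain ⟨s, hs⟩ := Infinite.exists_notMem_finset (S.preimage f hinj.injOn)
  rw [Finset.mem_preimage] at hs
  refine ⟨1 + Complex.I * s, h0 s, f s, hs, div_ne_zero (h1 s) (h0 s), ?_⟩
  simp only [hf]
  rw [div_mul_cancel₀ _ (h0 s)]
  simp
  ring

theorem cj_add (p q : ℂ[X]) (c : ℂ) : cj (p + C c * q) = cj p + C ((starRingEnd ℂ) c) * cj q := by
  simp [cj]

theorem bound_I (d : ℕ) (p q : ℂ[X]) (hd : 2 ≤ d) (hcop : IsCoprime p q) (hqd : q.natDegree = d)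
    (hpd : p.natDegree = d) (hinf : (cj q).eval (p.coeff d / q.coeff d) ≠ 0) 
    (hW : (Wr p q).natDegree = 2 * d - 2) : ∃ hfin : (fixedPts p q).Finite, 
    hfin.toFinset.card ≤ 5 * d - 5 ∧ hfin.toFinset.card + 3 ≤ 3 * d + 2 * p.roots.toFinset.card := by
  classical
  have hq0 : q.coeff d ≠ 0 := by
    rw [← hqd]; exact leadingCoeff_ne_zero.2 (by rintro rfl; simp at hqd; omega)
  have hp2 : (cj p).natDegree ≤ d := by rw [cj_natDegree, hpd]
  have hq2 : (cj q).natDegree ≤ d := by rw [cj_natDegree, hqd]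
  have hfin : (fixedPts p q).Finite := by
    have hG0 : GG d p q (cj p) (cj q) ≠ 0 := by
      intro h
      have := GG_natDegree d p q (cj p) (cj q) hq2 hpd.le hqd.le hq0 hinf
      rw [h] at this
      simp at this
    refine ((GG d p q (cj p) (cj q)).roots.toFinset.finite_toSet).subset ?_
    intro z hz
    simp only [Finset.mem_coe, Multiset.mem_toFinset, mem_roots hG0, IsRoot.def]
    exact fixed_root d p q hd hcop hqd hpd.le hinf z hz
  refine ⟨hfin, ?_⟩
  set F := hfin.toFinset with hF
  have hFm : ∀ z, z ∈ F ↔ z ∈ fixedPts p q := fun z => hfin.mem_toFinset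
  obtain ⟨ε, hε, hεs⟩ := sep_exists _ hfin
  obtain ⟨S, hS⟩ := pert_sep d p q hd hcop hqd hpd.le
  obtain ⟨ω, hω, η, hη, hη0, hωη⟩ := eta_exists (S ∪ F.image (fun z => (- rho p q z)⁻¹))
  rw [Finset.notMem_union] at hη
  obtain ⟨R, hR0, hR⟩ := hS η hη.1 ω ((starRingEnd ℂ) ω) hω hωη
  have hloc : ∀ z : F, ∃ σ : Bool → ℝ, (∀ b, σ b = 1 ∨ σ b = -1) ∧ ∃ t0 > 0, ∀ t : ℝ, 0 < t → t < t0 → 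
      ∃ x : Bool → ℂ, Function.Injective x ∧ ∀ b, x b ∈ Metric.ball z.1 ε ∧ 
        x b ∈ fixedPts (p + C ((σ b * t : ℝ) * ω) * q) q := by
    rintro ⟨z, hz⟩
    have hz' := (hFm z).1 hz
    refine local_double p q z hz' ω hω ?_ ε hε ?_
    · intro h
      apply hη.2
      rw [Finset.mem_image]
      refine ⟨z, hz, ?_⟩
      rw [hωη] at h
      field_simp at h
      apply inv_eq_of_mul_eq_one_right
      linear_combination (-1 : ℂ) * h
    · intro w hw hwF
      by_contra hne
      have := hεs w hwF z hz' hne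
      rw [Metric.mem_ball] at hw
      linarith
  choose σ hσ t0 ht0 H using hloc
  set R2 : ℂ[X] := (cj q).comp (C (p.coeff d / q.coeff d) + X * C ω) with hR2
  have hR2e : ∀ t, R2.eval t = (cj q).eval (p.coeff d / q.coeff d + t * ω) := by
    intro t; rw [hR2, eval_comp]; simp only [eval_add, eval_C, eval_mul, eval_X]
  have hR20 : R2 ≠ 0 := by
    intro h
    have := hR2e 0
    rw [h] at this
    simp at this
    exact hinf this.symm
  have hRR : R * R2 ≠ 0 := mul_ne_zero hR0 hR20
  set K : Finset ℂ := (R * R2).roots.toFinset with hK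
  have hevK : ∀ s : ℝ, (s = 1 ∨ s = -1) → ∀ᶠ t : ℝ in nhdsWithin 0 (Set.Ioi 0), (R * R2).eval ((s * t : ℝ) : ℂ) ≠ 0 := by
    intro s hs
    have hs0 : s ≠ 0 := by rcases hs with rfl | rfl <;> norm_num
    have h1 : IsClosed ((K.erase 0 : Finset ℂ) : Set ℂ) := (K.erase 0).finite_toSet.isClosed
    have h2 : Continuous (fun t : ℝ => ((s * t : ℝ) : ℂ)) := by fun_prop
    have h3 : ∀ᶠ t : ℝ in nhds 0, ((s * t : ℝ) : ℂ) ∉ ((K.erase 0 : Finset ℂ) : Set ℂ) := by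
      refine h2.continuousAt.eventually_mem (h1.isOpen_compl.mem_nhds ?_)
      simp
    filter_upwards [nhdsWithin_le_nhds h3, self_mem_nhdsWithin] with t ht1 ht2 h4
    apply ht1
    have ht3 : (0 : ℝ) < t := ht2
    rw [Finset.mem_coe, Finset.mem_erase, hK, Multiset.mem_toFinset, mem_roots hRR]
    refine ⟨?_, h4⟩
    exact_mod_cast mul_ne_zero hs0 ht3.ne'
  have hevt : ∀ᶠ t : ℝ in nhdsWithin 0 (Set.Ioi 0), ∀ z : F, t < t0 z := by
    rw [Filter.eventually_all]
    intro z
    exact nhdsWithin_le_nhds (Iio_mem_nhds (ht0 z))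
  obtain ⟨t, htt, htp, htm, ht⟩ := (hevt.and ((hevK 1 (Or.inl rfl)).and ((hevK (-1) (Or.inr rfl)).and 
    self_mem_nhdsWithin))).exists
  have ht : 0 < t := ht
  choose x hxi hx using fun z : F => H z t ht (htt z)
  have hxinj : Function.Injective (fun i : F × Bool => x i.1 i.2) := by
    rintro ⟨z, b⟩ ⟨z', b'⟩ h
    simp only at h
    have hzz : z = z' := by
      by_contra hne
      have h1 := (hx z b).1
      have h2 := (hx z' b').1
      rw [← h] at h2
      rw [Metric.mem_ball] at h1 h2
      have h3 := hεs z ((hFm _).1 z.2) z' ((hFm _).1 z'.2) (fun h => hne (Subtype.ext h))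
      have h8 := dist_triangle_left z.1 z'.1 (x z b)
      linarith
    subst hzz
    rw [hxi z h]
  have hbd : ∀ s : ℝ, (s = 1 ∨ s = -1) → ∀ F' : Finset ℂ, (∀ z ∈ F', z ∈ fixedPts (p + C ((s * t : ℝ) * ω) * q) q) → 
      F'.card ≤ 5 * d - 5 ∧ F'.card + 3 ≤ 3 * d + 2 * p.roots.toFinset.card := by
    intro s hs F' hF'
    have h1 : (R * R2).eval ((s * t : ℝ) : ℂ) ≠ 0 := by
      rcases hs with rfl | rfl
      · exact htp
      · exact htm
    rw [eval_mul, hR2e] at h1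
    have h2 := left_ne_zero_of_mul h1
    have h3 := right_ne_zero_of_mul h1
    set c : ℂ := ((s * t : ℝ) : ℂ) * ω with hc
    have hcoeff : (p + C c * q).coeff d / q.coeff d = p.coeff d / q.coeff d + c := by
      rw [coeff_add, coeff_C_mul]
      field_simp
    have e1 : p + C c * q - C c * q = p := by ring
    have e2 : Wr (p + C c * q) q = Wr p q := by
      rw [← Wr_sub _ q c, e1]
    have h4 := generic_bound d (p + C c * q) q hd ((IsCoprime.add_mul_right_left_iff).2 hcop) hqd
      ((natDegree_add_le_of_le hpd.le ((natDegree_C_mul_le _ _).trans hqd.le)).trans (max_self d).le)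
      (by rw [hcoeff]; exact h3) (by
        rw [cj_add]
        have h5 : (starRingEnd ℂ) c = ((s * t : ℝ) : ℂ) * (starRingEnd ℂ) ω := by
          rw [hc, map_mul, Complex.conj_ofReal]
        rw [h5]
        exact hR _ h2 h3) (by rw [e2]; exact hW) c (by rw [e1]; exact hpd) F' hF'
    rwa [e1] at h4
  have hcard : ∀ s : ℝ, (s = 1 ∨ s = -1) → F.card ≤ (Finset.univ.filter fun i : F × Bool => σ i.1 i.2 = s).card → 
      F.card ≤ 5 * d - 5 ∧ F.card + 3 ≤ 3 * d + 2 * p.roots.toFinset.card := by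
    intro s hs h1
    have h2 := hbd s hs ((Finset.univ.filter fun i : F × Bool => σ i.1 i.2 = s).image (fun i => x i.1 i.2)) (by
      intro z hz
      obtain ⟨i, hi, rfl⟩ := Finset.mem_image.1 hz
      rw [Finset.mem_filter] at hi
      have := (hx i.1 i.2).2
      rwa [hi.2] at this)
    rw [Finset.card_image_of_injective _ hxinj] at h2
    omega
  have htot := Finset.card_filter_add_card_filter_not (s := (Finset.univ : Finset (F × Bool))) (fun i => σ i.1 i.2 = 1)
  have hneg : (Finset.univ.filter fun i : F × Bool => ¬ σ i.1 i.2 = 1).card ≤ 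
      (Finset.univ.filter fun i : F × Bool => σ i.1 i.2 = -1).card := by
    apply Finset.card_le_card
    intro i hi
    rw [Finset.mem_filter] at hi ⊢
    exact ⟨hi.1, (hσ i.1 i.2).resolve_left hi.2⟩
  rw [Finset.card_univ, Fintype.card_prod, Fintype.card_coe, Fintype.card_bool] at htot
  rcases le_total F.card (Finset.univ.filter fun i : F × Bool => σ i.1 i.2 = 1).card with h | h
  · exact hcard 1 (Or.inl rfl) h
  · exact hcard (-1) (Or.inr rfl) (by omega)

theorem Wr_ne_zero (p q : ℂ[X]) (hcop : IsCoprime p q) (hd : 2 ≤ max p.natDegree q.natDegree) :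
    Wr p q ≠ 0 := by
  intro h
  have e : Wr p q = - wronskian p q := by simp [Wr, wronskian]
  rw [e, neg_eq_zero, hcop.wronskian_eq_zero_iff] at h
  have h1 := derivative_eq_zero.1 h.1
  have h2 := derivative_eq_zero.1 h.2
  rw [h1, h2] at hd
  simp at hd

theorem coeff_max_ne (p q : ℂ[X]) (hd : 2 ≤ max p.natDegree q.natDegree) :
    p.coeff (max p.natDegree q.natDegree) ≠ 0 ∨ q.coeff (max p.natDegree q.natDegree) ≠ 0 := by
  rcases le_total p.natDegree q.natDegree with h | h
  · right
    rw [max_eq_right h] at hd ⊢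
    rw [coeff_natDegree, leadingCoeff_ne_zero]
    rintro rfl; simp at hd
  · left
    rw [max_eq_left h] at hd ⊢
    rw [coeff_natDegree, leadingCoeff_ne_zero]
    rintro rfl; simp at hd

theorem LL_ne_zero (d : ℕ) (p q : ℂ[X]) (hW : Wr p q ≠ 0) (hc : p.coeff d ≠ 0 ∨ q.coeff d ≠ 0) :
    C (p.coeff d) * q - C (q.coeff d) * p ≠ 0 := by
  intro h
  have h1 : C (q.coeff d) * Wr p q = 0 := by
    have hh := congrArg derivative h
    simp only [derivative_sub, derivative_mul, derivative_C, zero_mul, zero_add, derivative_zero] at hh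
    rw [Wr]
    linear_combination derivative q * h - q * hh
  have h2 : C (p.coeff d) * Wr p q = 0 := by
    have hh := congrArg derivative h
    simp only [derivative_sub, derivative_mul, derivative_C, zero_mul, zero_add, derivative_zero] at hh
    rw [Wr]
    linear_combination derivative p * h - p * hh
  have h3 := (mul_eq_zero.1 h1).resolve_right hW
  have h4 := (mul_eq_zero.1 h2).resolve_right hW
  rw [C_eq_zero] at h3 h4
  rcases hc with hc | hc <;> contradiction

theorem exists_nonroot (f : ℂ[X]) (hf : f ≠ 0) : ∃ z, f.eval z ≠ 0 := by
  by_contra! h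
  exact hf (Polynomial.funext (by simpa using h))

theorem GG_ne_zero (d : ℕ) (p q : ℂ[X]) (hd : 2 ≤ d) (hq0 : q ≠ 0) (hcop : IsCoprime p q) 
    (hp : p.natDegree ≤ d) (hq : q.natDegree ≤ d)
    (hW : Wr p q ≠ 0) (hc : p.coeff d ≠ 0 ∨ q.coeff d ≠ 0) : GG d p q (cj p) (cj q) ≠ 0 := by
  intro h
  obtain ⟨z0, hz0⟩ := exists_nonroot _ (mul_ne_zero (mul_ne_zero hq0 hW) (LL_ne_zero d p q hW hc))
  rw [eval_mul, eval_mul] at hz0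
  have h1 := left_ne_zero_of_mul (left_ne_zero_of_mul hz0)
  have h2 := right_ne_zero_of_mul (left_ne_zero_of_mul hz0)
  have h3 := right_ne_zero_of_mul hz0
  set c := p.eval z0 / q.eval z0 with hcdef
  set f := p - C c * q with hf
  have hinj : ∀ z, f.eval z = 0 → z = z0 := by
    intro z hz
    have hz' : p.eval z = c * q.eval z := by
      rw [hf, eval_sub, eval_mul, eval_C, sub_eq_zero] at hz; exact hz
    have hqz : q.eval z ≠ 0 := by
      intro hqz
      exact cop_ne hcop z hqz (by rw [hz', hqz, mul_zero])
    have hr : p.eval z / q.eval z = c := by rw [hz']; field_simp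
    have k1 := GG_root d p q (cj p) (cj q) (by rwa [cj_natDegree]) (by rwa [cj_natDegree]) 
      (cj_coprime hcop) z hqz (by rw [h, eval_zero])
    have k2 := GG_root d p q (cj p) (cj q) (by rwa [cj_natDegree]) (by rwa [cj_natDegree]) 
      (cj_coprime hcop) z0 h1 (by rw [h, eval_zero])
    rw [hr] at k1
    rw [← hcdef] at k2
    exact mul_right_cancel₀ k1.1 (k1.2.symm.trans k2.2)
  have hfd : f.coeff d ≠ 0 := by
    intro hh
    apply h3
    rw [hf, coeff_sub, coeff_C_mul, hcdef] at hh
    rw [eval_sub, eval_mul, eval_mul, eval_C, eval_C]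
    field_simp at hh
    linear_combination hh
  have hf0 : f ≠ 0 := by rintro h; rw [h] at hfd; simp at hfd
  have hdeg : f.natDegree = d := 
    le_antisymm (sub_deg d c p q hp hq) (le_natDegree_of_ne_zero hfd)
  have hcard : f.roots.card = d := by
    rw [← hdeg]; exact (IsAlgClosed.splits f).natDegree_eq_card_roots.symm
  have hrep : f.roots = Multiset.replicate d z0 := by
    rw [Multiset.eq_replicate]
    refine ⟨hcard, fun b hb => hinj b ?_⟩
    exact (mem_roots hf0).1 hb
  have hm : 1 < f.rootMultiplicity z0 := by
    rw [← count_roots, hrep, Multiset.count_replicate_self]; omega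
  rw [one_lt_rootMultiplicity_iff_isRoot hf0] at hm
  apply h2
  rw [← Wr_sub p q c, ← hf, Wr, eval_sub, eval_mul, eval_mul, hm.1.eq_zero, hm.2.eq_zero]
  ring

theorem root_count (d : ℕ) (m : ℂ) (q : ℂ[X]) (hq0 : q ≠ 0) (hq : q.natDegree ≤ d) (hm : q.eval m ≠ 0) : 
    (SS d m q).roots.toFinset.card = q.roots.toFinset.card + if q.coeff d = 0 then 1 else 0 := by
  classical
  have hS : SS d m q ≠ 0 := by
    intro h
    have := SS_coeff d m q
    rw [h, coeff_zero] at this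
    exact hm this.symm
  have e : (SS d m q).roots.toFinset = 
      q.roots.toFinset.image (fun z => (z - m)⁻¹) ∪ (if q.coeff d = 0 then {0} else ∅) := by
    ext u
    rw [Finset.mem_union, Multiset.mem_toFinset, mem_roots hS, Finset.mem_image, IsRoot.def]
    by_cases hu : u = 0
    · subst hu
      rw [SS_eval_zero _ _ _ hq]
      constructor
      · intro h; right; simp [h]
      · rintro (⟨z, hz, hz2⟩ | h)
        · rw [inv_eq_zero, sub_eq_zero] at hz2
          rw [Multiset.mem_toFinset, mem_roots hq0, hz2] at hz
          exact absurd hz hm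
        · by_contra hne
          simp [hne] at h
    · rw [SS_eval _ _ _ hq u hu]
      constructor
      · intro h; left
        refine ⟨m + u⁻¹, ?_, by simp⟩
        rw [Multiset.mem_toFinset, mem_roots hq0]
        exact (mul_eq_zero.1 h).resolve_left (pow_ne_zero _ hu)
      · rintro (⟨z, hz, hz2⟩ | h)
        · rw [Multiset.mem_toFinset, mem_roots hq0] at hz
          rw [← hz2, inv_inv, add_sub_cancel, hz.eq_zero, mul_zero]
        · split_ifs at h
          · simp at h; exact absurd h hu
          · simp at h
  rw [e, Finset.card_union_of_disjoint, Finset.card_image_of_injective]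
  · split_ifs <;> simp
  · intro a b hab
    simpa using hab
  · rw [Finset.disjoint_left]
    intro u hu1 hu2
    rw [Finset.mem_image] at hu1
    obtain ⟨z, hz, rfl⟩ := hu1
    rw [Multiset.mem_toFinset, mem_roots hq0] at hz
    split_ifs at hu2
    · rw [Finset.mem_singleton, inv_eq_zero, sub_eq_zero] at hu2
      rw [hu2] at hz
      exact hm hz
    · simp at hu2

/-- For a rational function `r = p/q` of degree `d ≥ 2` with `n` distinct
poles on the Riemann sphere (`n = #{roots of q} + 1` if `deg p > deg q`, else
`#{roots of q}`), the set of finite fixed points of `z ↦ conj(r(z))` is finite and the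
total number of fixed points (counting `∞` when `deg p > deg q`) is at most
`min(3d + 2n − 3, 5d − 5)`. -/
theorem stmt_13 (p q : Polynomial ℂ) (hq : q ≠ 0) (hcop : IsCoprime p q)
    (hd : 2 ≤ max p.natDegree q.natDegree) :
    (fixedPts p q).Finite ∧
    (fixedPts p q).ncard + (if q.natDegree < p.natDegree then 1 else 0) ≤
      min (3 * max p.natDegree q.natDegree +
            2 * (q.roots.toFinset.card + if q.natDegree < p.natDegree then 1 else 0) - 3)
          (5 * max p.natDegree q.natDegree - 5) := by
  classical
  have hW := Wr_ne_zero p q hcop hd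
  have hc := coeff_max_ne p q hd
  have hpd : p.natDegree ≤ max p.natDegree q.natDegree := le_max_left _ _
  have hqd : q.natDegree ≤ max p.natDegree q.natDegree := le_max_right _ _
  have hif : q.coeff (max p.natDegree q.natDegree) = 0 ↔ q.natDegree < p.natDegree := by
    constructor
    · intro h
      by_contra hn
      push Not at hn
      rw [max_eq_right hn, coeff_natDegree, leadingCoeff_eq_zero] at h
      exact hq h
    · intro h
      apply coeff_eq_zero_of_natDegree_lt
      exact h.trans_le hpd
  generalize max p.natDegree q.natDegree = d at *
  obtain ⟨m, hm⟩ := exists_nonroot _ (mul_ne_zero (mul_ne_zero hq hW) 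
    (GG_ne_zero d p q hd hq hcop hpd hqd hW hc))
  rw [eval_mul, eval_mul] at hm
  have h1 := left_ne_zero_of_mul (left_ne_zero_of_mul hm)
  have h2 := right_ne_zero_of_mul (left_ne_zero_of_mul hm)
  have h3 := right_ne_zero_of_mul hm
  rw [GG_eval d p q _ _ (by rwa [cj_natDegree]) (by rwa [cj_natDegree]) m h1] at h3
  have h4 := right_ne_zero_of_mul h3
  have h5 : (cj p).eval (p.eval m / q.eval m) - m * (cj q).eval (p.eval m / q.eval m) =
      (starRingEnd ℂ) (p.eval (fm p q m) - (starRingEnd ℂ) m * q.eval (fm p q m)) := by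
    rw [cj_eval, cj_eval, fm, map_sub, map_mul, Complex.conj_conj]
  rw [h5, _root_.map_ne_zero, sub_ne_zero] at h4
  have hfx : fm p q m ≠ m := by
    intro h
    rw [h] at h4
    exact h4 ((fm_eq_iff p q m m h1).1 h)
  have hfx' : p.eval m - (starRingEnd ℂ) m * q.eval m ≠ 0 := by
    rw [sub_ne_zero]
    exact fun h => hfx ((fm_eq_iff p q m m h1).2 h)
  have hPd : (SS d m q).natDegree = d := SS_natDegree d m q hqd h1
  have hQc : (TQ d m p q).coeff d = p.eval m - (starRingEnd ℂ) m * q.eval m := by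
    rw [TQ, SS_coeff]; simp
  have hQd : (TQ d m p q).natDegree = d := by
    apply SS_natDegree d m _ (sub_deg d _ p q hpd hqd)
    simpa using hfx'
  have hWd : (Wr (SS d m q) (TQ d m p q)).natDegree = 2 * d - 2 := by
    rw [T_Wr d m p q (by omega) hpd hqd]
    exact SS_natDegree _ _ _ (Wr_natDegree d p q (by omega) hpd hqd) h2
  have hinf : (cj (TQ d m p q)).eval ((SS d m q).coeff d / (TQ d m p q).coeff d) ≠ 0 := by
    rw [hQc, SS_coeff, cj_eval, _root_.map_ne_zero]
    have hu : (starRingEnd ℂ) (q.eval m / (p.eval m - (starRingEnd ℂ) m * q.eval m)) = 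
        (fm p q m - m)⁻¹ := by
      have e2 : fm p q m - m = (starRingEnd ℂ) (p.eval m / q.eval m - (starRingEnd ℂ) m) := by
        rw [map_sub, Complex.conj_conj, fm]
      rw [e2, ← map_inv₀]
      congr 1
      rw [div_sub' h1, inv_div, mul_comm (q.eval m)]
    rw [hu]
    have hne : (fm p q m - m)⁻¹ ≠ 0 := inv_ne_zero (sub_ne_zero.2 hfx)
    have e : m + ((fm p q m - m)⁻¹)⁻¹ = fm p q m := by rw [inv_inv]; ring
    by_cases hz : q.eval (fm p q m) = 0
    · exact (T_q' d m p q hpd hqd _ hne hcop (by rw [e]; exact hz)).1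
    · rw [T_q d m p q hpd hqd _ hne (by rw [e]; exact hz), e]
      exact fun h => h4 ((fm_eq_iff p q _ _ hz).1 h)
  obtain ⟨hfin, hb1, hb2⟩ := bound_I d (SS d m q) (TQ d m p q) hd 
    (T_coprime d m p q hpd hqd hcop hc) hQd hPd hinf hWd
  rw [root_count d m q hq hqd h1] at hb2
  simp only [hif] at hb2
  have hnm : ∀ z ∈ fixedPts p q, z ≠ m := by
    rintro z hz rfl
    exact hfx ((fixed_iff p q z).1 hz).2
  have hinj : Function.Injective (fun z : ℂ => (z - m)⁻¹) := by
    intro a b hab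
    simpa using hab
  have hmaps : ∀ z ∈ fixedPts p q, (z - m)⁻¹ ∈ fixedPts (SS d m q) (TQ d m p q) := fun z hz =>
    (T_rho d m p q (by omega) hpd hqd z hz (hnm z hz)).1
  have hF : (fixedPts p q).Finite := by
    apply Set.Finite.of_finite_image _ hinj.injOn
    apply hfin.subset
    rintro _ ⟨z, hz, rfl⟩
    exact hmaps z hz
  refine ⟨hF, ?_⟩
  have hcount : (fixedPts p q).ncard + (if q.natDegree < p.natDegree then 1 else 0) ≤ hfin.toFinset.card := by
    rw [Set.ncard_eq_toFinset_card _ hF, ← Finset.card_image_of_injective _ hinj]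
    split_ifs with hlt
    · rw [← Finset.card_insert_of_notMem (a := (0 : ℂ))]
      · apply Finset.card_le_card
        intro u hu
        rw [hfin.mem_toFinset]
        rw [Finset.mem_insert, Finset.mem_image] at hu
        rcases hu with rfl | ⟨z, hz, rfl⟩
        · have hq0 := hif.2 hlt
          have hp0 : p.coeff d ≠ 0 := hc.resolve_right (by simpa using hq0)
          refine ⟨?_, ?_⟩
          · rw [TQ, SS_eval_zero _ _ _ (sub_deg d _ p q hpd hqd)]
            simpa [hq0] using hp0
          · rw [SS_eval_zero _ _ _ hqd, hq0]; simp
        · exact hmaps z (hF.mem_toFinset.1 hz)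
      · intro h
        rw [Finset.mem_image] at h
        obtain ⟨z, hz, hz2⟩ := h
        rw [inv_eq_zero, sub_eq_zero] at hz2
        exact hnm z (hF.mem_toFinset.1 hz) hz2
    · rw [add_zero]
      apply Finset.card_le_card
      intro u hu
      rw [Finset.mem_image] at hu
      obtain ⟨z, hz, rfl⟩ := hu
      rw [hfin.mem_toFinset]
      exact hmaps z (hF.mem_toFinset.1 hz)
  rw [le_min_iff]
  split_ifs at hb2 hcount ⊢ <;> constructor <;> omega
end
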